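/- (Convection–diffusion regime.) There exist constants κ, σ, C > 0, independent of ε₁ and of p, such that for all 0 < ε₁ ≤ 1 with ε₂ = 1, the solution u of the problem and the weak Galerkin solution u_p of degree p on the Spectral Boundary Layer mesh ω_BL(κ,p) satisfy |||u − u_p|||_p ≤ C e^{−σ p}. -/

import Mathlib

noncomputable section

open MeasureTheory Set

/-- A mesh `0 = x₀ < x₁ < ⋯ < x_N = 1` on the interval `I = (0,1)`. -/
structure Mesh (N : ℕ) where
  pt : Fin (N + 1) → ℝ
  mono : StrictMono pt
  left : pt 0 = 0
  right : pt (Fin.last N) = 1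

namespace Mesh

variable {N : ℕ}

/-- The left endpoint `x_{j-1}` of the `j`-th cell `I_j`. -/
def xl (m : Mesh N) (j : Fin N) : ℝ := m.pt j.castSucc

/-- The right endpoint `x_j` of the `j`-th cell `I_j`. -/
def xr (m : Mesh N) (j : Fin N) : ℝ := m.pt j.succ

/-- The width `h_j` of the `j`-th cell. -/
def width (m : Mesh N) (j : Fin N) : ℝ := m.xr j - m.xl j

end Mesh

/-- `f` coincides (everywhere) with a polynomial of degree at most `p`. -/
def IsPolyDeg (f : ℝ → ℝ) (p : ℕ) : Prop :=
  ∃ q : Polynomial ℝ, q.natDegree ≤ p ∧ ∀ t, f t = q.eval t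

/-- `D` is the weak derivative of degree `p` of the weak function with interior part `v0`
and boundary values `vl`, `vr` on the cell `(a,b)`. -/
def IsWeakDerivOn (a b : ℝ) (p : ℕ) (v0 : ℝ → ℝ) (vl vr : ℝ) (D : ℝ → ℝ) : Prop :=
  IsPolyDeg D p ∧ ∀ q : Polynomial ℝ, q.natDegree ≤ p →
    (∫ t in a..b, D t * q.eval t) =
      -(∫ t in a..b, v0 t * q.derivative.eval t) + vr * q.eval b - vl * q.eval a

/-- `D` is the (cellwise) weak derivative `D_p v` of the weak function `v = (v0, vb)`. -/
def IsWeakDeriv {N : ℕ} (m : Mesh N) (p : ℕ) (v0 : Fin N → ℝ → ℝ)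
    (vb : Fin (N + 1) → ℝ) (D : Fin N → ℝ → ℝ) : Prop :=
  ∀ j, IsWeakDerivOn (m.xl j) (m.xr j) p (v0 j) (vb j.castSucc) (vb j.succ) (D j)

/-- `D` is the weak convection derivative of degree `p` on the cell `(a,b)`,
with convection coefficient `bb`. -/
def IsWeakConvDerivOn (bb : ℝ → ℝ) (a b : ℝ) (p : ℕ) (v0 : ℝ → ℝ) (vl vr : ℝ)
    (D : ℝ → ℝ) : Prop :=
  IsPolyDeg D p ∧ ∀ q : Polynomial ℝ, q.natDegree ≤ p →
    (∫ t in a..b, D t * q.eval t) =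
      -(∫ t in a..b, v0 t * deriv (fun s => bb s * q.eval s) t)
      + vr * (bb b * q.eval b) - vl * (bb a * q.eval a)

/-- `D` is the (cellwise) weak convection derivative `D_p^c v` of `v = (v0, vb)`. -/
def IsWeakConvDeriv {N : ℕ} (m : Mesh N) (bb : ℝ → ℝ) (p : ℕ) (v0 : Fin N → ℝ → ℝ)
    (vb : Fin (N + 1) → ℝ) (D : Fin N → ℝ → ℝ) : Prop :=
  ∀ j, IsWeakConvDerivOn bb (m.xl j) (m.xr j) p (v0 j) (vb j.castSucc) (vb j.succ) (D j)

/-- The stabilisation bilinear form `S(u,v)`. -/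
def Sform {N : ℕ} (m : Mesh N) (σ : Fin N → ℝ)
    (u0 : Fin N → ℝ → ℝ) (ub : Fin (N + 1) → ℝ)
    (v0 : Fin N → ℝ → ℝ) (vb : Fin (N + 1) → ℝ) : ℝ :=
  ∑ j : Fin N, σ j * ((u0 j (m.xr j) - ub j.succ) * (v0 j (m.xr j) - vb j.succ)
    + (u0 j (m.xl j) - ub j.castSucc) * (v0 j (m.xl j) - vb j.castSucc))

/-- The convection stabilisation bilinear form `S_c(u,v)`. -/
def Scform {N : ℕ} (m : Mesh N) (ε₂ : ℝ) (bb : ℝ → ℝ)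
    (u0 : Fin N → ℝ → ℝ) (ub : Fin (N + 1) → ℝ)
    (v0 : Fin N → ℝ → ℝ) (vb : Fin (N + 1) → ℝ) : ℝ :=
  ∑ j : Fin N, ε₂ * bb (m.xr j) * (u0 j (m.xr j) - ub j.succ) * (v0 j (m.xr j) - vb j.succ)

/-- The squared jump seminorm `|v|_J²`. -/
def Jsemi2 {N : ℕ} (m : Mesh N) (ε₂ : ℝ) (bb : ℝ → ℝ)
    (v0 : Fin N → ℝ → ℝ) (vb : Fin (N + 1) → ℝ) : ℝ :=
  ∑ j : Fin N, (if j.succ = Fin.last N then (1 : ℝ) / 2 else 1) * ε₂ * bb (m.xr j) *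
    (v0 j (m.xr j) - vb j.succ) ^ 2

/-- The squared WG energy norm `|||v|||_p²`, where `Dv` is the weak derivative `D_{p-1} v`. -/
def normP2 {N : ℕ} (m : Mesh N) (ε₁ ε₂ : ℝ) (bb : ℝ → ℝ) (σ : Fin N → ℝ)
    (v0 : Fin N → ℝ → ℝ) (vb : Fin (N + 1) → ℝ) (Dv : Fin N → ℝ → ℝ) : ℝ :=
  ε₁ * (∑ j : Fin N, ∫ t in (m.xl j)..(m.xr j), (Dv j t) ^ 2)
    + (∑ j : Fin N, ∫ t in (m.xl j)..(m.xr j), (v0 j t) ^ 2)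
    + Sform m σ v0 vb v0 vb + Scform m ε₂ bb v0 vb v0 vb + Jsemi2 m ε₂ bb v0 vb

/-- The squared WG norm `|||v|||²` (with the broken classical derivative). -/
def normT2 {N : ℕ} (m : Mesh N) (ε₁ ε₂ : ℝ) (bb : ℝ → ℝ) (σ : Fin N → ℝ)
    (v0 : Fin N → ℝ → ℝ) (vb : Fin (N + 1) → ℝ) : ℝ :=
  ε₁ * (∑ j : Fin N, ∫ t in (m.xl j)..(m.xr j), (deriv (v0 j) t) ^ 2)
    + (∑ j : Fin N, ∫ t in (m.xl j)..(m.xr j), (v0 j t) ^ 2)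
    + Sform m σ v0 vb v0 vb + Scform m ε₂ bb v0 vb v0 vb + Jsemi2 m ε₂ bb v0 vb

/-- The WG bilinear form `A_p(u,v)`; `Du = D_{p-1}u`, `Dcu = D_p^c u`, `Dv = D_{p-1}v`. -/
def Aform {N : ℕ} (m : Mesh N) (ε₁ ε₂ : ℝ) (bb rr : ℝ → ℝ) (σ : Fin N → ℝ)
    (u0 : Fin N → ℝ → ℝ) (ub : Fin (N + 1) → ℝ) (Du Dcu : Fin N → ℝ → ℝ)
    (v0 : Fin N → ℝ → ℝ) (vb : Fin (N + 1) → ℝ) (Dv : Fin N → ℝ → ℝ) : ℝ :=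
  ε₁ * (∑ j : Fin N, ∫ t in (m.xl j)..(m.xr j), Du j t * Dv j t)
    + ε₂ * (∑ j : Fin N, ∫ t in (m.xl j)..(m.xr j), Dcu j t * v0 j t)
    + (∑ j : Fin N, ∫ t in (m.xl j)..(m.xr j), rr t * u0 j t * v0 j t)
    + Sform m σ u0 ub v0 vb + Scform m ε₂ bb u0 ub v0 vb

/-- `u` solves the two-parameter singularly perturbed boundary-value problem
`-ε₁ u'' + ε₂ b u' + r u = f` on `(0,1)`, `u(0) = u(1) = 0`. -/
def SolvesBVP (ε₁ ε₂ : ℝ) (bb rr ff u : ℝ → ℝ) : Prop :=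
  u 0 = 0 ∧ u 1 = 0 ∧
    ∀ x ∈ Set.Icc (0 : ℝ) 1,
      -ε₁ * deriv (deriv u) x + ε₂ * bb x * deriv u x + rr x * u x = ff x

/-- `P` is the interpolant `I y` of `y` on the cell `(a,b)`. -/
def IsInterpOn (a b : ℝ) (p : ℕ) (y P : ℝ → ℝ) : Prop :=
  IsPolyDeg P p ∧ P a = y a ∧ P b = y b ∧
    ∀ q : Polynomial ℝ, q.natDegree ≤ p →
      (∫ t in a..b, (deriv P t - deriv y t) * q.derivative.eval t) = 0

/-- `P` is the (cellwise) interpolant `I y` of `y` on the mesh `m`. -/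
def IsInterp {N : ℕ} (m : Mesh N) (p : ℕ) (y : ℝ → ℝ) (P : Fin N → ℝ → ℝ) : Prop :=
  ∀ j, IsInterpOn (m.xl j) (m.xr j) p y (P j)

/-- Glue cellwise functions into a single function on `I` (cells taken left-closed). -/
def glue {N : ℕ} (m : Mesh N) (v0 : Fin N → ℝ → ℝ) : ℝ → ℝ :=
  fun t => ∑ j : Fin N, Set.indicator (Set.Ico (m.xl j) (m.xr j)) (v0 j) t

/-- The standard penalty parameters `σ_j = ε₁ p² / h_j`. -/
def stdPen {N : ℕ} (m : Mesh N) (ε₁ : ℝ) (p : ℕ) : Fin N → ℝ :=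
  fun j => ε₁ * (p : ℝ) ^ 2 / m.width j

/-- Membership of the interior part in the broken Sobolev space `H¹(ω)`. -/
def MemM {N : ℕ} (m : Mesh N) (v0 : Fin N → ℝ → ℝ) : Prop :=
  ∀ j, DifferentiableOn ℝ (v0 j) (Set.Icc (m.xl j) (m.xr j))

/-- `(up0, upb)`, with weak derivatives `Du = D_{p-1} u_p` and `Dcu = D_p^c u_p`, is a
weak Galerkin solution of degree `p` on the mesh `m`. -/
def IsWGsol {N : ℕ} (m : Mesh N) (ε₁ ε₂ : ℝ) (bb rr ff : ℝ → ℝ) (p : ℕ)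
    (up0 : Fin N → ℝ → ℝ) (upb : Fin (N + 1) → ℝ) (Du Dcu : Fin N → ℝ → ℝ) : Prop :=
  (∀ j, IsPolyDeg (up0 j) p) ∧ upb 0 = 0 ∧ upb (Fin.last N) = 0 ∧
    IsWeakDeriv m (p - 1) up0 upb Du ∧ IsWeakConvDeriv m bb p up0 upb Dcu ∧
    ∀ (w0 : Fin N → ℝ → ℝ) (wb : Fin (N + 1) → ℝ),
      (∀ j, IsPolyDeg (w0 j) p) → wb 0 = 0 → wb (Fin.last N) = 0 →
      ∀ Dw : Fin N → ℝ → ℝ, IsWeakDeriv m (p - 1) w0 wb Dw →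
        Aform m ε₁ ε₂ bb rr (stdPen m ε₁ p) up0 upb Du Dcu w0 wb Dw
          = ∑ j : Fin N, ∫ t in (m.xl j)..(m.xr j), ff t * w0 j t

/-- Broken `L²` norm over the mesh of a cellwise-given function. -/
def brokenL2 {N : ℕ} (m : Mesh N) (f : Fin N → ℝ → ℝ) : ℝ :=
  Real.sqrt (∑ j : Fin N, ∫ t in (m.xl j)..(m.xr j), (f j t) ^ 2)

/-- `L²(a,b)` norm. -/
def intL2 (a b : ℝ) (f : ℝ → ℝ) : ℝ := Real.sqrt (∫ t in a..b, (f t) ^ 2)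

/-- Analyticity of the data: `‖g⁽ⁿ⁾‖_{∞,[0,1]} ≲ n! γ_g^n`. -/
def AnalyticData (g : ℝ → ℝ) : Prop :=
  ContDiff ℝ (⊤ : ℕ∞) g ∧ ∃ C γg : ℝ, 0 < C ∧ 0 < γg ∧
    ∀ n : ℕ, ∀ x ∈ Set.Icc (0 : ℝ) 1, |iteratedDeriv n g x| ≤ C * n.factorial * γg ^ n

/-- The characteristic values `μ₀` (`sgn = -1`) and `μ₁` (`sgn = 1`). -/
def muVal (sgn ε₁ ε₂ : ℝ) (bb rr : ℝ → ℝ) : ℝ :=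
  sInf ((fun x => (sgn * ε₂ * bb x + Real.sqrt (ε₂ ^ 2 * (bb x) ^ 2 + 4 * ε₁ * rr x))
      / (2 * ε₁)) '' Set.Icc 0 1)

def mu0 (ε₁ ε₂ : ℝ) (bb rr : ℝ → ℝ) : ℝ := muVal (-1) ε₁ ε₂ bb rr

def mu1 (ε₁ ε₂ : ℝ) (bb rr : ℝ → ℝ) : ℝ := muVal 1 ε₁ ε₂ bb rr

/-- The Spectral Boundary Layer mesh in the reaction-convection-diffusion regime. -/
def IsSBLmeshRCD {N : ℕ} (κ : ℝ) (p : ℕ) (ε₁ ε₂ : ℝ) (bb rr : ℝ → ℝ) (m : Mesh N) : Prop :=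
  ((1 : ℝ) / 2 ≤ κ * p * ε₁ ∧ N = 1) ∨
    (κ * p * ε₂ < 1 / 2 ∧ N = 3 ∧
      m.pt 1 = κ * p / mu0 ε₁ ε₂ bb rr ∧ m.pt 2 = 1 - κ * p / mu1 ε₁ ε₂ bb rr)

/-- The Spectral Boundary Layer mesh in the reaction-diffusion regime. -/
def IsSBLmeshRD {N : ℕ} (κ : ℝ) (p : ℕ) (ε₁ : ℝ) (m : Mesh N) : Prop :=
  ((1 : ℝ) / 2 ≤ κ * p * ε₁ ∧ N = 1) ∨
    (κ * p * ε₁ < 1 / 2 ∧ N = 3 ∧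
      m.pt 1 = κ * p * Real.sqrt ε₁ ∧ m.pt 2 = 1 - κ * p * Real.sqrt ε₁)

/-- The Spectral Boundary Layer mesh in the convection-diffusion regime. -/
def IsSBLmeshCD {N : ℕ} (κ : ℝ) (p : ℕ) (ε₁ : ℝ) (m : Mesh N) : Prop :=
  ((1 : ℝ) / 2 ≤ κ * p * ε₁ ∧ N = 1) ∨
    (κ * p * ε₁ ≤ 1 / 2 ∧ N = 2 ∧ m.pt 1 = 1 - κ * p * ε₁)

/-!
Regularity. By the maximum principle `|u| ≤ C`, and differentiating the equation gives
`|u⁽ⁿ⁾| ≤ C (K max(n, 1/ε))ⁿ`. The formal outer expansion `∑ εʲ w_j`, in which every `w_j` solves a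
first-order transport equation, diverges, but cut off after about `1/ε` terms it is analytic
uniformly in `ε` and leaves an exponentially small residual. By the maximum principle again, `u`
differs from it by an exponentially small quantity plus a boundary layer `exp(-β(1-x)/ε)`.

Approximation. On the layer cell, of width `κ p ε`, the solution is analytic on the scale of the
cell. On the outer cell the layer has already decayed to `exp(-κ β p)`, so that the outer expansion
may be approximated in its place. Both cells thus carry polynomials of degree `p` with exponentially
small error that interpolate `u` at the nodes.

Stability. The weak Galerkin form is coercive in the energy norm. The polynomials above form a
conforming discrete function, on which the penalties vanish, and testing its equation with the
discrete error leaves only approximation errors, the residual of the outer expansion, and the kink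
at the mesh point between the two cells. Each is bounded by `p` times the approximation error and
the energy norm; half of the exponential rate absorbs the powers of `p`.
-/

/-! ### Cauchy–Schwarz on an interval -/

theorem sq_integral_mul_le {f g : ℝ → ℝ} {a b : ℝ} (hab : a ≤ b)
    (hf : ContinuousOn f (Icc a b)) (hg : ContinuousOn g (Icc a b)) :
    (∫ t in a..b, f t * g t) ^ 2 ≤ (∫ t in a..b, f t ^ 2) * ∫ t in a..b, g t ^ 2 := by
  rw [← uIcc_of_le hab] at hf hg
  have hquad (x : ℝ) : 0 ≤ (∫ t in a..b, g t ^ 2) * (x * x)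
      + (-2 * ∫ t in a..b, f t * g t) * x + ∫ t in a..b, f t ^ 2 := by
    have hexpand : (∫ t in a..b, (f t - x * g t) ^ 2) = (∫ t in a..b, g t ^ 2) * (x * x)
        + (-2 * ∫ t in a..b, f t * g t) * x + ∫ t in a..b, f t ^ 2 := by
      have hsq (t : ℝ) : (f t - x * g t) ^ 2
          = g t ^ 2 * (x * x) + f t * g t * (-2 * x) + f t ^ 2 := by ring
      simp only [hsq]
      rw [intervalIntegral.integral_add, intervalIntegral.integral_add,
        intervalIntegral.integral_mul_const, intervalIntegral.integral_mul_const]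
      · ring
      all_goals exact ContinuousOn.intervalIntegrable (by fun_prop)
    exact hexpand ▸ intervalIntegral.integral_nonneg hab fun t _ => sq_nonneg _
  have hdiscrim := discrim_le_zero hquad
  rw [discrim] at hdiscrim
  linarith

theorem abs_integral_mul_le_intL2_mul_intL2 {f g : ℝ → ℝ} {a b : ℝ} (hab : a ≤ b)
    (hf : ContinuousOn f (Icc a b)) (hg : ContinuousOn g (Icc a b)) :
    |∫ t in a..b, f t * g t| ≤ intL2 a b f * intL2 a b g := by
  rw [intL2, intL2,
    ← Real.sqrt_mul (intervalIntegral.integral_nonneg hab fun t _ => sq_nonneg _)]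
  exact Real.abs_le_sqrt (sq_integral_mul_le hab hf hg)

theorem integral_sq_le_of_abs_le {f : ℝ → ℝ} {a b M : ℝ} (hab : a ≤ b)
    (hf : ContinuousOn f (Icc a b)) (h : ∀ t ∈ Icc a b, |f t| ≤ M) :
    (∫ t in a..b, f t ^ 2) ≤ (b - a) * M ^ 2 := by
  rw [← smul_eq_mul, ← intervalIntegral.integral_const]
  rw [← uIcc_of_le hab] at hf
  refine intervalIntegral.integral_mono_on hab (ContinuousOn.intervalIntegrable (by fun_prop))
    (by simp) fun t ht => ?_
  exact sq_le_sq.2 ((h t ht).trans (le_abs_self M))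

theorem abs_integral_mul_le_of_abs_le {f g : ℝ → ℝ} {a b M : ℝ} (hab : a ≤ b)
    (hf : ContinuousOn f (Icc a b)) (hg : ContinuousOn g (Icc a b))
    (h : ∀ t ∈ Icc a b, |f t| ≤ M) :
    |∫ t in a..b, f t * g t| ≤ M * √(b - a) * intL2 a b g := by
  have hM : 0 ≤ M := (abs_nonneg _).trans (h a (left_mem_Icc.2 hab))
  have hfM : intL2 a b f ≤ M * √(b - a) := by
    refine le_of_le_of_eq ?_ (b := √((b - a) * M ^ 2))
      (by rw [Real.sqrt_mul (sub_nonneg.2 hab), Real.sqrt_sq hM, mul_comm])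
    exact Real.sqrt_le_sqrt (integral_sq_le_of_abs_le hab hf h)
  exact (abs_integral_mul_le_intL2_mul_intL2 hab hf hg).trans
    (mul_le_mul_of_nonneg_right hfM (Real.sqrt_nonneg _))

section Polynomial

open Polynomial

/-! ### The trace inequality for polynomials -/

theorem integral_eval_derivative_mul (P Q : ℝ[X]) (a b : ℝ) :
    (∫ t in a..b, P.derivative.eval t * Q.eval t) =
      P.eval b * Q.eval b - P.eval a * Q.eval a - ∫ t in a..b, P.eval t * Q.derivative.eval t := by
  rw [intervalIntegral.integral_mul_deriv_eq_deriv_mul (fun x _ => P.hasDerivAt x)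
    (fun x _ => Q.hasDerivAt x) (P.derivative.continuous.intervalIntegrable _ _)
    (Q.derivative.continuous.intervalIntegrable _ _)]
  ring

theorem integral_eval_iterate_derivative_mul {P : ℝ[X]} {a b : ℝ} (n : ℕ)
    (ha : ∀ k < n, (derivative^[k] P).eval a = 0) (hb : ∀ k < n, (derivative^[k] P).eval b = 0)
    (Q : ℝ[X]) :
    (∫ t in a..b, (derivative^[n] P).eval t * Q.eval t) =
      (-1) ^ n * ∫ t in a..b, P.eval t * (derivative^[n] Q).eval t := by
  induction n generalizing Q with
  | zero => simp
  | succ n ih =>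
    rw [Function.iterate_succ_apply', integral_eval_derivative_mul, ha n n.lt_succ_self,
      hb n n.lt_succ_self, ih (fun k hk => ha k (hk.trans n.lt_succ_self))
        (fun k hk => hb k (hk.trans n.lt_succ_self)), Function.iterate_succ_apply]
    ring

theorem eval_iterate_derivative_eq_factorial_mul_coeff_taylor (P : ℝ[X]) (k : ℕ) (x : ℝ) :
    (derivative^[k] P).eval x = k.factorial * (taylor x P).coeff k := by
  rw [taylor_coeff, ← factorial_smul_hasseDeriv]
  simp [nsmul_eq_mul]

/-- The polynomial `X ^ (n + 1) * (X - 1) ^ n`, whose `(n + 1)`-st derivative is a reproducing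
kernel for evaluation at `1` on polynomials of degree at most `n`, in the style of Rodrigues'
formula. -/
def endpointPotential (n : ℕ) : ℝ[X] := X ^ (n + 1) * (X - 1) ^ n

theorem eval_zero_iterate_derivative_endpointPotential {n k : ℕ} (hk : k ≤ n) :
    (derivative^[k] (endpointPotential n)).eval 0 = 0 := by
  rw [eval_iterate_derivative_eq_factorial_mul_coeff_taylor, taylor_zero, endpointPotential,
    coeff_X_pow_mul', if_neg (by omega), mul_zero]

theorem eval_one_iterate_derivative_endpointPotential (n k : ℕ) :
    (derivative^[k] (endpointPotential n)).eval 1 =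
      if n ≤ k then k.factorial * ((n + 1).choose (k - n) : ℝ) else 0 := by
  have htaylor : taylor 1 (endpointPotential n) = (X + 1) ^ (n + 1) * X ^ n := by
    simp [endpointPotential]
  rw [eval_iterate_derivative_eq_factorial_mul_coeff_taylor, htaylor, coeff_mul_X_pow',
    coeff_X_add_one_pow, mul_ite, mul_zero]

theorem natDegree_iterate_derivative_endpointPotential_le (n : ℕ) :
    (derivative^[n + 1] (endpointPotential n)).natDegree ≤ n := by
  have hdeg : (endpointPotential n).natDegree ≤ n + 1 + n := by
    refine natDegree_mul_le_of_le (natDegree_X_pow_le _) ?_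
    simpa using natDegree_pow_le_of_le n (natDegree_X_sub_C_le (1 : ℝ))
  exact (natDegree_iterate_derivative _ _).trans (by omega)

theorem integral_iterate_derivative_endpointPotential_mul {n : ℕ} {Q : ℝ[X]}
    (hQ : Q.natDegree ≤ n) :
    (∫ t in (0 : ℝ)..1, (derivative^[n + 1] (endpointPotential n)).eval t * Q.eval t)
      = n.factorial * Q.eval 1 := by
  have horth : (∫ t in (0 : ℝ)..1,
      (derivative^[n] (endpointPotential n)).eval t * Q.derivative.eval t) = 0 := by
    rw [integral_eval_iterate_derivative_mul n
      (fun k hk => eval_zero_iterate_derivative_endpointPotential hk.le)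
      (fun k hk => by rw [eval_one_iterate_derivative_endpointPotential, if_neg hk.not_ge]),
      ← Function.iterate_succ_apply, iterate_derivative_eq_zero (by omega)]
    simp
  rw [Function.iterate_succ_apply', integral_eval_derivative_mul, horth,
    eval_zero_iterate_derivative_endpointPotential le_rfl,
    eval_one_iterate_derivative_endpointPotential]
  simp

theorem sq_eval_one_le_integral_sq {n : ℕ} {q : ℝ[X]} (hq : q.natDegree ≤ n) :
    q.eval 1 ^ 2 ≤ ((n : ℝ) + 1) ^ 2 * ∫ t in (0 : ℝ)..1, q.eval t ^ 2 := by
  set R := derivative^[n + 1] (endpointPotential n)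
  have hnorm : (∫ t in (0 : ℝ)..1, R.eval t ^ 2) = (n.factorial : ℝ) ^ 2 * (n + 1) ^ 2 := by
    simp only [sq (R.eval _)]
    rw [integral_iterate_derivative_endpointPotential_mul
        (natDegree_iterate_derivative_endpointPotential_le n),
      eval_one_iterate_derivative_endpointPotential, if_pos n.le_succ, Nat.add_sub_cancel_left,
      Nat.choose_one_right, Nat.factorial_succ]
    push_cast
    ring
  have hcauchy := sq_integral_mul_le zero_le_one R.continuous.continuousOn q.continuous.continuousOn
  rw [hnorm, integral_iterate_derivative_endpointPotential_mul hq, mul_pow, mul_assoc] at hcauchy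
  exact le_of_mul_le_mul_left hcauchy (by positivity)

theorem natDegree_comp_linear_le {q : ℝ[X]} {n : ℕ} (hq : q.natDegree ≤ n) (c d : ℝ) :
    (q.comp (C c * X + C d)).natDegree ≤ n := by
  simpa using natDegree_comp_le.trans (Nat.mul_le_mul hq (natDegree_linear_le (a := c) (b := d)))

/-- Both endpoints of an interval are covered, as `b < a` is allowed. -/
theorem sq_eval_le_integral_sq {n : ℕ} {q : ℝ[X]} (hq : q.natDegree ≤ n) {a b : ℝ} (hab : a ≠ b) :
    q.eval b ^ 2 ≤ ((n : ℝ) + 1) ^ 2 / (b - a) * ∫ t in a..b, q.eval t ^ 2 := by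
  have hba : b - a ≠ 0 := sub_ne_zero.2 hab.symm
  have hunit := sq_eval_one_le_integral_sq (natDegree_comp_linear_le hq (b - a) a)
  have hscale := intervalIntegral.mul_integral_comp_mul_add (a := 0) (b := 1)
    (f := fun t => q.eval t ^ 2) (b - a) a
  simp only [eval_comp, eval_add, eval_mul, eval_C, eval_X, mul_one, sub_add_cancel, mul_zero,
    zero_add] at hunit hscale
  rw [← hscale]
  exact hunit.trans_eq (by field_simp)

/-! ### Polynomial approximation by blended Taylor expansions -/

theorem abs_sub_taylor_le {g : ℝ → ℝ} {m : ℕ} (hg : ContDiff ℝ m g) {a b B : ℝ}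
    (hB : ∀ y ∈ Icc a b, |iteratedDeriv m g y| ≤ B) {x c : ℝ} (hx : x ∈ Icc a b)
    (hc : c ∈ Icc a b) :
    |g x - ∑ i ∈ Finset.range m, iteratedDeriv i g c / i.factorial * (x - c) ^ i|
      ≤ B * (|x - c| ^ m / m.factorial) := by
  rcases m with _ | k
  · simpa using hB x hx
  rcases eq_or_ne c x with rfl | hne
  · simp [Finset.sum_range_succ']
  obtain ⟨y, hy, hlagrange⟩ := taylor_mean_remainder_lagrange_iteratedDeriv (f := g) (n := k) hne
    hg.contDiffOn
  have hmem : y ∈ Icc a b := ordConnected_Icc.uIcc_subset hc hx (Ioo_subset_Icc_self hy)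
  have htaylor : taylorWithinEval g k (uIcc c x) c x
      = ∑ i ∈ Finset.range (k + 1), iteratedDeriv i g c / i.factorial * (x - c) ^ i := by
    rw [taylor_within_apply]
    refine Finset.sum_congr rfl fun i hi => ?_
    rw [iteratedDerivWithin_eq_iteratedDeriv (uniqueDiffOn_uIcc hne)
      (hg.contDiffAt.of_le (by exact_mod_cast (Finset.mem_range.1 hi).le)) left_mem_uIcc,
      smul_eq_mul]
    ring
  rw [← htaylor, hlagrange, abs_div, abs_mul, abs_pow, Nat.abs_cast, mul_div_assoc]
  gcongr
  exact hB y hmem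

theorem eval_bernsteinPolynomial (n k : ℕ) (x : ℝ) :
    (bernsteinPolynomial ℝ n k).eval x = n.choose k * x ^ k * (1 - x) ^ (n - k) := by
  simp [bernsteinPolynomial]

theorem eval_bernsteinPolynomial_nonneg (n k : ℕ) {x : ℝ} (hx : x ∈ Icc (0 : ℝ) 1) :
    0 ≤ (bernsteinPolynomial ℝ n k).eval x := by
  rw [eval_bernsteinPolynomial]
  have := hx.1
  have := sub_nonneg.2 hx.2
  positivity

theorem sum_eval_bernsteinPolynomial (n : ℕ) (x : ℝ) :
    ∑ k ∈ Finset.range (n + 1), (bernsteinPolynomial ℝ n k).eval x = 1 := by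
  rw [← eval_finsetSum, bernsteinPolynomial.sum, eval_one]

theorem natDegree_bernsteinPolynomial_le {n k : ℕ} (hk : k ≤ n) :
    (bernsteinPolynomial ℝ n k).natDegree ≤ n := by
  have hone : (1 - X : ℝ[X]).natDegree ≤ 1 := (natDegree_sub_le _ _).trans (by simp)
  refine (natDegree_mul_le_of_le (natDegree_mul_le_of_le (natDegree_natCast _).le
    (natDegree_X_pow_le k)) (natDegree_pow_le_of_le (n - k) hone)).trans ?_
  omega

/-- Chernoff bound: the weights are those of a binomial variable `k` with mean `n * x`. -/
theorem sum_eval_bernsteinPolynomial_mul_exp_le (n : ℕ) {x s : ℝ} (hx : x ∈ Icc (0 : ℝ) 1)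
    (hs : |s| ≤ 1) :
    ∑ k ∈ Finset.range (n + 1), (bernsteinPolynomial ℝ n k).eval x * Real.exp (s * (k - n * x))
      ≤ Real.exp (n * s ^ 2) := by
  have hterm : ∀ k ∈ Finset.range (n + 1),
      (bernsteinPolynomial ℝ n k).eval x * Real.exp (s * (k - n * x)) =
        Real.exp (-(s * (n * x))) * ((x * Real.exp s) ^ k * (1 - x) ^ (n - k) * n.choose k) := by
    intro k _
    rw [eval_bernsteinPolynomial, show s * (k - n * x) = k * s + -(s * (n * x)) by ring,
      Real.exp_add, mul_pow, ← Real.exp_nat_mul]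
    ring
  have hmgf : x * Real.exp s + (1 - x) ≤ Real.exp (x * (s + s ^ 2)) := by
    have hexp := (abs_le.1 (Real.abs_exp_sub_one_sub_id_le hs)).2
    linarith [Real.add_one_le_exp (x * (s + s ^ 2)), mul_le_mul_of_nonneg_left hexp hx.1]
  have hnonneg : 0 ≤ x * Real.exp s + (1 - x) :=
    add_nonneg (mul_nonneg hx.1 (Real.exp_pos s).le) (sub_nonneg.2 hx.2)
  calc _ = Real.exp (-(s * (n * x))) * (x * Real.exp s + (1 - x)) ^ n := by
        rw [Finset.sum_congr rfl hterm, ← Finset.mul_sum, ← add_pow]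
    _ ≤ Real.exp (-(s * (n * x))) * Real.exp (x * (s + s ^ 2)) ^ n := by gcongr
    _ = Real.exp (n * s ^ 2 * x) := by
        rw [← Real.exp_nat_mul, ← Real.exp_add]
        ring_nf
    _ ≤ Real.exp (n * s ^ 2) :=
        Real.exp_le_exp.2 (mul_le_of_le_one_right (by positivity) hx.2)

theorem exp_mul_abs_le_add (θ y : ℝ) :
    Real.exp (θ * |y|) ≤ Real.exp (θ * y) + Real.exp (-θ * y) := by
  rcases abs_choice y with h | h <;> rw [h]
  · exact le_add_of_nonneg_right (Real.exp_pos _).le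
  · rw [mul_neg, ← neg_mul]
    exact le_add_of_nonneg_left (Real.exp_pos _).le

/-- The Taylor polynomials of degree less than `m` of `g` at the nodes `k / n`, blended with the
Bernstein weights of degree `n`. -/
def bernsteinTaylor (n m : ℕ) (g : ℝ → ℝ) : ℝ[X] :=
  ∑ k ∈ Finset.range (n + 1), bernsteinPolynomial ℝ n k *
    ∑ i ∈ Finset.range m, C (iteratedDeriv i g (k / n) / i.factorial) * (X - C (k / n : ℝ)) ^ i

theorem natDegree_bernsteinTaylor_le (n m : ℕ) (g : ℝ → ℝ) :
    (bernsteinTaylor n m g).natDegree ≤ n + m - 1 := by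
  refine natDegree_sum_le_of_forall_le _ _ fun k hk => ?_
  rcases m with _ | m
  · simp
  refine natDegree_mul_le_of_le (natDegree_bernsteinPolynomial_le
    (Nat.lt_succ_iff.1 (Finset.mem_range.1 hk))) (natDegree_sum_le_of_forall_le _ _ fun i hi => ?_)
  refine (natDegree_C_mul_le _ _).trans
    ((natDegree_pow_le_of_le i (natDegree_X_sub_C_le _)).trans ?_)
  rw [mul_one]
  exact Nat.lt_succ_iff.1 (Finset.mem_range.1 hi)

theorem eval_bernsteinTaylor_sub (n m : ℕ) (g : ℝ → ℝ) (x : ℝ) :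
    (bernsteinTaylor n m g).eval x - g x =
      ∑ k ∈ Finset.range (n + 1), (bernsteinPolynomial ℝ n k).eval x *
        (∑ i ∈ Finset.range m, iteratedDeriv i g (k / n) / i.factorial * (x - k / n) ^ i
          - g x) := by
  simp only [mul_sub, Finset.sum_sub_distrib, ← Finset.sum_mul, sum_eval_bernsteinPolynomial,
    one_mul]
  simp [bernsteinTaylor, eval_finsetSum]

theorem abs_sub_div_pow_div_factorial_le {n : ℕ} (hn : 1 ≤ n) (m k : ℕ) {θ : ℝ} (hθ : 0 < θ)
    (x : ℝ) :
    |x - k / n| ^ m / m.factorial ≤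
      (Real.exp (θ * (k - n * x)) + Real.exp (-θ * (k - n * x))) / (θ * n) ^ m := by
  have : (0 : ℝ) < n := by exact_mod_cast hn
  have hscale : |x - k / n| = θ * |k - n * x| / (θ * n) := by
    rw [show x - k / n = -((k - n * x) / n) by field_simp; ring, abs_neg, abs_div, Nat.abs_cast]
    field_simp
  rw [hscale, div_pow, div_right_comm]
  gcongr
  exact (Real.pow_div_factorial_le_exp _ (by positivity) m).trans (exp_mul_abs_le_add _ _)

theorem abs_eval_bernsteinTaylor_sub_le {n m : ℕ} (hn : 1 ≤ n) {θ B : ℝ} (hθ : 0 < θ) (hθ1 : θ ≤ 1)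
    {g : ℝ → ℝ} (hg : ContDiff ℝ m g) (hB : ∀ y ∈ Icc (0 : ℝ) 1, |iteratedDeriv m g y| ≤ B)
    {x : ℝ} (hx : x ∈ Icc (0 : ℝ) 1) :
    |(bernsteinTaylor n m g).eval x - g x| ≤ 2 * B * Real.exp (n * θ ^ 2) / (θ * n) ^ m := by
  have hB0 : 0 ≤ B := (abs_nonneg _).trans (hB 0 (by simp))
  have hterm : ∀ k ∈ Finset.range (n + 1), |(bernsteinPolynomial ℝ n k).eval x *
      (∑ i ∈ Finset.range m, iteratedDeriv i g (k / n) / i.factorial * (x - k / n) ^ i - g x)| ≤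
      B / (θ * n) ^ m * ((bernsteinPolynomial ℝ n k).eval x * Real.exp (θ * (k - n * x))
        + (bernsteinPolynomial ℝ n k).eval x * Real.exp (-θ * (k - n * x))) := by
    intro k hk
    have hnode : (k / n : ℝ) ∈ Icc (0 : ℝ) 1 :=
      ⟨by positivity, div_le_one_of_le₀
        (by exact_mod_cast Nat.lt_succ_iff.1 (Finset.mem_range.1 hk)) n.cast_nonneg⟩
    rw [abs_mul, abs_of_nonneg (eval_bernsteinPolynomial_nonneg n k hx), abs_sub_comm, ← mul_add,
      mul_left_comm]
    refine mul_le_mul_of_nonneg_left ?_ (eval_bernsteinPolynomial_nonneg n k hx)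
    rw [div_mul_eq_mul_div, mul_div_assoc]
    exact (abs_sub_taylor_le hg hB hx hnode).trans (mul_le_mul_of_nonneg_left
      (abs_sub_div_pow_div_factorial_le hn m k hθ x) hB0)
  have hmgf₁ := sum_eval_bernsteinPolynomial_mul_exp_le n hx (s := θ) (by rwa [abs_of_pos hθ])
  have hmgf₂ := sum_eval_bernsteinPolynomial_mul_exp_le n hx (s := -θ)
    (by rwa [abs_neg, abs_of_pos hθ])
  rw [neg_sq] at hmgf₂
  rw [eval_bernsteinTaylor_sub]
  refine (Finset.abs_sum_le_sum_abs _ _).trans ((Finset.sum_le_sum hterm).trans ?_)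
  rw [← Finset.mul_sum, Finset.sum_add_distrib]
  calc _ ≤ B / (θ * n) ^ m * (Real.exp (n * θ ^ 2) + Real.exp (n * θ ^ 2)) := by gcongr
    _ = _ := by ring

theorem iteratedDeriv_comp_mul_add {m : ℕ} {g : ℝ → ℝ} (hg : ContDiff ℝ m g) (c d x : ℝ) :
    iteratedDeriv m (fun t => g (c * t + d)) x = c ^ m * iteratedDeriv m g (c * x + d) := by
  have h := congrFun (iteratedDeriv_comp_const_mul (f := fun z => g (z + d))
    (hg.comp (contDiff_id.add contDiff_const)) c) x
  rwa [iteratedDeriv_comp_add_const] at h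

theorem exists_polynomial_abs_sub_le {n m : ℕ} (hn : 1 ≤ n) {θ B : ℝ} (hθ : 0 < θ) (hθ1 : θ ≤ 1)
    {a b : ℝ} (hab : a < b) {g : ℝ → ℝ} (hg : ContDiff ℝ m g)
    (hB : ∀ y ∈ Icc a b, |iteratedDeriv m g y| * (b - a) ^ m ≤ B) :
    ∃ P : ℝ[X], P.natDegree ≤ n + m - 1 ∧
      ∀ x ∈ Icc a b, |P.eval x - g x| ≤ 2 * B * Real.exp (n * θ ^ 2) / (θ * n) ^ m := by
  have hba : 0 < b - a := sub_pos.2 hab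
  set G : ℝ → ℝ := fun t => g ((b - a) * t + a) with hG
  have hGB : ∀ y ∈ Icc (0 : ℝ) 1, |iteratedDeriv m G y| ≤ B := by
    intro y hy
    rw [iteratedDeriv_comp_mul_add hg, abs_mul, abs_of_pos (by positivity), mul_comm]
    exact hB _ ⟨by nlinarith [hy.1], by nlinarith [hy.2]⟩
  refine ⟨(bernsteinTaylor n m G).comp (C (b - a)⁻¹ * X + C (-(a / (b - a)))), ?_, fun x hx => ?_⟩
  · exact natDegree_comp_linear_le (natDegree_bernsteinTaylor_le n m G) _ _
  · have hy : (x - a) / (b - a) ∈ Icc (0 : ℝ) 1 :=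
      ⟨div_nonneg (sub_nonneg.2 hx.1) hba.le, (div_le_one hba).2 (by linarith [hx.2])⟩
    have h := abs_eval_bernsteinTaylor_sub_le hn hθ hθ1 (g := G) (hg.comp (by fun_prop)) hGB hy
    have hGx : G ((x - a) / (b - a)) = g x := by
      simp only [hG, mul_div_cancel₀ _ hba.ne', sub_add_cancel]
    rw [hGx] at h
    simpa only [eval_comp, eval_add, eval_mul, eval_C, eval_X, ← sub_eq_add_neg, ← div_eq_inv_mul,
      ← sub_div] using h

/-! ### Interpolation at both endpoints -/

theorem exists_polynomial_derivative_eq {P : ℝ[X]} {n : ℕ} (hP : P.natDegree ≤ n) :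
    ∃ Q : ℝ[X], Q.natDegree ≤ n + 1 ∧ Q.derivative = P := by
  refine ⟨∑ i ∈ Finset.range (n + 1), C (P.coeff i / (i + 1)) * X ^ (i + 1), ?_, ?_⟩
  · refine natDegree_sum_le_of_forall_le _ _ fun i hi => (natDegree_C_mul_X_pow_le _ _).trans ?_
    exact Finset.mem_range.1 hi
  · rw [derivative_sum]
    conv_rhs => rw [P.as_sum_range' (n + 1) (by omega)]
    refine Finset.sum_congr rfl fun i _ => ?_
    rw [derivative_C_mul_X_pow, C_mul_X_pow_eq_monomial, Nat.cast_add_one,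
      div_mul_cancel₀ _ (Nat.cast_add_one_ne_zero i), Nat.add_sub_cancel]

theorem integral_deriv_eq_sub_of_contDiff {f : ℝ → ℝ} (hf : ContDiff ℝ 1 f) (a b : ℝ) :
    (∫ t in a..b, deriv f t) = f b - f a :=
  intervalIntegral.integral_deriv_eq_sub (fun x _ => hf.differentiable one_ne_zero x)
    ((hf.continuous_deriv le_rfl).intervalIntegrable _ _)

/-- The constant added to `P` is the mean of `s' - P`. -/
theorem exists_polynomial_derivative_eq_add_const {s : ℝ → ℝ} (hs : ContDiff ℝ 1 s) {a b δ : ℝ}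
    (hab : a < b) {P : ℝ[X]} {n : ℕ} (hP : P.natDegree ≤ n)
    (hPs : ∀ x ∈ Icc a b, |P.eval x - deriv s x| ≤ δ) :
    ∃ (Q : ℝ[X]) (μ : ℝ), Q.natDegree ≤ n + 1 ∧ Q.derivative = P + C μ ∧ |μ| ≤ δ ∧
      Q.eval b - Q.eval a = s b - s a := by
  have hba : 0 < b - a := sub_pos.2 hab
  set μ := (∫ t in a..b, (deriv s t - P.eval t)) / (b - a) with hμ
  obtain ⟨Q, hQdeg, hQ⟩ := exists_polynomial_derivative_eq
    (P := P + C μ) (natDegree_add_C.le.trans hP)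
  refine ⟨Q, μ, hQdeg, hQ, ?_, ?_⟩
  · rw [hμ, abs_div, abs_of_pos hba, div_le_iff₀ hba]
    have h := intervalIntegral.norm_integral_le_of_norm_le_const (a := a) (b := b)
      (f := fun t => deriv s t - P.eval t) (C := δ) fun x hx => by
        rw [uIoc_of_le hab.le] at hx
        rw [Real.norm_eq_abs, abs_sub_comm]
        exact hPs x (Ioc_subset_Icc_self hx)
    rwa [Real.norm_eq_abs, abs_of_pos hba] at h
  · have hcont := hs.continuous_deriv le_rfl
    have hint := intervalIntegral.integral_eq_sub_of_hasDerivAt (a := a) (b := b)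
      (fun x _ => Q.hasDerivAt x) (Q.derivative.continuous.intervalIntegrable _ _)
    simp only [hQ, eval_add, eval_C] at hint
    rw [← hint, ← integral_deriv_eq_sub_of_contDiff hs, intervalIntegral.integral_add
      (P.continuous.intervalIntegrable _ _) (by simp), intervalIntegral.integral_const,
      smul_eq_mul, hμ, mul_div_cancel₀ _ hba.ne', intervalIntegral.integral_sub
      (hcont.intervalIntegrable _ _) (P.continuous.intervalIntegrable _ _)]
    ring

theorem exists_polynomial_interp_of_abs_sub_deriv_le {s : ℝ → ℝ} (hs : ContDiff ℝ 1 s) {a b δ : ℝ}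
    (hab : a < b) {P : ℝ[X]} {n : ℕ} (hP : P.natDegree ≤ n)
    (hPs : ∀ x ∈ Icc a b, |P.eval x - deriv s x| ≤ δ) :
    ∃ q : ℝ[X], q.natDegree ≤ n + 1 ∧ q.eval a = s a ∧ q.eval b = s b ∧ ∀ x ∈ Icc a b,
      |q.derivative.eval x - deriv s x| ≤ 2 * δ ∧ |q.eval x - s x| ≤ 2 * δ * (b - a) := by
  obtain ⟨Q, μ, hQdeg, hQ, hμδ, hQab⟩ := exists_polynomial_derivative_eq_add_const hs hab hP hPs
  have hderiv : ∀ x ∈ Icc a b, |Q.derivative.eval x - deriv s x| ≤ 2 * δ := by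
    intro x hx
    rw [hQ, eval_add, eval_C, add_sub_right_comm]
    exact (abs_add_le _ _).trans (by linarith [hPs x hx])
  refine ⟨Q + C (s a - Q.eval a), natDegree_add_C.le.trans hQdeg, by simp, ?_, fun x hx => ?_⟩
  · rw [eval_add, eval_C]
    linarith
  rw [derivative_add, derivative_C, add_zero]
  refine ⟨hderiv x hx, ?_⟩
  have hmean := (convex_Icc a b).norm_image_sub_le_of_norm_hasDerivWithin_le
    (f := fun x => Q.eval x - s x) (fun y _ => ((Q.hasDerivAt y).sub
      (hs.differentiable one_ne_zero y).hasDerivAt).hasDerivWithinAt)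
    hderiv (left_mem_Icc.2 hab.le) hx
  rw [Real.norm_eq_abs, Real.norm_eq_abs, abs_of_nonneg (sub_nonneg.2 hx.1)] at hmean
  have hδ : 0 ≤ 2 * δ := (abs_nonneg _).trans (hderiv x hx)
  calc |(Q + C (s a - Q.eval a)).eval x - s x| = |Q.eval x - s x - (Q.eval a - s a)| := by
        rw [eval_add, eval_C]
        ring_nf
    _ ≤ 2 * δ * (x - a) := hmean
    _ ≤ 2 * δ * (b - a) := by
        gcongr
        exact hx.2

/-- The Chernoff parameter `θ` for which Taylor polynomials of order about `θ ^ 2 * p`, blended with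
Bernstein weights of degree about `p`, have exponentially small error on functions whose `n`-th
derivative grows like `(K * (θ ^ 2 * p + 1)) ^ n`. -/
def chernoffParam (K : ℝ) : ℝ := Real.exp (-2) / (4 * K)

theorem chernoffParam_pos {K : ℝ} (hK : 1 ≤ K) : 0 < chernoffParam K := by
  unfold chernoffParam
  positivity

theorem chernoffParam_le {K : ℝ} (hK : 1 ≤ K) : chernoffParam K ≤ 1 / 4 := by
  rw [chernoffParam, div_le_iff₀ (by positivity)]
  linarith [Real.exp_le_one_iff.2 (by norm_num : (-2 : ℝ) ≤ 0)]

theorem pow_div_chernoffParam_pow_le {K p n : ℝ} (hK : 1 ≤ K) {m : ℕ}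
    (hm : m ≤ chernoffParam K ^ 2 * p) (hn : p / 2 ≤ n) :
    (K * (chernoffParam K ^ 2 * p + 1)) ^ m / (chernoffParam K * n) ^ m ≤ Real.exp (-2) ^ m := by
  have hθ := chernoffParam_pos hK
  rcases Nat.eq_zero_or_pos m with h0 | h0
  · simp [h0]
  have hone : 1 ≤ chernoffParam K ^ 2 * p := hm.trans' (by exact_mod_cast h0)
  have hp : 0 < p := pos_of_mul_pos_right (one_pos.trans_le hone) (sq_nonneg _)
  have hpos : 0 < chernoffParam K * n := mul_pos hθ (by linarith)
  have hexp : Real.exp (-2) = chernoffParam K * (4 * K) := by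
    rw [chernoffParam]
    field_simp
  rw [← div_pow]
  gcongr
  rw [div_le_iff₀ hpos]
  calc K * (chernoffParam K ^ 2 * p + 1)
    _ ≤ K * (2 * (chernoffParam K ^ 2 * p)) := by gcongr; linarith
    _ = Real.exp (-2) * (chernoffParam K * (p / 2)) := by rw [hexp]; ring
    _ ≤ _ := by gcongr

theorem bernsteinTaylor_error_le {K : ℝ} (hK : 1 ≤ K) {p m : ℕ} {α : ℝ}
    (hα : α = chernoffParam K ^ 2) (hm : m = ⌊α * p⌋₊) :
    (K * (α * p + 1)) ^ (m + 1) * Real.exp ((p - m : ℕ) * α)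
        / (chernoffParam K * (p - m : ℕ)) ^ m
      ≤ 2 * Real.exp 2 * K * Real.exp (-(α / 2) * p) := by
  have hθ := chernoffParam_pos hK
  have hα0 : 0 < α := hα ▸ by positivity
  have hα4 : α ≤ 1 / 4 := by nlinarith [chernoffParam_le hK]
  have hm1 : (m : ℝ) ≤ α * p := hm ▸ Nat.floor_le (by positivity)
  have hm2 : α * p - 1 ≤ m := hm ▸ (Nat.sub_one_lt_floor _).le
  have : (0 : ℝ) ≤ p := p.cast_nonneg
  have hmp : m ≤ p := by
    have : (m : ℝ) ≤ p := by nlinarith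
    exact_mod_cast this
  have hn : (p : ℝ) / 2 ≤ (p - m : ℕ) := by
    rw [Nat.cast_sub hmp]
    nlinarith
  have hratio : (K * (α * p + 1)) ^ m / (chernoffParam K * (p - m : ℕ)) ^ m ≤ Real.exp (-2) ^ m :=
    hα ▸ pow_div_chernoffParam_pow_le hK (hα ▸ hm1) hn
  have hlin : α * p + 1 ≤ 2 * Real.exp (α / 2 * p) := by
    nlinarith [Real.add_one_le_exp (α / 2 * p)]
  calc _ = K * (α * p + 1) * ((K * (α * p + 1)) ^ m / (chernoffParam K * (p - m : ℕ)) ^ m)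
          * Real.exp ((p - m : ℕ) * α) := by ring
    _ ≤ K * (2 * Real.exp (α / 2 * p)) * Real.exp (2 - 2 * (α * p)) * Real.exp (p * α) := by
        gcongr
        · refine hratio.trans ?_
          rw [← Real.exp_nat_mul]
          exact Real.exp_le_exp.2 (by linarith)
        · exact Nat.sub_le _ _
    _ = _ := by
        have hexp : Real.exp (α / 2 * p) * Real.exp (2 - 2 * (α * p)) * Real.exp (p * α)
            = Real.exp 2 * Real.exp (-(α / 2) * p) := by
          rw [← Real.exp_add, ← Real.exp_add, ← Real.exp_add]
          ring_nf
        linear_combination 2 * K * hexp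

theorem exists_polynomial_abs_sub_deriv_exponential_le {K α : ℝ} (hK : 1 ≤ K)
    (hα : α = chernoffParam K ^ 2) {p : ℕ} (hp : 1 ≤ p) {s : ℝ → ℝ}
    (hs : ContDiff ℝ (⊤ : ℕ∞) s) {a b : ℝ} (hab : a < b) {C₀ : ℝ}
    (hC : ∀ n : ℕ, (n : ℝ) ≤ α * p + 1 → ∀ x ∈ Icc a b,
      |iteratedDeriv n s x| * (b - a) ^ n ≤ C₀ * (K * (α * p + 1)) ^ n) :
    ∃ P : ℝ[X], P.natDegree ≤ p - 1 ∧ ∀ x ∈ Icc a b, |P.eval x - deriv s x|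
      ≤ 4 * Real.exp 2 * K * C₀ * Real.exp (-(α / 2) * p) / (b - a) := by
  have hθ := chernoffParam_pos hK
  have hθ4 := chernoffParam_le hK
  have hα0 : 0 < α := by rw [hα]; positivity
  have hba : 0 < b - a := sub_pos.2 hab
  have hC0 : 0 ≤ C₀ := by
    simpa using (mul_nonneg (abs_nonneg _) (by positivity)).trans
      (hC 0 (by push_cast; positivity) a (left_mem_Icc.2 hab.le))
  set m := ⌊α * p⌋₊ with hm
  have hmα : (m : ℝ) ≤ α * p := Nat.floor_le (by positivity)
  have hmp : m < p := by
    have hα1 : α < 1 := by nlinarith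
    have hmp : (m : ℝ) < p := hmα.trans_lt (mul_lt_of_lt_one_left (by exact_mod_cast hp) hα1)
    exact_mod_cast hmp
  have hs' : ContDiff ℝ m (deriv s) :=
    ((contDiff_infty_iff_deriv.1 hs).2).of_le (by exact_mod_cast le_top)
  have hB : ∀ y ∈ Icc a b, |iteratedDeriv m (deriv s) y| * (b - a) ^ m
      ≤ C₀ * (K * (α * p + 1)) ^ (m + 1) / (b - a) := by
    intro y hy
    rw [← iteratedDeriv_succ', le_div_iff₀ hba, mul_assoc, ← pow_succ]
    exact hC (m + 1) (by push_cast; linarith) y hy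
  obtain ⟨P, hPdeg, hP⟩ := exists_polynomial_abs_sub_le (n := p - m) (by omega) hθ (by linarith)
    hab hs' hB
  rw [Nat.sub_add_cancel hmp.le] at hPdeg
  refine ⟨P, by omega, fun x hx => (hP x hx).trans ?_⟩
  calc _ = 2 * C₀ / (b - a) * ((K * (α * p + 1)) ^ (m + 1) * Real.exp ((p - m : ℕ) * α)
          / (chernoffParam K * (p - m : ℕ)) ^ m) := by rw [hα]; ring
    _ ≤ 2 * C₀ / (b - a) * (2 * Real.exp 2 * K * Real.exp (-(α / 2) * p)) := by
        gcongr
        exact bernsteinTaylor_error_le hK hα hm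
    _ = _ := by ring

/-- Only the derivatives of order up to `α * p + 1` enter, so that functions which are analytic
merely up to an order proportional to `p` are covered. -/
theorem exists_polynomial_interp_exponential {K : ℝ} (hK : 1 ≤ K) :
    ∃ α C₁ : ℝ, 0 < α ∧ α ≤ 1 / 4 ∧ 0 < C₁ ∧ ∀ p : ℕ, 1 ≤ p → ∀ s : ℝ → ℝ,
      ContDiff ℝ (⊤ : ℕ∞) s → ∀ a b : ℝ, a < b → ∀ C₀ : ℝ,
      (∀ n : ℕ, (n : ℝ) ≤ α * p + 1 → ∀ x ∈ Icc a b,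
        |iteratedDeriv n s x| * (b - a) ^ n ≤ C₀ * (K * (α * p + 1)) ^ n) →
      ∃ q : ℝ[X], q.natDegree ≤ p ∧ q.eval a = s a ∧ q.eval b = s b ∧ ∀ x ∈ Icc a b,
        |q.derivative.eval x - deriv s x| ≤ C₁ * C₀ * Real.exp (-(α / 2) * p) / (b - a) ∧
        |q.eval x - s x| ≤ C₁ * C₀ * Real.exp (-(α / 2) * p) := by
  have hθ := chernoffParam_pos hK
  have hθ4 := chernoffParam_le hK
  refine ⟨chernoffParam K ^ 2, 8 * Real.exp 2 * K, by positivity, by nlinarith, by positivity, ?_⟩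
  intro p hp s hs a b hab C₀ hC
  have hba : 0 < b - a := sub_pos.2 hab
  obtain ⟨P, hPdeg, hP⟩ := exists_polynomial_abs_sub_deriv_exponential_le hK rfl hp hs hab hC
  obtain ⟨q, hqdeg, hqa, hqb, hq⟩ := exists_polynomial_interp_of_abs_sub_deriv_le
    (hs.of_le (by exact_mod_cast le_top)) hab hPdeg hP
  refine ⟨q, by omega, hqa, hqb, fun x hx => ⟨(hq x hx).1.trans_eq ?_, (hq x hx).2.trans_eq ?_⟩⟩
  · ring
  · field_simp
    ring

end Polynomial

/-! ### The maximum principle -/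

/-- The convection–diffusion operator `y ↦ -ε y'' + b y' + r y`. -/
def convDiffOp (ε : ℝ) (b r y : ℝ → ℝ) (x : ℝ) : ℝ :=
  -ε * deriv (deriv y) x + b x * deriv y x + r x * y x

section MaximumPrinciple

variable {ε a c β : ℝ} {b r y z ψ : ℝ → ℝ}

theorem convDiffOp_add (hy : ContDiff ℝ 2 y) (hz : ContDiff ℝ 2 z) (x : ℝ) :
    convDiffOp ε b r (fun t => y t + z t) x = convDiffOp ε b r y x + convDiffOp ε b r z x := by
  have hderiv : deriv (fun t => y t + z t) = fun t => deriv y t + deriv z t := funext fun t =>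
    deriv_fun_add (hy.differentiable two_ne_zero t) (hz.differentiable two_ne_zero t)
  rw [convDiffOp, hderiv, deriv_fun_add (hy.differentiable_deriv_two x)
    (hz.differentiable_deriv_two x), convDiffOp, convDiffOp]
  ring

theorem convDiffOp_const_mul (k x : ℝ) :
    convDiffOp ε b r (fun t => k * y t) x = k * convDiffOp ε b r y x := by
  simp only [convDiffOp, deriv_const_mul_field']
  ring

theorem convDiffOp_sub (hy : ContDiff ℝ 2 y) (hz : ContDiff ℝ 2 z) (x : ℝ) :
    convDiffOp ε b r (fun t => y t - z t) x = convDiffOp ε b r y x - convDiffOp ε b r z x := by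
  have h := convDiffOp_add (ε := ε) (b := b) (r := r) hy (contDiff_const (c := -1).mul hz) x
  rw [convDiffOp_const_mul] at h
  simpa only [neg_one_mul, ← sub_eq_add_neg] using h

theorem mul_le_convDiffOp_linear {k x : ℝ} (hk : 0 ≤ k) (hx : 0 ≤ x) (hb : β ≤ b x)
    (hr : 0 ≤ r x) : k * β ≤ convDiffOp ε b r (fun t => k * t) x := by
  have hid : convDiffOp ε b r (fun t => t) x = b x + r x * x := by simp [convDiffOp]
  rw [convDiffOp_const_mul, hid]
  exact mul_le_mul_of_nonneg_left (by linarith [mul_nonneg hr hx]) hk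

theorem deriv_deriv_nonneg_of_isLocalMin {x : ℝ} (hy : ContinuousAt y x) (h : IsLocalMin y x) :
    0 ≤ deriv (deriv y) x := by
  by_contra! hneg
  have hmax : IsLocalMax y x := isLocalMax_of_deriv_deriv_neg hneg h.deriv_eq_zero hy
  have hconst : y =ᶠ[nhds x] fun _ => y x := by
    filter_upwards [h, hmax] with t hmin hmax using le_antisymm hmax hmin
  have hzero : deriv (deriv y) x = 0 := by simp [hconst.deriv.deriv_eq]
  exact hneg.ne hzero

theorem nonneg_of_convDiffOp_pos (hε : 0 ≤ ε) (hy : Continuous y)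
    (hr : ∀ x ∈ Icc a c, 0 ≤ r x) (ha : 0 ≤ y a) (hc : 0 ≤ y c)
    (h : ∀ x ∈ Icc a c, 0 < convDiffOp ε b r y x) : ∀ x ∈ Icc a c, 0 ≤ y x := by
  intro x hx
  obtain ⟨z, hz, hmin⟩ := isCompact_Icc.exists_isMinOn ⟨x, hx⟩ hy.continuousOn
  refine le_trans ?_ (hmin hx)
  by_contra! hneg
  have haz : a ≠ z := by rintro rfl; linarith
  have hzc : z ≠ c := by rintro rfl; linarith
  have hloc : IsLocalMin y z :=
    hmin.isLocalMin (Icc_mem_nhds (hz.1.lt_of_ne haz) (hz.2.lt_of_ne hzc))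
  have hsecond := mul_nonneg hε (deriv_deriv_nonneg_of_isLocalMin hy.continuousAt hloc)
  have hzeroth := mul_nonpos_of_nonneg_of_nonpos (hr z hz) hneg.le
  have hpos := h z hz
  rw [convDiffOp, hloc.deriv_eq_zero] at hpos
  linarith

theorem nonneg_of_convDiffOp_nonneg (hε : 0 ≤ ε) (hβ : 0 < β) (hy : ContDiff ℝ 2 y)
    (ha₀ : 0 ≤ a) (hb : ∀ x ∈ Icc a c, β ≤ b x) (hr : ∀ x ∈ Icc a c, 0 ≤ r x)
    (ha : 0 ≤ y a) (hc : 0 ≤ y c) (h : ∀ x ∈ Icc a c, 0 ≤ convDiffOp ε b r y x) :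
    ∀ x ∈ Icc a c, 0 ≤ y x := by
  intro x hx
  have hperturbed : ∀ δ > 0, 0 ≤ y x + δ * x := by
    intro δ hδ
    have hlin : ContDiff ℝ 2 (fun t : ℝ => δ * t) := contDiff_const.mul contDiff_id
    refine nonneg_of_convDiffOp_pos (b := b) (y := fun t => y t + δ * t) hε (hy.add hlin).continuous
      hr (by positivity) (add_nonneg hc (mul_nonneg hδ.le (ha₀.trans (hx.1.trans hx.2)))) ?_ x hx
    intro t ht
    rw [convDiffOp_add hy hlin]
    have := mul_le_convDiffOp_linear (ε := ε) hδ.le (ha₀.trans ht.1) (hb t ht) (hr t ht)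
    linarith [h t ht, mul_pos hδ hβ]
  have hlim : Filter.Tendsto (fun δ : ℝ => y x + δ * x) (nhdsWithin 0 (Ioi 0)) (nhds (y x)) :=
    (Continuous.tendsto' (by fun_prop) 0 _ (by simp)).mono_left nhdsWithin_le_nhds
  exact ge_of_tendsto hlim (by filter_upwards [self_mem_nhdsWithin] using hperturbed)

theorem abs_le_of_abs_convDiffOp_le (hε : 0 ≤ ε) (hβ : 0 < β) (hy : ContDiff ℝ 2 y)
    (hψ : ContDiff ℝ 2 ψ) (ha₀ : 0 ≤ a) (hb : ∀ x ∈ Icc a c, β ≤ b x)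
    (hr : ∀ x ∈ Icc a c, 0 ≤ r x) (ha : |y a| ≤ ψ a) (hc : |y c| ≤ ψ c)
    (h : ∀ x ∈ Icc a c, |convDiffOp ε b r y x| ≤ convDiffOp ε b r ψ x) :
    ∀ x ∈ Icc a c, |y x| ≤ ψ x := by
  intro x hx
  have hsub := nonneg_of_convDiffOp_nonneg (y := fun t => ψ t - y t) hε hβ (hψ.sub hy) ha₀ hb hr
    (sub_nonneg.2 (le_of_abs_le ha)) (sub_nonneg.2 (le_of_abs_le hc))
    (fun t ht => by rw [convDiffOp_sub hψ hy]; exact sub_nonneg.2 (le_of_abs_le (h t ht))) x hx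
  have hadd := nonneg_of_convDiffOp_nonneg (y := fun t => ψ t + y t) hε hβ (hψ.add hy) ha₀ hb hr
    (by linarith [neg_le_of_abs_le ha]) (by linarith [neg_le_of_abs_le hc])
    (fun t ht => by rw [convDiffOp_add hψ hy]; linarith [neg_le_of_abs_le (h t ht)]) x hx
  exact abs_le.2 ⟨by linarith, by linarith⟩

theorem abs_le_div_of_abs_convDiffOp_le {F : ℝ} (hε : 0 ≤ ε) (hβ : 0 < β) (hy : ContDiff ℝ 2 y)
    (hb : ∀ x ∈ Icc (0 : ℝ) 1, β ≤ b x) (hr : ∀ x ∈ Icc (0 : ℝ) 1, 0 ≤ r x)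
    (h₀ : y 0 = 0) (h₁ : y 1 = 0) (hF : ∀ x ∈ Icc (0 : ℝ) 1, |convDiffOp ε b r y x| ≤ F) :
    ∀ x ∈ Icc (0 : ℝ) 1, |y x| ≤ F / β := by
  intro x hx
  have hF₀ : 0 ≤ F / β := div_nonneg ((abs_nonneg _).trans (hF x hx)) hβ.le
  refine (abs_le_of_abs_convDiffOp_le (ψ := fun t => F / β * t) hε hβ hy
    (contDiff_const.mul contDiff_id) le_rfl hb hr (by simp [h₀]) (by simp [h₁, hF₀])
    (fun t ht => (hF t ht).trans ?_) x hx).trans (mul_le_of_le_one_right hF₀ hx.2)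
  have := mul_le_convDiffOp_linear (ε := ε) hF₀ ht.1 (hb t ht) (hr t ht)
  rwa [div_mul_cancel₀ _ hβ.ne'] at this

end MaximumPrinciple

/-! ### Bounds for the derivatives of the solution -/

section Flux

variable {ε a c B Y F : ℝ} {b r y : ℝ → ℝ}

theorem abs_flux_sub_flux_le (hb : Differentiable ℝ b) (hy : ContDiff ℝ 2 y)
    (hb' : ∀ x ∈ Icc a c, |deriv b x| ≤ B) (hr : ∀ x ∈ Icc a c, |r x| ≤ B)
    (hY : ∀ x ∈ Icc a c, |y x| ≤ Y) (hF : ∀ x ∈ Icc a c, |convDiffOp ε b r y x| ≤ F)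
    {x ξ : ℝ} (hx : x ∈ Icc a c) (hξ : ξ ∈ Icc a c) :
    |ε * deriv y x - b x * y x - (ε * deriv y ξ - b ξ * y ξ)| ≤ (2 * B * Y + F) * |x - ξ| := by
  have hderiv : ∀ t, HasDerivAt (fun t => ε * deriv y t - b t * y t)
      (r t * y t - deriv b t * y t - convDiffOp ε b r y t) t := fun t => by
    refine (((hy.differentiable_deriv_two t).hasDerivAt.const_mul ε).sub
      ((hb t).hasDerivAt.mul (hy.differentiable two_ne_zero t).hasDerivAt)).congr_deriv ?_
    rw [convDiffOp]
    ring
  refine (convex_Icc a c).norm_image_sub_le_of_norm_hasDerivWithin_le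
    (fun t _ => (hderiv t).hasDerivWithinAt) (fun t ht => ?_) hξ hx
  have hB : 0 ≤ B := (abs_nonneg _).trans (hr t ht)
  have hry : |r t * y t| ≤ B * Y := by rw [abs_mul]; gcongr; exacts [hr t ht, hY t ht]
  have hby : |deriv b t * y t| ≤ B * Y := by rw [abs_mul]; gcongr; exacts [hb' t ht, hY t ht]
  rw [Real.norm_eq_abs]
  linarith [abs_sub (r t * y t - deriv b t * y t) (convDiffOp ε b r y t),
    abs_sub (r t * y t) (deriv b t * y t), hF t ht]

/-- Some point of the interval has slope at most `2 Y / (c - a)`; from there the flux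
`ε y' - b y` is transported by its own differential equation. -/
theorem eps_mul_abs_deriv_le (hε : 0 ≤ ε) (hac : a < c) (hb : Differentiable ℝ b)
    (hy : ContDiff ℝ 2 y) (hbB : ∀ x ∈ Icc a c, |b x| ≤ B) (hb' : ∀ x ∈ Icc a c, |deriv b x| ≤ B)
    (hr : ∀ x ∈ Icc a c, |r x| ≤ B) (hY : ∀ x ∈ Icc a c, |y x| ≤ Y)
    (hF : ∀ x ∈ Icc a c, |convDiffOp ε b r y x| ≤ F) :
    ∀ x ∈ Icc a c,
      ε * |deriv y x| ≤ 2 * ε * Y / (c - a) + 2 * B * Y + (c - a) * (2 * B * Y + F) := by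
  intro x hx
  have hlen : 0 < c - a := sub_pos.2 hac
  obtain ⟨ξ, hξ, hslope⟩ := exists_deriv_eq_slope y hac hy.continuous.continuousOn
    (hy.differentiable two_ne_zero).differentiableOn
  have hξ' : ξ ∈ Icc a c := Ioo_subset_Icc_self hξ
  have hB : 0 ≤ B := (abs_nonneg _).trans (hr x hx)
  have hY₀ : 0 ≤ Y := (abs_nonneg _).trans (hY x hx)
  have hF₀ : 0 ≤ F := (abs_nonneg _).trans (hF x hx)
  have hby : ∀ t ∈ Icc a c, |b t * y t| ≤ B * Y := fun t ht => by
    rw [abs_mul]; gcongr; exacts [hbB t ht, hY t ht]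
  have hflux : |ε * deriv y x - b x * y x - (ε * deriv y ξ - b ξ * y ξ)|
      ≤ (c - a) * (2 * B * Y + F) :=
    (abs_flux_sub_flux_le hb hy hb' hr hY hF hx hξ').trans <| by
      rw [mul_comm]
      gcongr
      exact abs_le.2 ⟨by linarith [hx.1, hξ'.2], by linarith [hx.2, hξ'.1]⟩
  have hmean : |ε * deriv y ξ| ≤ 2 * ε * Y / (c - a) := by
    rw [hslope, abs_mul, abs_div, abs_of_nonneg hε, abs_of_pos hlen, ← mul_div_assoc,
      show 2 * ε * Y = ε * (2 * Y) by ring]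
    gcongr
    linarith [abs_sub (y c) (y a), hY c ⟨hac.le, le_rfl⟩, hY a ⟨le_rfl, hac.le⟩]
  calc ε * |deriv y x| = |(ε * deriv y x - b x * y x - (ε * deriv y ξ - b ξ * y ξ))
        + ε * deriv y ξ + (b x * y x - b ξ * y ξ)| := by
        rw [← abs_of_nonneg hε, ← abs_mul, abs_of_nonneg hε]; congr 1; ring
    _ ≤ _ := by
        linarith [abs_add_three (ε * deriv y x - b x * y x - (ε * deriv y ξ - b ξ * y ξ))
          (ε * deriv y ξ) (b x * y x - b ξ * y ξ), abs_sub (b x * y x) (b ξ * y ξ),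
          hby x hx, hby ξ hξ']

end Flux

section Leibniz

variable {g y : ℝ → ℝ} {W : ℕ → ℝ} {x B G θ : ℝ} {n : ℕ}

theorem descFactorial_mul_pow_mul_le (hG : 0 ≤ G) (hθ : 0 ≤ θ)
    (hW : ∀ k < n, (k + 1) * G * W k ≤ θ * W (k + 1)) :
    ∀ k ≤ n, n.descFactorial k * G ^ k * W (n - k) ≤ θ ^ k * W n := by
  intro k hk
  induction k with
  | zero => simp
  | succ k ih =>
    obtain ⟨l, rfl⟩ := Nat.exists_eq_add_of_le hk
    have hstep := hW l (by omega)
    have hprev := ih (by omega)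
    rw [show k + 1 + l - k = l + 1 by omega] at hprev
    rw [Nat.descFactorial_succ, show k + 1 + l - k = l + 1 by omega,
      show k + 1 + l - (k + 1) = l by omega]
    push_cast
    calc ((l + 1 : ℝ) * (k + 1 + l).descFactorial k) * G ^ (k + 1) * W l
        = (k + 1 + l).descFactorial k * G ^ k * ((l + 1) * G * W l) := by ring
      _ ≤ (k + 1 + l).descFactorial k * G ^ k * (θ * W (l + 1)) := by gcongr
      _ = θ * ((k + 1 + l).descFactorial k * G ^ k * W (l + 1)) := by ring
      _ ≤ θ * (θ ^ k * W (k + 1 + l)) := by gcongr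
      _ = θ ^ (k + 1) * W (k + 1 + l) := by ring

theorem abs_leibniz_term_le (hG : 0 ≤ G) (hθ : 0 ≤ θ)
    (hW : ∀ k < n, (k + 1) * G * W k ≤ θ * W (k + 1))
    (hg : ∀ k, |iteratedDeriv k g x| ≤ B * k.factorial * G ^ k) {k : ℕ} (hk : k ≤ n)
    (hy : |iteratedDeriv (n - k) y x| ≤ W (n - k)) :
    |n.choose k * iteratedDeriv k g x * iteratedDeriv (n - k) y x| ≤ B * W n * θ ^ k := by
  have hB : 0 ≤ B := by simpa using (abs_nonneg _).trans (hg 0)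
  have hdesc : (n.choose k * k.factorial : ℝ) = n.descFactorial k := by
    rw [Nat.descFactorial_eq_factorial_mul_choose]
    push_cast
    ring
  rw [abs_mul, abs_mul, Nat.abs_cast]
  calc n.choose k * |iteratedDeriv k g x| * |iteratedDeriv (n - k) y x|
      ≤ n.choose k * (B * k.factorial * G ^ k) * W (n - k) := by gcongr; exact hg k
    _ = B * (n.descFactorial k * G ^ k * W (n - k)) := by rw [← hdesc]; ring
    _ ≤ B * (θ ^ k * W n) := by
        gcongr B * ?_
        exact descFactorial_mul_pow_mul_le hG hθ hW k hk
    _ = B * W n * θ ^ k := by ring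

theorem sum_pow_le_two (hθ : 0 ≤ θ) (hθ' : θ ≤ 1 / 2) (n : ℕ) :
    ∑ k ∈ Finset.range n, θ ^ k ≤ 2 :=
  (Finset.sum_le_sum fun _ _ => pow_le_pow_left₀ hθ hθ' _).trans (sum_geometric_two_le n)

theorem abs_iteratedDeriv_mul_le (hgn : ContDiffAt ℝ n g x) (hyn : ContDiffAt ℝ n y x)
    (hG : 0 ≤ G) (hθ : 0 ≤ θ) (hθ' : θ ≤ 1 / 2)
    (hW : ∀ k < n, (k + 1) * G * W k ≤ θ * W (k + 1))
    (hg : ∀ k, |iteratedDeriv k g x| ≤ B * k.factorial * G ^ k)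
    (hy : ∀ k ≤ n, |iteratedDeriv k y x| ≤ W k) :
    |iteratedDeriv n (fun t => g t * y t) x| ≤ 2 * B * W n := by
  have hB : 0 ≤ B := by simpa using (abs_nonneg _).trans (hg 0)
  have hWn : 0 ≤ W n := (abs_nonneg _).trans (hy n le_rfl)
  rw [iteratedDeriv_fun_mul hgn hyn]
  calc |∑ k ∈ Finset.range (n + 1), n.choose k * iteratedDeriv k g x * iteratedDeriv (n - k) y x|
      ≤ ∑ k ∈ Finset.range (n + 1), B * W n * θ ^ k :=
        (Finset.abs_sum_le_sum_abs _ _).trans <| Finset.sum_le_sum fun k hk =>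
          abs_leibniz_term_le hG hθ hW hg (Finset.mem_range_succ_iff.1 hk) (hy _ (Nat.sub_le _ _))
    _ ≤ B * W n * 2 := by
        rw [← Finset.mul_sum]
        gcongr
        exact sum_pow_le_two hθ hθ' _
    _ = 2 * B * W n := by ring

theorem abs_iteratedDeriv_mul_sub_le (hgn : ContDiffAt ℝ n g x) (hyn : ContDiffAt ℝ n y x)
    (hG : 0 ≤ G) (hθ : 0 ≤ θ) (hθ' : θ ≤ 1 / 2) (hWn : 0 ≤ W n)
    (hW : ∀ k < n, (k + 1) * G * W k ≤ θ * W (k + 1))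
    (hg : ∀ k, |iteratedDeriv k g x| ≤ B * k.factorial * G ^ k)
    (hy : ∀ k < n, |iteratedDeriv k y x| ≤ W k) :
    |iteratedDeriv n (fun t => g t * y t) x - g x * iteratedDeriv n y x| ≤ 2 * B * θ * W n := by
  have hB : 0 ≤ B := by simpa using (abs_nonneg _).trans (hg 0)
  rw [iteratedDeriv_fun_mul hgn hyn, Finset.sum_range_succ']
  simp only [Nat.choose_zero_right, Nat.cast_one, one_mul, iteratedDeriv_zero, Nat.sub_zero,
    add_sub_cancel_right]
  calc |∑ k ∈ Finset.range n,
        n.choose (k + 1) * iteratedDeriv (k + 1) g x * iteratedDeriv (n - (k + 1)) y x|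
      ≤ ∑ k ∈ Finset.range n, B * W n * θ ^ (k + 1) :=
        (Finset.abs_sum_le_sum_abs _ _).trans <| Finset.sum_le_sum fun k hk =>
          have hkn : k < n := Finset.mem_range.1 hk
          abs_leibniz_term_le hG hθ hW hg hkn (hy _ (by omega))
    _ = B * W n * θ * ∑ k ∈ Finset.range n, θ ^ k := by
        rw [Finset.mul_sum]
        exact Finset.sum_congr rfl fun k _ => by ring
    _ ≤ B * W n * θ * 2 := by
        gcongr
        exact sum_pow_le_two hθ hθ' n
    _ = 2 * B * θ * W n := by ring

end Leibniz

/-- `y` is smooth and satisfies the analytic derivative bounds `|y⁽ⁿ⁾| ≤ B n! Gⁿ` on `[0,1]`. -/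
def AnalyticBound (B G : ℝ) (y : ℝ → ℝ) : Prop :=
  ContDiff ℝ (⊤ : ℕ∞) y ∧
    ∀ n : ℕ, ∀ x ∈ Icc (0 : ℝ) 1, |iteratedDeriv n y x| ≤ B * n.factorial * G ^ n

theorem iteratedDeriv_eqOn_Icc {y z : ℝ → ℝ} {n : ℕ} (hy : ContDiff ℝ n y) (hz : ContDiff ℝ n z)
    {a c : ℝ} (hac : a < c) (h : EqOn y z (Icc a c)) :
    EqOn (iteratedDeriv n y) (iteratedDeriv n z) (Icc a c) := by
  intro x hx
  rw [← iteratedDerivWithin_eq_iteratedDeriv (uniqueDiffOn_Icc hac) hy.contDiffAt hx,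
    ← iteratedDerivWithin_eq_iteratedDeriv (uniqueDiffOn_Icc hac) hz.contDiffAt hx]
  exact iteratedDerivWithin_congr h hx

namespace AnalyticBound

variable {B B' G G' : ℝ} {y z : ℝ → ℝ}

theorem congr (hy : AnalyticBound B G y) (hz : ContDiff ℝ (⊤ : ℕ∞) z) (h : EqOn z y (Icc 0 1)) :
    AnalyticBound B G z :=
  ⟨hz, fun n x hx => by
    rw [iteratedDeriv_eqOn_Icc (contDiff_infty.1 hz n) (contDiff_infty.1 hy.1 n) zero_lt_one h hx]
    exact hy.2 n x hx⟩

theorem mono (hy : AnalyticBound B G y) (hB₀ : 0 ≤ B) (hG₀ : 0 ≤ G) (hB : B ≤ B') (hG : G ≤ G') :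
    AnalyticBound B' G' y :=
  ⟨hy.1, fun n x hx => (hy.2 n x hx).trans (by have := hB₀.trans hB; gcongr)⟩

theorem add (hy : AnalyticBound B G y) (hz : AnalyticBound B' G z) :
    AnalyticBound (B + B') G (fun x => y x + z x) := by
  refine ⟨hy.1.add hz.1, fun n x hx => ?_⟩
  rw [iteratedDeriv_fun_add (contDiff_infty.1 hy.1 n).contDiffAt
    (contDiff_infty.1 hz.1 n).contDiffAt, add_mul, add_mul]
  exact (abs_add_le _ _).trans (add_le_add (hy.2 n x hx) (hz.2 n x hx))

theorem abs_le (hy : AnalyticBound B G y) {x : ℝ} (hx : x ∈ Icc (0 : ℝ) 1) : |y x| ≤ B := by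
  simpa using hy.2 0 x hx

theorem abs_deriv_le (hy : AnalyticBound B G y) {x : ℝ} (hx : x ∈ Icc (0 : ℝ) 1) :
    |deriv y x| ≤ B * G := by
  simpa using hy.2 1 x hx

theorem abs_iteratedDeriv_le_mul_pow (hy : AnalyticBound B G y) (hG₀ : 0 ≤ G) {K X : ℝ}
    (hGK : G ≤ K) {n : ℕ} (hn : (n : ℝ) ≤ X) {x : ℝ} (hx : x ∈ Icc (0 : ℝ) 1) :
    |iteratedDeriv n y x| ≤ B * (K * X) ^ n := by
  have hB : 0 ≤ B := (abs_nonneg _).trans (hy.abs_le hx)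
  have hfac : (n.factorial : ℝ) ≤ X ^ n :=
    le_trans (by exact_mod_cast Nat.factorial_le_pow n) (pow_le_pow_left₀ n.cast_nonneg hn n)
  have : 0 ≤ X := n.cast_nonneg.trans hn
  calc |iteratedDeriv n y x| ≤ B * n.factorial * G ^ n := hy.2 n x hx
    _ ≤ B * X ^ n * K ^ n := by gcongr
    _ = B * (K * X) ^ n := by rw [mul_pow]; ring

end AnalyticBound

theorem eps_mul_iteratedDeriv_add_two_eq {ε : ℝ} {b r f u : ℝ → ℝ} (hb : ContDiff ℝ (⊤ : ℕ∞) b)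
    (hr : ContDiff ℝ (⊤ : ℕ∞) r) (hf : ContDiff ℝ (⊤ : ℕ∞) f) (hu : ContDiff ℝ (⊤ : ℕ∞) u)
    (hLu : ∀ x ∈ Icc (0 : ℝ) 1, convDiffOp ε b r u x = f x) (n : ℕ) :
    ∀ x ∈ Icc (0 : ℝ) 1, ε * iteratedDeriv (n + 2) u x
      = iteratedDeriv n (fun t => b t * deriv u t) x + iteratedDeriv n (fun t => r t * u t) x
        - iteratedDeriv n f x := by
  intro x hx
  have hu' : ContDiff ℝ (⊤ : ℕ∞) (deriv u) := hu.iterate_deriv 1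
  have hu'' : ContDiff ℝ n (fun t => ε * deriv (deriv u) t) :=
    contDiff_const.mul (contDiff_infty.1 (hu.iterate_deriv 2) n)
  have hbu := contDiff_infty.1 (hb.mul hu') n
  have hru := contDiff_infty.1 (hr.mul hu) n
  have hfn := contDiff_infty.1 hf n
  have heq := iteratedDeriv_eqOn_Icc hu'' ((hbu.add hru).sub hfn) zero_lt_one
    (fun t ht => by simp only [← hLu t ht, convDiffOp]; ring) hx
  rwa [iteratedDeriv_const_mul_field,
    iteratedDeriv_fun_sub (hbu.add hru).contDiffAt hfn.contDiffAt,
    iteratedDeriv_fun_add hbu.contDiffAt hru.contDiffAt, ← iteratedDeriv_succ',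
    ← iteratedDeriv_succ'] at heq

section DerivativeBounds

variable {B G β C K X ε : ℝ} {b r f u : ℝ → ℝ}

theorem eps_mul_abs_iteratedDeriv_add_two_le (hε : 0 ≤ ε) (hG : 0 ≤ G) (hBC : B ≤ C)
    (hK : 1 ≤ K) (hGK : 2 * G ≤ K) (hX : 1 ≤ X) (hb : AnalyticBound B G b)
    (hr : AnalyticBound B G r) (hf : AnalyticBound B G f) (hu : ContDiff ℝ (⊤ : ℕ∞) u)
    (hLu : ∀ x ∈ Icc (0 : ℝ) 1, convDiffOp ε b r u x = f x) {n : ℕ} (hn : (n : ℝ) ≤ X) {x : ℝ}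
    (hx : x ∈ Icc (0 : ℝ) 1) (ih : ∀ k ≤ n + 1, |iteratedDeriv k u x| ≤ C * (K * X) ^ k) :
    ε * |iteratedDeriv (n + 2) u x| ≤ (4 * B + 1) * C * (K * X) ^ (n + 1) := by
  have hB : 0 ≤ B := (abs_nonneg _).trans (hb.abs_le hx)
  have hC : 0 ≤ C := hB.trans hBC
  have hKX : 1 ≤ K * X := one_le_mul_of_one_le_of_one_le hK hX
  have hu' : ContDiff ℝ (⊤ : ℕ∞) (deriv u) := hu.iterate_deriv 1
  have hgrowth : ∀ j k : ℕ, k < n →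
      (k + 1) * G * (C * (K * X) ^ (k + j)) ≤ 1 / 2 * (C * (K * X) ^ (k + 1 + j)) := by
    intro j k hk
    have hkX : (k + 1 : ℝ) ≤ X := hn.trans' (by exact_mod_cast hk)
    calc (k + 1) * G * (C * (K * X) ^ (k + j)) ≤ X * (K / 2) * (C * (K * X) ^ (k + j)) := by
          gcongr; linarith
      _ = 1 / 2 * (C * (K * X) ^ (k + 1 + j)) := by ring
  have hbu := abs_iteratedDeriv_mul_le (W := fun k => C * (K * X) ^ (k + 1))
    (contDiff_infty.1 hb.1 n).contDiffAt (contDiff_infty.1 hu' n).contDiffAt hG (by norm_num) le_rfl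
    (hgrowth 1) (fun k => hb.2 k x hx)
    (fun k hk => by rw [← iteratedDeriv_succ']; exact ih (k + 1) (by omega))
  have hru := abs_iteratedDeriv_mul_le (W := fun k => C * (K * X) ^ k)
    (contDiff_infty.1 hr.1 n).contDiffAt (contDiff_infty.1 hu n).contDiffAt hG (by norm_num) le_rfl
    (hgrowth 0) (fun k => hr.2 k x hx) (fun k hk => ih k (by omega))
  have hpow : (K * X) ^ n ≤ (K * X) ^ (n + 1) := pow_le_pow_right₀ hKX n.le_succ
  have hfn : |iteratedDeriv n f x| ≤ C * (K * X) ^ (n + 1) :=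
    (hf.abs_iteratedDeriv_le_mul_pow (K := K) hG (by linarith) hn hx).trans
      (mul_le_mul hBC hpow (by positivity) hC)
  have hru' : 2 * B * (C * (K * X) ^ n) ≤ 2 * B * (C * (K * X) ^ (n + 1)) := by gcongr
  rw [← abs_of_nonneg hε, ← abs_mul,
    eps_mul_iteratedDeriv_add_two_eq hb.1 hr.1 hf.1 hu hLu n x hx]
  linarith [abs_sub (iteratedDeriv n (fun t => b t * deriv u t) x
    + iteratedDeriv n (fun t => r t * u t) x) (iteratedDeriv n f x),
    abs_add_le (iteratedDeriv n (fun t => b t * deriv u t) x)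
      (iteratedDeriv n (fun t => r t * u t) x)]

theorem abs_iteratedDeriv_le_of_abs_le (hε : 0 < ε) (hε₁ : ε ≤ 1) (hG : 0 ≤ G) (hBC : B ≤ C)
    (hK : 1 + 2 * G + 4 * B ≤ K) (hb : AnalyticBound B G b) (hr : AnalyticBound B G r)
    (hf : AnalyticBound B G f) (hu : ContDiff ℝ (⊤ : ℕ∞) u)
    (hLu : ∀ x ∈ Icc (0 : ℝ) 1, convDiffOp ε b r u x = f x)
    (huC : ∀ x ∈ Icc (0 : ℝ) 1, |u x| ≤ C) (huC' : ∀ x ∈ Icc (0 : ℝ) 1, ε * |deriv u x| ≤ C)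
    (hX : 1 / ε ≤ X) {x : ℝ} (hx : x ∈ Icc (0 : ℝ) 1) :
    ∀ n : ℕ, (n : ℝ) ≤ X → |iteratedDeriv n u x| ≤ C * (K * X) ^ n := by
  have hB : 0 ≤ B := (abs_nonneg _).trans (hb.abs_le hx)
  have hC : 0 ≤ C := hB.trans hBC
  have hX₁ : 1 ≤ X := ((one_le_div hε).2 hε₁).trans hX
  have hdiv : ∀ {s t : ℝ}, 0 ≤ t → ε * s ≤ t → s ≤ X * t := fun {s t} ht hst =>
    calc s ≤ t / ε := by rwa [le_div_iff₀' hε]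
      _ = 1 / ε * t := by ring
      _ ≤ X * t := by gcongr
  intro n
  induction n using Nat.strong_induction_on with
  | _ n ih =>
  intro hn
  match n, ih, hn with
  | 0, _, _ => simpa using huC x hx
  | 1, _, _ =>
    rw [iteratedDeriv_one, pow_one]
    calc |deriv u x| ≤ X * C := hdiv hC (huC' x hx)
      _ ≤ X * (K * C) := by gcongr; exact le_mul_of_one_le_left hC (by linarith)
      _ = C * (K * X) := by ring
  | n + 2, ih, hn =>
    push_cast at hn
    have hstep := eps_mul_abs_iteratedDeriv_add_two_le hε.le hG hBC (by linarith) (by linarith) hX₁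
      hb hr hf hu hLu (by linarith : (n : ℝ) ≤ X) hx
      (fun k hk => ih k (by omega) (hn.trans' (by exact_mod_cast (by omega : k ≤ n + 2))))
    have hKX : 0 ≤ K * X := by nlinarith
    calc |iteratedDeriv (n + 2) u x| ≤ X * ((4 * B + 1) * C * (K * X) ^ (n + 1)) :=
          hdiv (by positivity) hstep
      _ ≤ X * (K * C * (K * X) ^ (n + 1)) := by gcongr; linarith
      _ = C * (K * X) ^ (n + 2) := by ring

theorem exists_abs_iteratedDeriv_le (hG : 0 < G) (hβ : 0 < β) (hb : AnalyticBound B G b)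
    (hr : AnalyticBound B G r) (hf : AnalyticBound B G f) (hbβ : ∀ x ∈ Icc (0 : ℝ) 1, β ≤ b x)
    (hr₀ : ∀ x ∈ Icc (0 : ℝ) 1, 0 ≤ r x) :
    ∃ C K : ℝ, 0 < C ∧ 1 ≤ K ∧ ∀ ε : ℝ, 0 < ε → ε ≤ 1 → ∀ u : ℝ → ℝ, ContDiff ℝ (⊤ : ℕ∞) u →
      u 0 = 0 → u 1 = 0 → (∀ x ∈ Icc (0 : ℝ) 1, convDiffOp ε b r u x = f x) →
      ∀ X : ℝ, 1 / ε ≤ X → ∀ n : ℕ, (n : ℝ) ≤ X → ∀ x ∈ Icc (0 : ℝ) 1,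
        |iteratedDeriv n u x| ≤ C * (K * X) ^ n := by
  have hmem : (0 : ℝ) ∈ Icc (0 : ℝ) 1 := ⟨le_rfl, zero_le_one⟩
  have hB : 0 < B := hβ.trans_le ((hbβ 0 hmem).trans (le_of_abs_le (hb.abs_le hmem)))
  have hY : 0 < B / β := by positivity
  set B₁ := B * (1 + G) with hB₁
  have hBB₁ : B ≤ B₁ := le_mul_of_one_le_right hB.le (by linarith)
  have hBY : 0 < B₁ * (B / β) := by positivity
  refine ⟨2 * (B / β) + 4 * B₁ * (B / β) + B, 1 + 2 * G + 4 * B, by positivity, by linarith,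
    fun ε hε hε₁ u hu hu₀ hu₁ hLu X hX n hn x hx => ?_⟩
  have hres : ∀ t ∈ Icc (0 : ℝ) 1, |convDiffOp ε b r u t| ≤ B := fun t ht => by
    rw [hLu t ht]; exact hf.abs_le ht
  have huY := abs_le_div_of_abs_convDiffOp_le hε.le hβ (contDiff_infty.1 hu 2) hbβ hr₀ hu₀ hu₁ hres
  have hflux := eps_mul_abs_deriv_le hε.le zero_lt_one (hb.1.differentiable (by simp))
    (contDiff_infty.1 hu 2) (fun t ht => (hb.abs_le ht).trans hBB₁)
    (fun t ht => (hb.abs_deriv_le ht).trans (by rw [hB₁]; gcongr; linarith))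
    (fun t ht => (hr.abs_le ht).trans hBB₁) huY hres
  have hεY : ε * (B / β) ≤ B / β := mul_le_of_le_one_left hY.le hε₁
  refine abs_iteratedDeriv_le_of_abs_le hε hε₁ hG.le (by linarith) le_rfl hb hr hf hu hLu
    (fun t ht => (huY t ht).trans (by linarith)) (fun t ht => (hflux t ht).trans ?_) hX hx n hn
  simp only [sub_zero, div_one, one_mul]
  linarith

end DerivativeBounds

/-! ### The reduced transport problem -/

theorem exists_contDiff_pos_eqOn {b : ℝ → ℝ} (hb : ContDiff ℝ (⊤ : ℕ∞) b) {β : ℝ} (hβ : 0 < β)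
    {s : Set ℝ} (hbβ : ∀ x ∈ s, β ≤ b x) :
    ∃ c : ℝ → ℝ, ContDiff ℝ (⊤ : ℕ∞) c ∧ (∀ x, 0 < c x) ∧ EqOn c b s := by
  set T : ℝ → ℝ := fun x => Real.smoothTransition ((b x - β / 2) / (β / 2))
  have hTs : ContDiff ℝ (⊤ : ℕ∞) T :=
    Real.smoothTransition.contDiff.comp ((hb.sub contDiff_const).div_const _)
  refine ⟨fun x => β / 2 * (1 - T x) + b x * T x,
    (contDiff_const.mul (contDiff_const.sub hTs)).add (hb.mul hTs), fun x => ?_, fun x hx => ?_⟩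
  · have hT₀ : 0 ≤ T x := Real.smoothTransition.nonneg _
    have : T x ≤ 1 := Real.smoothTransition.le_one _
    rcases le_or_gt (b x) (β / 2) with h | h
    · have hTx : T x = 0 := Real.smoothTransition.zero_of_nonpos
        (div_nonpos_of_nonpos_of_nonneg (by linarith) (by linarith))
      simp only [hTx]
      linarith
    · nlinarith
  · have hTx : T x = 1 := Real.smoothTransition.one_of_one_le
      ((one_le_div (by linarith)).2 (by linarith [hbβ x hx]))
    simp [hTx]

theorem contDiff_integral {g : ℝ → ℝ} (hg : ContDiff ℝ (⊤ : ℕ∞) g) :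
    ContDiff ℝ (⊤ : ℕ∞) (fun x => ∫ t in (0 : ℝ)..x, g t) := by
  have hderiv : ∀ x, HasDerivAt (fun x => ∫ t in (0 : ℝ)..x, g t) (g x) x := fun x =>
    (hg.continuous.integral_hasStrictDerivAt 0 x).hasDerivAt
  refine contDiff_infty_iff_deriv.2 ⟨fun x => (hderiv x).differentiableAt, ?_⟩
  rwa [funext fun x => (hderiv x).deriv]

theorem AnalyticBound.integral {B G : ℝ} {f : ℝ → ℝ} (hG : 1 ≤ G) (hf : AnalyticBound B G f) :
    AnalyticBound B G (fun x => ∫ t in (0 : ℝ)..x, f t) := by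
  refine ⟨contDiff_integral hf.1, fun n x hx => ?_⟩
  have hB : 0 ≤ B := (abs_nonneg _).trans (hf.abs_le hx)
  cases n with
  | zero =>
    have hint := intervalIntegral.norm_integral_le_of_norm_le_const (a := 0) (b := x) (f := f)
      (C := B) fun t ht => by
        rw [uIoc_of_le hx.1] at ht
        exact hf.abs_le ⟨ht.1.le, ht.2.trans hx.2⟩
    rw [sub_zero, abs_of_nonneg hx.1] at hint
    simpa using hint.trans (mul_le_of_le_one_right hB hx.2)
  | succ n =>
    rw [iteratedDeriv_succ', funext fun x => hf.1.continuous.deriv_integral f 0 x]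
    refine (hf.2 n x hx).trans ?_
    gcongr <;> omega

/-- The solution of the transport problem `b w' + r w = g`, `w 0 = 0` that arises for `ε = 0`. -/
def transportSolution (b r g : ℝ → ℝ) (x : ℝ) : ℝ :=
  Real.exp (-∫ t in (0 : ℝ)..x, r t / b t) *
    ∫ t in (0 : ℝ)..x, Real.exp (∫ s in (0 : ℝ)..t, r s / b s) * (g t / b t)

section TransportSolution

variable {b r g : ℝ → ℝ}

theorem transportSolution_zero : transportSolution b r g 0 = 0 := by
  simp [transportSolution]

theorem contDiff_transportSolution (hb : ContDiff ℝ (⊤ : ℕ∞) b) (hb₀ : ∀ x, b x ≠ 0)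
    (hr : ContDiff ℝ (⊤ : ℕ∞) r) (hg : ContDiff ℝ (⊤ : ℕ∞) g) :
    ContDiff ℝ (⊤ : ℕ∞) (transportSolution b r g) :=
  have hR := contDiff_integral (hr.div hb hb₀)
  hR.neg.exp.mul (contDiff_integral (hR.exp.mul (hg.div hb hb₀)))

theorem transport_transportSolution (hb : Continuous b) (hb₀ : ∀ x, b x ≠ 0) (hr : Continuous r)
    (hg : Continuous g) (x : ℝ) :
    b x * deriv (transportSolution b r g) x + r x * transportSolution b r g x = g x := by
  set R : ℝ → ℝ := fun x => ∫ t in (0 : ℝ)..x, r t / b t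
  have hR : ∀ x, HasDerivAt R (r x / b x) x := fun x =>
    ((hr.div hb hb₀).integral_hasStrictDerivAt 0 x).hasDerivAt
  have hRc : Continuous R := continuous_iff_continuousAt.2 fun x => (hR x).continuousAt
  have hI := ((hRc.rexp.mul (hg.div hb hb₀)).integral_hasStrictDerivAt 0 x).hasDerivAt
  have hw : HasDerivAt (transportSolution b r g) _ x := (hR x).neg.exp.mul hI
  have hinv : Real.exp (-R x) * Real.exp (R x) = 1 := by rw [← Real.exp_add]; simp
  have := hb₀ x
  rw [hw.deriv, transportSolution]
  simp only [Pi.neg_apply, Pi.mul_apply, Pi.div_apply]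
  field_simp
  linear_combination g x * hinv

end TransportSolution

section TransportBounds

variable {b r w P : ℝ → ℝ} {β B D G H K M Q Λ : ℝ}

/-- Gronwall for the flux `b w - P`, whose derivative `(b' - r) w` does not involve `P'`. -/
theorem abs_flux_sub_le_of_transport (hβ : 0 < β) (hM : 0 < M) (hb : Differentiable ℝ b)
    (hw : Differentiable ℝ w) (hP : Differentiable ℝ P) (hw₀ : w 0 = 0)
    (heq : ∀ x, b x * deriv w x + r x * w x = deriv P x)
    (hbβ : ∀ x ∈ Icc (0 : ℝ) 1, β ≤ b x) (hbr : ∀ x ∈ Icc (0 : ℝ) 1, |deriv b x - r x| ≤ M)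
    (hPQ : ∀ x ∈ Icc (0 : ℝ) 1, |P x| ≤ Q) {x : ℝ} (hx : x ∈ Icc (0 : ℝ) 1) :
    |b x * w x - P x| ≤ 2 * Q * Real.exp (M / β) := by
  have hL : 0 < M / β := div_pos hM hβ
  have hQ : 0 ≤ Q := (abs_nonneg _).trans (hPQ x hx)
  have hderiv : ∀ t, HasDerivAt (fun t => b t * w t - P t) ((deriv b t - r t) * w t) t := fun t =>
    (((hb t).hasDerivAt.mul (hw t).hasDerivAt).sub (hP t).hasDerivAt).congr_deriv
      (by linear_combination heq t)
  have hw_le : ∀ t ∈ Icc (0 : ℝ) 1, |w t| ≤ (|b t * w t - P t| + Q) / β := fun t ht => by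
    rw [le_div_iff₀' hβ]
    calc β * |w t| ≤ |b t * w t| := by
          rw [abs_mul]; gcongr; exact (hbβ t ht).trans (le_abs_self _)
      _ = |b t * w t - P t + P t| := by rw [sub_add_cancel]
      _ ≤ |b t * w t - P t| + Q := (abs_add_le _ _).trans (by gcongr; exact hPQ t ht)
  have hgronwall := norm_le_gronwallBound_of_norm_deriv_right_le (δ := Q) (K := M / β)
    (ε := M / β * Q) (continuous_iff_continuousAt.2 fun t => (hderiv t).continuousAt).continuousOn
    (fun t _ => (hderiv t).hasDerivWithinAt)
    (by simpa [hw₀] using hPQ 0 ⟨le_rfl, zero_le_one⟩)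
    (fun t ht => by
      have ht' : t ∈ Icc (0 : ℝ) 1 := ⟨ht.1, ht.2.le⟩
      rw [Real.norm_eq_abs, Real.norm_eq_abs, abs_mul]
      calc |deriv b t - r t| * |w t| ≤ M * ((|b t * w t - P t| + Q) / β) := by
            gcongr; exacts [hbr t ht', hw_le t ht']
        _ = M / β * |b t * w t - P t| + M / β * Q := by ring) x hx
  rw [gronwallBound_of_K_ne_0 hL.ne', mul_div_cancel_left₀ _ hL.ne', sub_zero,
    Real.norm_eq_abs] at hgronwall
  have hexp : Real.exp (M / β * x) ≤ Real.exp (M / β) :=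
    Real.exp_le_exp.2 (mul_le_of_le_one_right hL.le hx.2)
  linarith [mul_le_mul_of_nonneg_left hexp hQ]

theorem mul_abs_le_of_transport (hβ : 0 < β) (hM : 0 < M) (hb : Differentiable ℝ b)
    (hw : Differentiable ℝ w) (hP : Differentiable ℝ P) (hw₀ : w 0 = 0)
    (heq : ∀ x, b x * deriv w x + r x * w x = deriv P x)
    (hbβ : ∀ x ∈ Icc (0 : ℝ) 1, β ≤ b x) (hbr : ∀ x ∈ Icc (0 : ℝ) 1, |deriv b x - r x| ≤ M)
    (hPQ : ∀ x ∈ Icc (0 : ℝ) 1, |P x| ≤ Q) {x : ℝ} (hx : x ∈ Icc (0 : ℝ) 1) :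
    β * |w x| ≤ (2 * Real.exp (M / β) + 1) * Q := by
  have hflux := abs_flux_sub_le_of_transport hβ hM hb hw hP hw₀ heq hbβ hbr hPQ hx
  calc β * |w x| ≤ |b x * w x| := by
        rw [abs_mul]; gcongr; exact (hbβ x hx).trans (le_abs_self _)
    _ = |b x * w x - P x + P x| := by rw [sub_add_cancel]
    _ ≤ (2 * Real.exp (M / β) + 1) * Q := by
        linarith [abs_add_le (b x * w x - P x) (P x), hPQ x hx]

theorem succ_mul_factorial_weight_le (hG : 0 ≤ G) (hK : 0 < K) (hD : 0 ≤ D) (m j k : ℕ) :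
    (k + 1) * G * (D * K ^ (k + j) * (k + j + m).factorial)
      ≤ G / K * (D * K ^ (k + 1 + j) * (k + 1 + j + m).factorial) := by
  rw [show k + 1 + j + m = k + j + m + 1 by ring, show k + 1 + j = k + j + 1 by ring,
    Nat.factorial_succ, pow_succ]
  push_cast
  calc (k + 1) * G * (D * K ^ (k + j) * (k + j + m).factorial)
      ≤ (k + j + m + 1) * G * (D * K ^ (k + j) * (k + j + m).factorial) := by
        gcongr; linarith [(j.cast_nonneg : (0 : ℝ) ≤ j), (m.cast_nonneg : (0 : ℝ) ≤ m)]
    _ = _ := by field_simp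

theorem mul_abs_iteratedDeriv_succ_le_of_transport (hG : 0 ≤ G) (hK : 0 < K) (hGK : 2 * G ≤ K)
    (hD : 0 ≤ D) (hb : AnalyticBound B G b) (hr : AnalyticBound B G r)
    (hw : ContDiff ℝ (⊤ : ℕ∞) w) (heq : ∀ x, b x * deriv w x + r x * w x = deriv P x)
    {n m : ℕ} {x : ℝ} (hx : x ∈ Icc (0 : ℝ) 1) (hbβ : β ≤ b x)
    (ih : ∀ k ≤ n, |iteratedDeriv k w x| ≤ D * K ^ k * (k + m).factorial) :
    β * |iteratedDeriv (n + 1) w x| ≤ |iteratedDeriv (n + 1) P x|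
      + 2 * B * (G + 1) / K * (D * K ^ (n + 1) * (n + 1 + m).factorial) := by
  have hB : 0 ≤ B := (abs_nonneg _).trans (hb.abs_le hx)
  have hbn := contDiff_infty.1 hb.1 n
  have hrn := contDiff_infty.1 hr.1 n
  have hwn := contDiff_infty.1 hw n
  have hw'n : ContDiff ℝ n (deriv w) := contDiff_infty.1 (hw.iterate_deriv 1) n
  have hθ : 0 ≤ G / K := div_nonneg hG hK.le
  have hθ' : G / K ≤ 1 / 2 := by rw [div_le_div_iff₀ hK two_pos]; linarith
  have hbw := abs_iteratedDeriv_mul_sub_le (W := fun k => D * K ^ (k + 1) * (k + 1 + m).factorial)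
    hbn.contDiffAt hw'n.contDiffAt hG hθ hθ' (by positivity)
    (fun k _ => succ_mul_factorial_weight_le hG hK hD m 1 k) (fun k => hb.2 k x hx)
    (fun k hk => by rw [← iteratedDeriv_succ']; exact ih (k + 1) hk)
  have hrw := abs_iteratedDeriv_mul_le (W := fun k => D * K ^ k * (k + m).factorial)
    hrn.contDiffAt hwn.contDiffAt hG hθ hθ'
    (fun k _ => succ_mul_factorial_weight_le hG hK hD m 0 k) (fun k => hr.2 k x hx) ih
  have hrw' : D * K ^ n * (n + m).factorial
      ≤ D * K ^ (n + 1) * (n + 1 + m).factorial / K := by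
    rw [le_div_iff₀ hK, mul_right_comm, mul_assoc D, ← pow_succ]
    gcongr
    omega
  have hsum : iteratedDeriv n (fun t => b t * deriv w t) x + iteratedDeriv n (fun t => r t * w t) x
      = iteratedDeriv (n + 1) P x := by
    rw [iteratedDeriv_succ', ← funext heq,
      iteratedDeriv_fun_add (hbn.mul hw'n).contDiffAt (hrn.mul hwn).contDiffAt]
  rw [← iteratedDeriv_succ'] at hbw
  set X := iteratedDeriv n (fun t => b t * deriv w t) x
  set Y := iteratedDeriv n (fun t => r t * w t) x
  set Z := iteratedDeriv (n + 1) w x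
  calc β * |Z| ≤ |b x * Z| := by
        rw [abs_mul]; gcongr; exact hbβ.trans (le_abs_self _)
    _ = |iteratedDeriv (n + 1) P x - (X - b x * Z) - Y| := by
        rw [← hsum]; congr 1; ring
    _ ≤ |iteratedDeriv (n + 1) P x| + |X - b x * Z| + |Y| :=
        (abs_sub _ _).trans (by gcongr; exact abs_sub _ _)
    _ ≤ |iteratedDeriv (n + 1) P x|
          + 2 * B * (G / K) * (D * K ^ (n + 1) * (n + 1 + m).factorial)
          + 2 * B * (D * K ^ (n + 1) * (n + 1 + m).factorial / K) := by
        gcongr; exact hrw.trans (by gcongr)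
    _ = _ := by ring

theorem abs_iteratedDeriv_le_of_transport (hG : 0 ≤ G) (hβ : 0 < β) (hK : 0 < K) (hGK : 2 * G ≤ K)
    (hK' : 4 * B * (G + 1) ≤ K * β) (hΛ : 2 * Real.exp (B * (G + 1) / β) + 1 ≤ β * Λ) (hB : 0 < B)
    (hb : AnalyticBound B G b) (hr : AnalyticBound B G r) (hw : ContDiff ℝ (⊤ : ℕ∞) w)
    (hP : Differentiable ℝ P) (hw₀ : w 0 = 0)
    (heq : ∀ x, b x * deriv w x + r x * w x = deriv P x)
    (hbβ : ∀ x ∈ Icc (0 : ℝ) 1, β ≤ b x) {m : ℕ}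
    (hPH : ∀ n : ℕ, ∀ x ∈ Icc (0 : ℝ) 1, |iteratedDeriv n P x| ≤ H * K ^ n * (n + m).factorial)
    {x : ℝ} (hx : x ∈ Icc (0 : ℝ) 1) (n : ℕ) :
    |iteratedDeriv n w x| ≤ Λ * H * K ^ n * (n + m).factorial := by
  have hfac : (0 : ℝ) < m.factorial := by positivity
  have hH : 0 ≤ H := nonneg_of_mul_nonneg_left
    (by simpa using (abs_nonneg _).trans (hPH 0 x hx)) hfac
  have hβΛ : 2 ≤ β * Λ := by linarith [Real.one_le_exp (show 0 ≤ B * (G + 1) / β by positivity)]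
  have hΛ₀ : 0 ≤ Λ := by nlinarith
  induction n using Nat.strong_induction_on with
  | _ n ih =>
  refine le_of_mul_le_mul_left ?_ hβ
  match n, ih with
  | 0, _ =>
    have hbr : ∀ t ∈ Icc (0 : ℝ) 1, |deriv b t - r t| ≤ B * (G + 1) := fun t ht =>
      (abs_sub _ _).trans (by linarith [hb.abs_deriv_le ht, hr.abs_le ht])
    have hbase := mul_abs_le_of_transport hβ (by positivity) (hb.1.differentiable (by simp))
      (hw.differentiable (by simp)) hP hw₀ heq hbβ hbr (fun t ht => by simpa using hPH 0 t ht) hx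
    calc β * |w x| ≤ β * Λ * (H * m.factorial) := hbase.trans (by gcongr)
      _ = β * (Λ * H * K ^ 0 * (0 + m).factorial) := by rw [zero_add]; ring
  | n + 1, ih =>
    have hratio : 2 * B * (G + 1) / K ≤ β / 2 := by
      rw [div_le_div_iff₀ hK two_pos]; linarith
    set E := H * K ^ (n + 1) * ((n + 1 + m).factorial : ℝ) with hE
    have hE₀ : 0 ≤ E := by positivity
    calc β * |iteratedDeriv (n + 1) w x|
        ≤ E + 2 * B * (G + 1) / K * (Λ * H * K ^ (n + 1) * (n + 1 + m).factorial) :=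
          (mul_abs_iteratedDeriv_succ_le_of_transport hG hK hGK (by positivity) hb hr hw heq hx
            (hbβ x hx) fun k hk => ih k (by omega)).trans (by gcongr; exact hPH (n + 1) x hx)
      _ = E + 2 * B * (G + 1) / K * (Λ * E) := by rw [hE]; ring
      _ ≤ E + β / 2 * (Λ * E) := by gcongr
      _ ≤ β * (Λ * E) := by nlinarith
      _ = _ := by rw [hE]; ring

end TransportBounds

/-! ### The outer expansion -/

/-- The coefficients `w_j` of the outer expansion `∑ εʲ w_j`, obtained by equating powers of `ε`
in `-ε w'' + b w' + r w = f`: each one solves a transport problem driven by the second derivative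
of its predecessor. -/
def outerTerm (b r f : ℝ → ℝ) : ℕ → ℝ → ℝ
  | 0 => transportSolution b r f
  | j + 1 => transportSolution b r (deriv (deriv (outerTerm b r f j)))

/-- The outer expansion truncated after the term of order `ε ^ M`. -/
def outerExpansion (ε : ℝ) (b r f : ℝ → ℝ) (M : ℕ) (x : ℝ) : ℝ :=
  ∑ j ∈ Finset.range (M + 1), ε ^ j * outerTerm b r f j x

section OuterExpansion

variable {ε β A B C G K Λ : ℝ} {b r f : ℝ → ℝ}

theorem outerTerm_zero_right (j : ℕ) : outerTerm b r f j 0 = 0 := by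
  cases j <;> exact transportSolution_zero

theorem contDiff_outerTerm (hb : ContDiff ℝ (⊤ : ℕ∞) b) (hb₀ : ∀ x, b x ≠ 0)
    (hr : ContDiff ℝ (⊤ : ℕ∞) r) (hf : ContDiff ℝ (⊤ : ℕ∞) f) (j : ℕ) :
    ContDiff ℝ (⊤ : ℕ∞) (outerTerm b r f j) := by
  induction j with
  | zero => exact contDiff_transportSolution hb hb₀ hr hf
  | succ j ih => exact contDiff_transportSolution hb hb₀ hr (ih.iterate_deriv 2)

theorem contDiff_outerExpansion (hb : ContDiff ℝ (⊤ : ℕ∞) b) (hb₀ : ∀ x, b x ≠ 0)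
    (hr : ContDiff ℝ (⊤ : ℕ∞) r) (hf : ContDiff ℝ (⊤ : ℕ∞) f) (M : ℕ) :
    ContDiff ℝ (⊤ : ℕ∞) (outerExpansion ε b r f M) :=
  ContDiff.sum fun j _ => contDiff_const.mul (contDiff_outerTerm hb hb₀ hr hf j)

theorem abs_iteratedDeriv_outerTerm_le (hβ : 0 < β) (hB : 0 < B) (hG : 0 ≤ G) (hK : 1 ≤ K)
    (hGK : 2 * G ≤ K) (hK' : 4 * B * (G + 1) ≤ K * β)
    (hΛ : 2 * Real.exp (B * (G + 1) / β) + 1 ≤ β * Λ) (hb : AnalyticBound B G b)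
    (hb₀ : ∀ x, b x ≠ 0) (hr : AnalyticBound B G r) (hf : AnalyticBound B G f)
    (hbβ : ∀ x ∈ Icc (0 : ℝ) 1, β ≤ b x) (j n : ℕ) {x : ℝ} (hx : x ∈ Icc (0 : ℝ) 1) :
    |iteratedDeriv n (outerTerm b r f j) x|
      ≤ Λ * B * (Λ * K) ^ j * K ^ n * (n + j).factorial := by
  have hw := contDiff_outerTerm hb.1 hb₀ hr.1 hf.1
  have hK₀ : 0 < K := by linarith
  induction j generalizing n x with
  | zero =>
    have hF : AnalyticBound B K (fun x => ∫ t in (0 : ℝ)..x, f t) :=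
      (hf.mono hB.le hG le_rfl (by linarith)).integral hK
    simpa using abs_iteratedDeriv_le_of_transport (m := 0) (H := B) hG hβ hK₀ hGK hK' hΛ hB hb hr
      (hw 0) (hF.1.differentiable (by simp)) (outerTerm_zero_right 0)
      (fun t => by
        rw [hf.1.continuous.deriv_integral]
        exact transport_transportSolution hb.1.continuous hb₀ hr.1.continuous hf.1.continuous t)
      hbβ (fun n t ht => (hF.2 n t ht).trans_eq (by rw [add_zero]; ring)) hx n
  | succ j ih =>
    have hw' : ContDiff ℝ (⊤ : ℕ∞) (deriv (outerTerm b r f j)) := (hw j).iterate_deriv 1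
    have hw'' : ContDiff ℝ (⊤ : ℕ∞) (deriv (deriv (outerTerm b r f j))) := (hw j).iterate_deriv 2
    refine (abs_iteratedDeriv_le_of_transport (m := j + 1) (H := Λ * B * (Λ * K) ^ j * K)
      hG hβ hK₀ hGK hK' hΛ hB hb hr (hw (j + 1)) (hw'.differentiable (by simp))
      (outerTerm_zero_right (j + 1)) (transport_transportSolution hb.1.continuous hb₀
        hr.1.continuous hw''.continuous) hbβ (fun n t ht => ?_) hx n).trans_eq (by ring)
    rw [← iteratedDeriv_succ']
    exact (ih (n + 1) ht).trans_eq (by rw [show n + 1 + j = n + (j + 1) by ring]; ring)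

theorem sum_pow_mul_factorial_le {x : ℝ} {M : ℕ} (hx : 0 ≤ x) (hM : 4 * M * x ≤ 1) :
    ∑ j ∈ Finset.range (M + 1), (2 * x) ^ j * j.factorial ≤ 2 := by
  refine (Finset.sum_le_sum fun j hj => ?_).trans (sum_geometric_two_le (M + 1))
  have hfac : (j.factorial : ℝ) ≤ (M : ℝ) ^ j := by
    exact_mod_cast (Nat.factorial_le_pow j).trans
      (Nat.pow_le_pow_left (Finset.mem_range_succ_iff.1 hj) j)
  calc (2 * x) ^ j * (j.factorial : ℝ) ≤ (2 * x) ^ j * (M : ℝ) ^ j := by gcongr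
    _ = (2 * M * x) ^ j := by rw [← mul_pow]; ring
    _ ≤ (1 / 2) ^ j := by gcongr; linarith

theorem pow_mul_factorial_add_two_le {x : ℝ} {M : ℕ} (hx : 0 ≤ x) (hM : 8 * M * x ≤ 1) :
    x ^ M * ((M + 2).factorial : ℝ) ≤ 2 * (1 / 2) ^ M := by
  have hfac : ((M + 2).factorial : ℝ) ≤ 2 * 4 ^ M * (M : ℝ) ^ M := by
    have h₁ : M + 1 ≤ 2 ^ M := Nat.lt_two_pow_self
    have h₂ : M + 2 ≤ 2 * 2 ^ M := by omega
    have h₃ : (M + 2).factorial ≤ 2 * 2 ^ M * (2 ^ M * M ^ M) :=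
      Nat.mul_le_mul h₂ (Nat.mul_le_mul h₁ (Nat.factorial_le_pow M))
    have h₄ : ((M + 2).factorial : ℝ) ≤ 2 * 2 ^ M * (2 ^ M * M ^ M) := by exact_mod_cast h₃
    refine h₄.trans_eq ?_
    rw [show (4 : ℝ) = 2 * 2 by norm_num, mul_pow]
    ring
  calc x ^ M * ((M + 2).factorial : ℝ) ≤ x ^ M * (2 * 4 ^ M * (M : ℝ) ^ M) := by gcongr
    _ = 2 * (4 * M * x) ^ M := by rw [mul_pow, mul_pow]; ring
    _ ≤ 2 * (1 / 2) ^ M := by gcongr; linarith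

theorem one_half_pow_floor_le (X : ℝ) :
    (1 / 2 : ℝ) ^ ⌊X⌋₊ ≤ 2 * Real.exp (-(Real.log 2 * X)) := by
  have hlog : 0 < Real.log 2 := Real.log_pos one_lt_two
  calc (1 / 2 : ℝ) ^ ⌊X⌋₊ = Real.exp (-(⌊X⌋₊ * Real.log 2)) := by
        rw [Real.exp_neg, Real.exp_nat_mul, Real.exp_log two_pos, one_div, inv_pow]
    _ ≤ Real.exp (Real.log 2 + -(Real.log 2 * X)) :=
        Real.exp_le_exp.2 (by nlinarith [Nat.lt_floor_add_one X])
    _ = 2 * Real.exp (-(Real.log 2 * X)) := by rw [Real.exp_add, Real.exp_log two_pos]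

theorem analyticBound_outerExpansion (hε : 0 ≤ ε) (hA : 0 ≤ A) (hC : 0 ≤ C) (hK : 0 ≤ K)
    (hb : ContDiff ℝ (⊤ : ℕ∞) b) (hb₀ : ∀ x, b x ≠ 0) (hr : ContDiff ℝ (⊤ : ℕ∞) r)
    (hf : ContDiff ℝ (⊤ : ℕ∞) f)
    (hw : ∀ j n : ℕ, ∀ x ∈ Icc (0 : ℝ) 1,
      |iteratedDeriv n (outerTerm b r f j) x| ≤ C * A ^ j * K ^ n * (n + j).factorial)
    {M : ℕ} (hM : 4 * M * (ε * A) ≤ 1) :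
    AnalyticBound (2 * C) (2 * K) (outerExpansion ε b r f M) := by
  refine ⟨contDiff_outerExpansion hb hb₀ hr hf M, fun n x hx => ?_⟩
  have hterm : ∀ j ∈ Finset.range (M + 1), |ε ^ j * iteratedDeriv n (outerTerm b r f j) x| ≤
      C * n.factorial * (2 * K) ^ n * ((2 * (ε * A)) ^ j * j.factorial) := fun j _ => by
    have hfac : ((n + j).factorial : ℝ) ≤ 2 ^ (n + j) * (n.factorial * j.factorial) := by
      rw [← Nat.add_choose_mul_factorial_mul_factorial n j, mul_assoc]
      exact_mod_cast Nat.mul_le_mul_right _ (Nat.choose_le_two_pow (n + j) j)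
    rw [abs_mul, abs_of_nonneg (pow_nonneg hε j)]
    calc ε ^ j * |iteratedDeriv n (outerTerm b r f j) x|
        ≤ ε ^ j * (C * A ^ j * K ^ n * (2 ^ (n + j) * (n.factorial * j.factorial))) := by
          gcongr
          exact (hw j n x hx).trans (by gcongr)
      _ = _ := by rw [mul_pow, mul_pow, mul_pow, pow_add]; ring
  have hsum : iteratedDeriv n (outerExpansion ε b r f M) x
      = ∑ j ∈ Finset.range (M + 1), ε ^ j * iteratedDeriv n (outerTerm b r f j) x := by
    unfold outerExpansion
    rw [iteratedDeriv_fun_sum fun j _ => (contDiff_infty.1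
      (contDiff_const.mul (contDiff_outerTerm hb hb₀ hr hf j)) n).contDiffAt]
    simp only [iteratedDeriv_const_mul_field]
  calc |iteratedDeriv n (outerExpansion ε b r f M) x|
      ≤ C * n.factorial * (2 * K) ^ n
          * ∑ j ∈ Finset.range (M + 1), (2 * (ε * A)) ^ j * j.factorial := by
        rw [hsum, Finset.mul_sum]
        exact (Finset.abs_sum_le_sum_abs _ _).trans (Finset.sum_le_sum hterm)
    _ ≤ C * n.factorial * (2 * K) ^ n * 2 := by
        gcongr
        exact sum_pow_mul_factorial_le (by positivity) hM
    _ = 2 * C * n.factorial * (2 * K) ^ n := by ring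

/-- The residuals of consecutive terms telescope. -/
theorem convDiffOp_outerExpansion_sub (hb : ContDiff ℝ (⊤ : ℕ∞) b) (hb₀ : ∀ x, b x ≠ 0)
    (hr : ContDiff ℝ (⊤ : ℕ∞) r) (hf : ContDiff ℝ (⊤ : ℕ∞) f) (M : ℕ) (x : ℝ) :
    convDiffOp ε b r (outerExpansion ε b r f M) x - f x
      = -(ε ^ (M + 1) * deriv (deriv (outerTerm b r f M)) x) := by
  have hw := contDiff_outerTerm hb hb₀ hr hf
  induction M with
  | zero =>
    have hfun : outerExpansion ε b r f 0 = outerTerm b r f 0 := by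
      ext t; simp [outerExpansion]
    have heq := transport_transportSolution hb.continuous hb₀ hr.continuous hf.continuous x
    rw [hfun, convDiffOp, outerTerm]
    linear_combination heq
  | succ M ih =>
    have hfun : outerExpansion ε b r f (M + 1)
        = fun t => outerExpansion ε b r f M t + ε ^ (M + 1) * outerTerm b r f (M + 1) t := by
      ext t; exact Finset.sum_range_succ _ _
    have hw'' : ContDiff ℝ (⊤ : ℕ∞) (deriv (deriv (outerTerm b r f M))) := (hw M).iterate_deriv 2
    have heq : b x * deriv (outerTerm b r f (M + 1)) x + r x * outerTerm b r f (M + 1) x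
        = deriv (deriv (outerTerm b r f M)) x :=
      transport_transportSolution hb.continuous hb₀ hr.continuous hw''.continuous x
    rw [hfun, convDiffOp_add (contDiff_infty.1 (contDiff_outerExpansion hb hb₀ hr hf M) 2)
      (contDiff_const.mul (contDiff_infty.1 (hw (M + 1)) 2)), convDiffOp_const_mul]
    have hop : convDiffOp ε b r (outerTerm b r f (M + 1)) x
        = deriv (deriv (outerTerm b r f M)) x
          - ε * deriv (deriv (outerTerm b r f (M + 1))) x := by
      rw [convDiffOp]
      linear_combination heq
    linear_combination ih + ε ^ (M + 1) * hop

theorem abs_convDiffOp_outerExpansion_sub_le (hε : 0 ≤ ε) (hε₁ : ε ≤ 1) (hA : 0 ≤ A) (hC : 0 ≤ C)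
    (hb : ContDiff ℝ (⊤ : ℕ∞) b) (hb₀ : ∀ x, b x ≠ 0) (hr : ContDiff ℝ (⊤ : ℕ∞) r)
    (hf : ContDiff ℝ (⊤ : ℕ∞) f)
    (hw : ∀ j n : ℕ, ∀ x ∈ Icc (0 : ℝ) 1,
      |iteratedDeriv n (outerTerm b r f j) x| ≤ C * A ^ j * K ^ n * (n + j).factorial)
    {M : ℕ} (hM : 8 * M * (ε * A) ≤ 1) {x : ℝ} (hx : x ∈ Icc (0 : ℝ) 1) :
    |convDiffOp ε b r (outerExpansion ε b r f M) x - f x| ≤ 2 * C * K ^ 2 * (1 / 2) ^ M := by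
  have hw'' : |deriv (deriv (outerTerm b r f M)) x| ≤ C * A ^ M * K ^ 2 * (M + 2).factorial := by
    simpa only [iteratedDeriv_succ, iteratedDeriv_zero, add_comm 2 M] using hw M 2 x hx
  rw [convDiffOp_outerExpansion_sub hb hb₀ hr hf, abs_neg, abs_mul, abs_of_nonneg (by positivity)]
  calc ε ^ (M + 1) * |deriv (deriv (outerTerm b r f M)) x|
      ≤ ε ^ M * (C * A ^ M * K ^ 2 * (M + 2).factorial) := by
        gcongr ?_ * ?_
        exact pow_le_pow_of_le_one hε hε₁ M.le_succ
    _ = C * K ^ 2 * ((ε * A) ^ M * (M + 2).factorial) := by rw [mul_pow]; ring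
    _ ≤ C * K ^ 2 * (2 * (1 / 2) ^ M) := by
        gcongr C * K ^ 2 * ?_
        exact pow_mul_factorial_add_two_le (by positivity) hM
    _ = 2 * C * K ^ 2 * (1 / 2) ^ M := by ring

theorem exists_abs_iteratedDeriv_outerTerm_le (hG : 0 ≤ G) (hβ : 0 < β)
    (hb : AnalyticBound B G b) (hb₀ : ∀ x, b x ≠ 0) (hr : AnalyticBound B G r)
    (hf : AnalyticBound B G f) (hbβ : ∀ x ∈ Icc (0 : ℝ) 1, β ≤ b x) :
    ∃ A C K : ℝ, 0 < A ∧ 0 < C ∧ 1 ≤ K ∧ ∀ j n : ℕ, ∀ x ∈ Icc (0 : ℝ) 1,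
      |iteratedDeriv n (outerTerm b r f j) x| ≤ C * A ^ j * K ^ n * (n + j).factorial := by
  have hmem : (0 : ℝ) ∈ Icc (0 : ℝ) 1 := left_mem_Icc.2 zero_le_one
  have hB : 0 < B := hβ.trans_le ((hbβ 0 hmem).trans (le_of_abs_le (hb.abs_le hmem)))
  let Λ := (2 * Real.exp (B * (G + 1) / β) + 1) / β
  let K := 1 + 2 * G + 4 * B * (G + 1) / β
  have hq : 0 ≤ 4 * B * (G + 1) / β := by positivity
  have hK : 1 ≤ K := by linarith
  have hKβ : 4 * B * (G + 1) ≤ K * β := (div_le_iff₀ hβ).1 (by linarith)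
  have : 0 < Λ := by positivity
  exact ⟨Λ * K, Λ * B, K, by positivity, by positivity, hK, fun j n x hx =>
    abs_iteratedDeriv_outerTerm_le hβ hB hG hK (by linarith) hKβ (by simp only [Λ]; field_simp; rfl)
      hb hb₀ hr hf hbβ j n hx⟩

/-- Stopping the divergent outer expansion at `M ∼ 1 / ε` leaves an exponentially small residual. -/
theorem exists_analyticBound_abs_convDiffOp_sub_le (hG : 0 ≤ G) (hβ : 0 < β)
    (hb : AnalyticBound B G b) (hr : AnalyticBound B G r) (hf : AnalyticBound B G f)
    (hbβ : ∀ x ∈ Icc (0 : ℝ) 1, β ≤ b x) :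
    ∃ C K c : ℝ, 0 < C ∧ 1 ≤ K ∧ 0 < c ∧ ∀ ε : ℝ, 0 < ε → ε ≤ 1 → ∃ w : ℝ → ℝ, w 0 = 0 ∧
      AnalyticBound C K w ∧
      ∀ x ∈ Icc (0 : ℝ) 1, |convDiffOp ε b r w x - f x| ≤ C * Real.exp (-c / ε) := by
  obtain ⟨b', hb's, hb'₀, hbb'⟩ := exists_contDiff_pos_eqOn hb.1 hβ hbβ
  have hb'₀ (x : ℝ) : b' x ≠ 0 := (hb'₀ x).ne'
  obtain ⟨A, C, K, hA, hC, hK, hw⟩ := exists_abs_iteratedDeriv_outerTerm_le hG hβ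
    (hb.congr hb's hbb') hb'₀ hr hf fun x hx => (hbβ x hx).trans_eq (hbb' hx).symm
  have hK2 : 1 ≤ K ^ 2 := one_le_pow₀ hK
  refine ⟨4 * C * K ^ 2, 2 * K, Real.log 2 / (8 * A), by positivity, by linarith,
    div_pos (Real.log_pos one_lt_two) (by positivity), fun ε hε hε₁ => ?_⟩
  set M := ⌊1 / (8 * A * ε)⌋₊
  have hM : 8 * M * (ε * A) ≤ 1 := by
    have hfloor : (M : ℝ) ≤ 1 / (8 * A * ε) := Nat.floor_le (by positivity)
    rw [le_div_iff₀ (by positivity)] at hfloor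
    linarith
  have : 0 ≤ M * (ε * A) := by positivity
  refine ⟨outerExpansion ε b' r f M, by simp [outerExpansion, outerTerm_zero_right],
    (analyticBound_outerExpansion hε.le hA.le hC.le (by linarith) hb's hb'₀ hr.1 hf.1 hw
      (by linarith)).mono (by positivity) (by linarith) (by nlinarith) le_rfl, fun x hx => ?_⟩
  have hop : convDiffOp ε b r (outerExpansion ε b' r f M) x
      = convDiffOp ε b' r (outerExpansion ε b' r f M) x := by simp only [convDiffOp, hbb' hx]
  rw [hop]
  calc |convDiffOp ε b' r (outerExpansion ε b' r f M) x - f x|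
      ≤ 2 * C * K ^ 2 * (1 / 2) ^ M :=
        abs_convDiffOp_outerExpansion_sub_le hε.le hε₁ hA.le hC.le hb's hb'₀ hr.1 hf.1 hw hM hx
    _ ≤ 2 * C * K ^ 2 * (2 * Real.exp (-(Real.log 2 * (1 / (8 * A * ε))))) := by
        gcongr
        exact one_half_pow_floor_le _
    _ = 4 * C * K ^ 2 * Real.exp (-(Real.log 2 / (8 * A)) / ε) := by
        rw [show -(Real.log 2 / (8 * A)) / ε = -(Real.log 2 * (1 / (8 * A * ε))) by field_simp]
        ring

end OuterExpansion

/-! ### The boundary layer -/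

section Layer

variable {ε β B C G R : ℝ} {b r f y : ℝ → ℝ}

theorem convDiffOp_exp_nonneg (hε : 0 < ε) (hβ : 0 ≤ β) {x : ℝ} (hb : β ≤ b x) (hr : 0 ≤ r x) :
    0 ≤ convDiffOp ε b r (fun t => Real.exp (-(β * (1 - t)) / ε)) x := by
  have hderiv : ∀ t, HasDerivAt (fun t => Real.exp (-(β * (1 - t)) / ε))
      (β / ε * Real.exp (-(β * (1 - t)) / ε)) t := fun t => by
    have hlin : HasDerivAt (fun t : ℝ => -(β * (1 - t)) / ε) (β / ε) t := by
      simpa using ((((hasDerivAt_id t).const_sub 1).const_mul β).neg).div_const ε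
    exact hlin.exp.congr_deriv (mul_comm _ _)
  have hop : convDiffOp ε b r (fun t => Real.exp (-(β * (1 - t)) / ε)) x
      = (β / ε * (b x - β) + r x) * Real.exp (-(β * (1 - x)) / ε) := by
    rw [convDiffOp, funext fun t => (hderiv t).deriv, ((hderiv x).const_mul _).deriv]
    field_simp
    ring
  have : 0 ≤ b x - β := sub_nonneg.2 hb
  rw [hop]
  positivity

theorem abs_le_exp_add_of_abs_convDiffOp_le (hε : 0 < ε) (hβ : 0 < β) (hy : ContDiff ℝ 2 y)
    (hb : ∀ x ∈ Icc (0 : ℝ) 1, β ≤ b x) (hr : ∀ x ∈ Icc (0 : ℝ) 1, 0 ≤ r x) (h₀ : y 0 = 0)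
    (h₁ : |y 1| ≤ C) (hR : ∀ x ∈ Icc (0 : ℝ) 1, |convDiffOp ε b r y x| ≤ R) {x : ℝ}
    (hx : x ∈ Icc (0 : ℝ) 1) : |y x| ≤ C * Real.exp (-(β * (1 - x)) / ε) + R / β := by
  have hC : 0 ≤ C := (abs_nonneg _).trans h₁
  have hRβ : 0 ≤ R / β := div_nonneg ((abs_nonneg _).trans (hR x hx)) hβ.le
  have hexp : ContDiff ℝ 2 (fun t : ℝ => C * Real.exp (-(β * (1 - t)) / ε)) := by fun_prop
  have hlin : ContDiff ℝ 2 (fun t : ℝ => R / β * t) := by fun_prop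
  have hcompare := abs_le_of_abs_convDiffOp_le hε.le hβ hy (hexp.add hlin) le_rfl hb hr
    (by rw [h₀, abs_zero]; positivity) (by simpa using h₁.trans (le_add_of_nonneg_right hRβ))
    (fun t ht => (hR t ht).trans <| by
      have hbarrier := mul_nonneg hC (convDiffOp_exp_nonneg hε hβ.le (hb t ht) (hr t ht))
      have hslope := mul_le_convDiffOp_linear (ε := ε) hRβ ht.1 (hb t ht) (hr t ht)
      rw [div_mul_cancel₀ _ hβ.ne'] at hslope
      rw [convDiffOp_add hexp hlin, convDiffOp_const_mul]
      linarith) x hx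
  exact hcompare.trans (by gcongr; exact mul_le_of_le_one_right hRβ hx.2)

theorem exists_layer_decomposition (hG : 0 ≤ G) (hβ : 0 < β) (hb : AnalyticBound B G b)
    (hr : AnalyticBound B G r) (hf : AnalyticBound B G f) (hbβ : ∀ x ∈ Icc (0 : ℝ) 1, β ≤ b x)
    (hr₀ : ∀ x ∈ Icc (0 : ℝ) 1, 0 ≤ r x) :
    ∃ C K c : ℝ, 0 < C ∧ 1 ≤ K ∧ 0 < c ∧ ∀ ε : ℝ, 0 < ε → ε ≤ 1 → ∀ u : ℝ → ℝ,
      ContDiff ℝ (⊤ : ℕ∞) u → u 0 = 0 → u 1 = 0 →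
      (∀ x ∈ Icc (0 : ℝ) 1, convDiffOp ε b r u x = f x) → ∃ w : ℝ → ℝ, w 0 = 0 ∧
      AnalyticBound C K w ∧
      (∀ x ∈ Icc (0 : ℝ) 1, |convDiffOp ε b r w x - f x| ≤ C * Real.exp (-c / ε)) ∧
      ∀ x ∈ Icc (0 : ℝ) 1,
        |u x - w x| ≤ C * (Real.exp (-(β * (1 - x)) / ε) + Real.exp (-c / ε)) := by
  obtain ⟨C, K, c, hC, hK, hc, h⟩ := exists_analyticBound_abs_convDiffOp_sub_le hG hβ hb hr hf hbβ
  refine ⟨C * (1 + 1 / β), K, c, by positivity, hK, hc, fun ε hε hε₁ u hu hu₀ hu₁ hLu => ?_⟩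
  obtain ⟨w, hw₀, hw, hLw⟩ := h ε hε hε₁
  have hβ' : 0 < 1 / β := by positivity
  have hCC : C ≤ C * (1 + 1 / β) := le_mul_of_one_le_right hC.le (by linarith)
  have hu₂ := contDiff_infty.1 hu 2
  have hw₂ := contDiff_infty.1 hw.1 2
  refine ⟨w, hw₀, hw.mono hC.le (by linarith) hCC le_rfl, fun x hx => (hLw x hx).trans (by gcongr),
    fun x hx => ?_⟩
  calc |u x - w x|
      ≤ C * Real.exp (-(β * (1 - x)) / ε) + C * Real.exp (-c / ε) / β :=
        abs_le_exp_add_of_abs_convDiffOp_le hε hβ (hu₂.sub hw₂) hbβ hr₀ (by simp [hu₀, hw₀])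
          (by simpa [hu₁] using hw.abs_le ⟨zero_le_one, le_rfl⟩)
          (fun t ht => by
            rw [convDiffOp_sub hu₂ hw₂, hLu t ht, abs_sub_comm]; exact hLw t ht) hx
    _ = C * Real.exp (-(β * (1 - x)) / ε) + C * (1 / β) * Real.exp (-c / ε) := by ring
    _ ≤ C * (1 + 1 / β) * Real.exp (-(β * (1 - x)) / ε)
          + C * (1 + 1 / β) * Real.exp (-c / ε) := by gcongr; linarith
    _ = _ := by ring

end Layer

/-! ### Exponential approximation on the boundary layer mesh -/

theorem AnalyticBound.linear (k : ℝ) : AnalyticBound |k| 1 (fun x => k * x) := by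
  refine ⟨by fun_prop, fun n x hx => ?_⟩
  have hderiv : deriv (fun x : ℝ => k * x) = fun _ => k := by ext t; simp
  match n with
  | 0 =>
    simp only [iteratedDeriv_zero, Nat.factorial_zero, Nat.cast_one, pow_zero, mul_one, abs_mul,
      abs_of_nonneg hx.1]
    exact mul_le_of_le_one_right (abs_nonneg k) hx.2
  | 1 => simp
  | n + 2 =>
    rw [iteratedDeriv_succ', hderiv, iteratedDeriv_succ', deriv_const']
    simp only [iteratedDeriv_const, ite_self, abs_zero]
    positivity

section EnergyIdentity

variable {ε a c Y F : ℝ} {b r y : ℝ → ℝ}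

-- Integrates the exact derivative of `ε y' y - b y² / 2`, which is `ε y'² + (r - b'/2) y² - y Ly`.
theorem eps_mul_integral_sq_deriv_le (hac : a ≤ c) (hb : ContDiff ℝ 1 b) (hy : ContDiff ℝ 2 y)
    (ha : y a = 0) (hc : y c = 0) (hbr : ∀ x ∈ Icc a c, deriv b x / 2 ≤ r x)
    (hY : ∀ x ∈ Icc a c, |y x| ≤ Y) (hF : ∀ x ∈ Icc a c, |convDiffOp ε b r y x| ≤ F) :
    ε * ∫ x in a..c, deriv y x ^ 2 ≤ (c - a) * (Y * F) := by
  have hy' : ContDiff ℝ 1 (deriv y) := hy.deriv'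
  have : Continuous (deriv b) := hb.continuous_deriv le_rfl
  have : Continuous (deriv (deriv y)) := hy'.continuous_deriv le_rfl
  have hyc := hy.continuous
  have hy'c := hy'.continuous
  have hbc := hb.continuous
  have hΦ : ∀ x, HasDerivAt (fun x => ε * (deriv y x * y x) - b x * y x ^ 2 / 2)
      (ε * (deriv (deriv y) x * y x + deriv y x * deriv y x)
        - (deriv b x * y x ^ 2 + b x * (2 * y x * deriv y x)) / 2) x := fun x => by
    have hyx := (hy.differentiable (by simp) x).hasDerivAt
    have hy'x := (hy'.differentiable (by simp) x).hasDerivAt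
    have hbx := (hb.differentiable (by simp) x).hasDerivAt
    have hsq : HasDerivAt (fun x => y x ^ 2) (2 * y x * deriv y x) x := by
      simpa using hyx.fun_pow 2
    exact ((hy'x.mul hyx).const_mul ε).sub ((hbx.mul hsq).div_const 2)
  have hFTC := intervalIntegral.integral_eq_sub_of_hasDerivAt (a := a) (b := c)
    (fun x _ => hΦ x) (Continuous.intervalIntegrable (by fun_prop) _ _)
  simp only [ha, hc] at hFTC
  have hpointwise : ∀ x ∈ Icc a c, ε * deriv y x ^ 2 ≤
      (ε * (deriv (deriv y) x * y x + deriv y x * deriv y x)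
        - (deriv b x * y x ^ 2 + b x * (2 * y x * deriv y x)) / 2) + Y * F := fun x hx => by
    have hyL : |y x * convDiffOp ε b r y x| ≤ Y * F := by
      rw [abs_mul]
      exact mul_le_mul (hY x hx) (hF x hx) (abs_nonneg _) ((abs_nonneg _).trans (hY x hx))
    have hreaction : 0 ≤ (r x - deriv b x / 2) * y x ^ 2 :=
      mul_nonneg (sub_nonneg.2 (hbr x hx)) (sq_nonneg _)
    have hupper := le_of_abs_le hyL
    rw [convDiffOp] at hupper
    linarith
  have hle := intervalIntegral.integral_mono_on (μ := volume) hac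
    (Continuous.intervalIntegrable (by fun_prop) _ _)
    (Continuous.intervalIntegrable (by fun_prop) _ _) hpointwise
  rw [intervalIntegral.integral_add (Continuous.intervalIntegrable (by fun_prop) _ _)
    (by simp), hFTC, intervalIntegral.integral_const_mul] at hle
  simpa [mul_left_comm] using hle

end EnergyIdentity

/-- Data for the approximation of `u` on the cell `[a, c]`: a smooth function `s` that agrees with
`u` at the end points and solves the differential equation up to `δ`, and a polynomial `q` of degree
at most `p` that interpolates `s` at the end points; all errors are measured by `δ`, in the norms
that the error analysis of the Galerkin method needs. -/
structure CellApprox (ε : ℝ) (b r f u : ℝ → ℝ) (a c : ℝ) (p : ℕ) (δ : ℝ) (s : ℝ → ℝ)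
    (q : Polynomial ℝ) : Prop where
  smooth : ContDiff ℝ (⊤ : ℕ∞) s
  eq_left : s a = u a
  eq_right : s c = u c
  residual : ∀ x ∈ Icc a c, |convDiffOp ε b r s x - f x| ≤ δ
  near : ∀ x ∈ Icc a c, |u x - s x| ≤ δ
  near_deriv : ε * ∫ x in a..c, (deriv u x - deriv s x) ^ 2 ≤ δ ^ 2
  degree : q.natDegree ≤ p
  interp_left : q.eval a = s a
  interp_right : q.eval c = s c
  err : ∀ x ∈ Icc a c, |q.eval x - s x| ≤ δ
  err_deriv : ∀ x ∈ Icc a c, |q.derivative.eval x - deriv s x| ≤ δ / (c - a)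

theorem CellApprox.mono {ε a c δ δ' : ℝ} {p : ℕ} {b r f u s : ℝ → ℝ} {q : Polynomial ℝ}
    (h : CellApprox ε b r f u a c p δ s q) (hac : a ≤ c) (hδ : 0 ≤ δ) (hδδ' : δ ≤ δ') :
    CellApprox ε b r f u a c p δ' s q where
  __ := h
  residual x hx := (h.residual x hx).trans hδδ'
  near x hx := (h.near x hx).trans hδδ'
  near_deriv := h.near_deriv.trans (by gcongr)
  err x hx := (h.err x hx).trans hδδ'
  err_deriv x hx := (h.err_deriv x hx).trans (by gcongr)

theorem CellApprox.of_abs_sub_le {ε a c δ : ℝ} {p : ℕ} {b r f u s : ℝ → ℝ} {q : Polynomial ℝ}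
    (hac : a ≤ c) (hlen : c - a ≤ 1) (hb : ContDiff ℝ 1 b) (hu : ContDiff ℝ 2 u)
    (hs : ContDiff ℝ (⊤ : ℕ∞) s) (hbr : ∀ x ∈ Icc a c, deriv b x / 2 ≤ r x) (hsa : s a = u a)
    (hsc : s c = u c) (hLu : ∀ x ∈ Icc a c, convDiffOp ε b r u x = f x)
    (hLs : ∀ x ∈ Icc a c, |convDiffOp ε b r s x - f x| ≤ δ)
    (hus : ∀ x ∈ Icc a c, |u x - s x| ≤ δ) (hq : q.natDegree ≤ p) (hqa : q.eval a = s a)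
    (hqc : q.eval c = s c) (hqs : ∀ x ∈ Icc a c, |q.eval x - s x| ≤ δ)
    (hqs' : ∀ x ∈ Icc a c, |q.derivative.eval x - deriv s x| ≤ δ / (c - a)) :
    CellApprox ε b r f u a c p δ s q := by
  have hs₂ := contDiff_infty.1 hs 2
  have henergy := eps_mul_integral_sq_deriv_le (ε := ε) (y := fun t => u t - s t) hac hb
    (hu.sub hs₂) (by simp [hsa]) (by simp [hsc]) hbr hus fun x hx => by
      rw [convDiffOp_sub hu hs₂, hLu x hx, abs_sub_comm]
      exact hLs x hx
  have hderiv : deriv (fun t => u t - s t) = fun t => deriv u t - deriv s t := funext fun t =>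
    deriv_fun_sub (hu.differentiable (by simp) t) (hs₂.differentiable (by simp) t)
  rw [hderiv] at henergy
  refine ⟨hs, hsa, hsc, hLs, hus, henergy.trans ?_, hq, hqa, hqc, hqs, hqs'⟩
  rw [sq]
  exact mul_le_of_le_one_left (mul_self_nonneg δ) hlen

section LinearCorrection

variable {ε C K G τ Δ B Y F : ℝ} {b r f u w z : ℝ → ℝ}

theorem abs_convDiffOp_linear_le (hb : AnalyticBound B G b) (hr : AnalyticBound B G r) (k : ℝ)
    {x : ℝ} (hx : x ∈ Icc (0 : ℝ) 1) : |convDiffOp ε b r (fun t => k * t) x| ≤ |k| * (2 * B) := by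
  have hop : convDiffOp ε b r (fun t => k * t) x = k * (b x + r x * x) := by
    have hderiv : deriv (fun t : ℝ => k * t) = fun _ => k := by ext t; simp
    rw [convDiffOp, hderiv, deriv_const]
    ring
  have hrx : |r x * x| ≤ B := by
    rw [abs_mul, abs_of_nonneg hx.1]
    exact (mul_le_of_le_one_right (abs_nonneg _) hx.2).trans (hr.abs_le hx)
  rw [hop, abs_mul]
  gcongr
  linarith [abs_add_le (b x) (r x * x), hb.abs_le hx]

/-- Adding a small linear function to `w` makes it agree with `u` at both ends of `[0, τ]`. -/
theorem exists_analyticBound_eq_endpoints (hΔC : Δ ≤ C) (hK : 1 ≤ K) (hτ : 1 / 2 ≤ τ)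
    (hb : AnalyticBound B G b) (hr : AnalyticBound B G r) (hw : AnalyticBound C K w) (hw₀ : w 0 = 0)
    (hLw : ∀ x ∈ Icc (0 : ℝ) 1, |convDiffOp ε b r w x - f x| ≤ Δ)
    (hτ₁ : τ ≤ 1) (huw : ∀ x ∈ Icc 0 τ, |u x - w x| ≤ Δ) :
    ∃ s, AnalyticBound (3 * C) K s ∧ s 0 = 0 ∧ s τ = u τ ∧ (∀ x ∈ Icc 0 τ, |u x - s x| ≤ 3 * Δ) ∧
      ∀ x ∈ Icc (0 : ℝ) 1, |convDiffOp ε b r s x - f x| ≤ (1 + 4 * B) * Δ := by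
  have hτ₀ : 0 < τ := by linarith
  have hΔ : 0 ≤ Δ := (abs_nonneg _).trans (huw τ ⟨hτ₀.le, le_rfl⟩)
  set k := (u τ - w τ) / τ
  have hk : |k| ≤ 2 * Δ := by
    rw [abs_div, abs_of_pos hτ₀, div_le_iff₀ hτ₀]
    nlinarith [huw τ ⟨hτ₀.le, le_rfl⟩]
  have hlin : AnalyticBound (2 * C) K (fun x => k * x) :=
    (AnalyticBound.linear k).mono (abs_nonneg _) zero_le_one (by linarith) hK
  refine ⟨fun t => w t + k * t, ?_, by simp [hw₀], by simp only [k]; field_simp; ring,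
    fun x hx => ?_, fun x hx => ?_⟩
  · rw [show 3 * C = C + 2 * C by ring]
    exact hw.add hlin
  · have hkx : |k * x| ≤ 2 * Δ := by
      rw [abs_mul, abs_of_nonneg hx.1]
      exact (mul_le_of_le_one_right (abs_nonneg _) (hx.2.trans hτ₁)).trans hk
    calc |u x - (w x + k * x)| = |(u x - w x) - k * x| := by ring_nf
      _ ≤ |u x - w x| + |k * x| := abs_sub _ _
      _ ≤ 3 * Δ := by linarith [huw x hx]
  · have hkx := abs_convDiffOp_linear_le (ε := ε) hb hr k hx
    have hB : 0 ≤ B := (abs_nonneg _).trans (hb.abs_le hx)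
    rw [convDiffOp_add (contDiff_infty.1 hw.1 2) (by fun_prop)]
    calc |convDiffOp ε b r w x + convDiffOp ε b r (fun t => k * t) x - f x|
        ≤ |convDiffOp ε b r w x - f x| + |convDiffOp ε b r (fun t => k * t) x| := by
          rw [add_sub_right_comm]; exact abs_add_le _ _
      _ ≤ Δ + 2 * Δ * (2 * B) := add_le_add (hLw x hx) (hkx.trans (by gcongr))
      _ = (1 + 4 * B) * Δ := by ring

theorem eps_mul_abs_deriv_le_of_half_le (hε : 0 ≤ ε) (hε₁ : ε ≤ 1) (hG : 0 ≤ G) (hτ : 1 / 2 ≤ τ)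
    (hτ₁ : τ ≤ 1) (hb : AnalyticBound B G b) (hr : AnalyticBound B G r) (hz : ContDiff ℝ 2 z)
    (hY : ∀ x ∈ Icc 0 τ, |z x| ≤ Y) (hF : ∀ x ∈ Icc 0 τ, |convDiffOp ε b r z x| ≤ F) :
    ε * |deriv z τ| ≤ 4 * (1 + B * (1 + G)) * Y + F := by
  have hτ₀ : 0 < τ := by linarith
  have hτmem : τ ∈ Icc 0 τ := ⟨hτ₀.le, le_rfl⟩
  have hsub : Icc 0 τ ⊆ Icc (0 : ℝ) 1 := Icc_subset_Icc le_rfl hτ₁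
  have hB : 0 ≤ B := (abs_nonneg _).trans (hb.abs_le (hsub hτmem))
  have hY₀ : 0 ≤ Y := (abs_nonneg _).trans (hY τ hτmem)
  have hF₀ : 0 ≤ F := (abs_nonneg _).trans (hF τ hτmem)
  have hBG : 0 ≤ B * G := mul_nonneg hB hG
  have h := eps_mul_abs_deriv_le (B := B * (1 + G)) hε hτ₀ (hb.1.differentiable (by simp)) hz
    (fun x hx => (hb.abs_le (hsub hx)).trans (by linarith))
    (fun x hx => (hb.abs_deriv_le (hsub hx)).trans (by linarith))
    (fun x hx => (hr.abs_le (hsub hx)).trans (by linarith)) hY hF τ hτmem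
  have hquot : 2 * ε * Y / (τ - 0) ≤ 4 * Y := by
    rw [sub_zero, div_le_iff₀ hτ₀]
    nlinarith
  have hrest : (τ - 0) * (2 * (B * (1 + G)) * Y + F) ≤ 2 * (B * (1 + G)) * Y + F :=
    mul_le_of_le_one_left (by positivity) (by linarith)
  linarith

end LinearCorrection

section CellApproximation

variable {B G β κ : ℝ} {b r f : ℝ → ℝ}

/-- On a cell of length `O(p ε)`, the bounds `|u⁽ⁿ⁾| ≤ C (K / ε)ⁿ` are those of a function that is
analytic on the scale of the cell. -/
theorem exists_cellApprox_solution (hG : 0 < G) (hβ : 0 < β) (hb : AnalyticBound B G b)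
    (hr : AnalyticBound B G r) (hf : AnalyticBound B G f) (hbβ : ∀ x ∈ Icc (0 : ℝ) 1, β ≤ b x)
    (hr₀ : ∀ x ∈ Icc (0 : ℝ) 1, 0 ≤ r x) :
    ∃ κ C : ℝ, 0 < κ ∧ κ ≤ 1 ∧ 0 < C ∧ ∀ ε : ℝ, 0 < ε → ε ≤ 1 → ∀ p : ℕ, 1 ≤ p → ∀ u : ℝ → ℝ,
      ContDiff ℝ (⊤ : ℕ∞) u → u 0 = 0 → u 1 = 0 →
      (∀ x ∈ Icc (0 : ℝ) 1, convDiffOp ε b r u x = f x) → ∀ a c : ℝ, 0 ≤ a → a < c → c ≤ 1 →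
      c - a ≤ 2 * κ * p * ε → ∃ q, CellApprox ε b r f u a c p (C * Real.exp (-κ * p)) u q := by
  obtain ⟨Cu, K, hCu, hK, hu_bound⟩ := exists_abs_iteratedDeriv_le hG hβ hb hr hf hbβ hr₀
  obtain ⟨α, C₁, hα, hα', hC₁, hinterp⟩ := exists_polynomial_interp_exponential hK
  refine ⟨α / 2, C₁ * Cu, by positivity, by linarith, by positivity,
    fun ε hε hε₁ p hp u hu hu₀ hu₁ hLu a c ha hac hc hlen => ?_⟩
  have hac' : 0 < c - a := sub_pos.2 hac
  have hαp : 0 < α * p + 1 := by positivity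
  have hscale : 1 / ε ≤ (α * p + 1) / (c - a) := by
    rw [div_le_div_iff₀ hε hac']; linarith
  have hlarge : α * p + 1 ≤ (α * p + 1) / (c - a) :=
    le_div_self hαp.le hac' (by linarith)
  obtain ⟨q, hq, hqa, hqc, hqerr⟩ := hinterp p hp u hu a c hac Cu fun n hn x hx => by
    calc |iteratedDeriv n u x| * (c - a) ^ n
        ≤ Cu * (K * ((α * p + 1) / (c - a))) ^ n * (c - a) ^ n := by
          gcongr
          exact hu_bound ε hε hε₁ u hu hu₀ hu₁ hLu _ hscale n (hn.trans hlarge) x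
            ⟨ha.trans hx.1, hx.2.trans hc⟩
      _ = Cu * (K * (α * p + 1)) ^ n := by
          rw [mul_assoc, ← mul_pow]
          congr 2
          field_simp
  have hδ : 0 ≤ C₁ * Cu * Real.exp (-(α / 2) * p) := by positivity
  exact ⟨q, hu, rfl, rfl, fun x hx => by rwa [hLu x ⟨ha.trans hx.1, hx.2.trans hc⟩, sub_self,
    abs_zero], fun x _ => by rwa [sub_self, abs_zero], by simpa using sq_nonneg _, hq, hqa, hqc,
    fun x hx => (hqerr x hx).2, fun x hx => (hqerr x hx).1⟩

/-- Away from the layer the smooth part of the solution, corrected to match `u` at both ends of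
`[0, τ]`, differs from `u` by an exponentially small quantity. -/
theorem exists_analyticBound_approx_solution (hκ : 0 < κ) (hG : 0 < G) (hβ : 0 < β)
    (hb : AnalyticBound B G b) (hr : AnalyticBound B G r) (hf : AnalyticBound B G f)
    (hbβ : ∀ x ∈ Icc (0 : ℝ) 1, β ≤ b x) (hr₀ : ∀ x ∈ Icc (0 : ℝ) 1, 0 ≤ r x) :
    ∃ C K d : ℝ, 0 < C ∧ 1 ≤ K ∧ 0 < d ∧ ∀ ε : ℝ, 0 < ε → ε ≤ 1 → ∀ p : ℕ, κ * p * ε ≤ 1 / 2 →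
      ∀ u : ℝ → ℝ, ContDiff ℝ (⊤ : ℕ∞) u → u 0 = 0 → u 1 = 0 →
      (∀ x ∈ Icc (0 : ℝ) 1, convDiffOp ε b r u x = f x) → ∃ s, AnalyticBound C K s ∧ s 0 = 0 ∧
      s (1 - κ * p * ε) = u (1 - κ * p * ε) ∧
      (∀ x ∈ Icc 0 (1 - κ * p * ε), |u x - s x| ≤ C * Real.exp (-d * p)) ∧
      ∀ x ∈ Icc (0 : ℝ) 1, |convDiffOp ε b r s x - f x| ≤ C * Real.exp (-d * p) := by
  obtain ⟨C, K, c, hC, hK, hc, hdecomp⟩ := exists_layer_decomposition hG.le hβ hb hr hf hbβ hr₀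
  have hB : 0 ≤ B := (abs_nonneg _).trans (hb.abs_le ⟨le_rfl, zero_le_one⟩)
  set d := min (β * κ) (2 * c * κ)
  have hd : 0 < d := by positivity
  refine ⟨(3 + 4 * B) * (2 * C), K, d, by positivity, hK, hd,
    fun ε hε hε₁ p hpε u hu hu₀ hu₁ hLu => ?_⟩
  obtain ⟨w, hw₀, hw, hLw, huw⟩ := hdecomp ε hε hε₁ u hu hu₀ hu₁ hLu
  have hpε₀ : 0 ≤ κ * p * ε := by positivity
  have hlayer : ∀ x ∈ Icc 0 (1 - κ * p * ε), Real.exp (-(β * (1 - x)) / ε) ≤ Real.exp (-d * p) :=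
    fun x hx => by
      rw [Real.exp_le_exp, div_le_iff₀ hε]
      have h₁ : d * p * ε ≤ β * κ * p * ε := by gcongr; exact min_le_left _ _
      have h₂ : β * (κ * p * ε) ≤ β * (1 - x) := by gcongr; linarith [hx.2]
      linarith
  have htail : Real.exp (-c / ε) ≤ Real.exp (-d * p) := by
    rw [Real.exp_le_exp, div_le_iff₀ hε]
    have h₁ : d * p * ε ≤ 2 * c * κ * p * ε := by gcongr; exact min_le_right _ _
    have h₂ : 2 * c * (κ * p * ε) ≤ 2 * c * (1 / 2) := by gcongr
    linarith
  set e := Real.exp (-d * p)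
  have : 0 < e := Real.exp_pos _
  have he₁ : e ≤ 1 := Real.exp_le_one_iff.2 (by rw [neg_mul, neg_nonpos]; positivity)
  have hCe : C * e ≤ 2 * C * e := by gcongr; linarith
  obtain ⟨s, hs, hs₀, hsτ, hus, hLs⟩ := exists_analyticBound_eq_endpoints (u := u)
    (mul_le_of_le_one_right (by positivity) he₁) hK (by linarith : 1 / 2 ≤ 1 - κ * p * ε) hb hr
    (hw.mono hC.le (by linarith) (by linarith : C ≤ 2 * C) le_rfl) hw₀
    (fun x hx => (hLw x hx).trans ((by gcongr : _ ≤ C * e).trans hCe)) (by linarith)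
    (fun x hx => (huw x ⟨hx.1, by linarith [hx.2]⟩).trans (by
      linarith [mul_le_mul_of_nonneg_left (add_le_add (hlayer x hx) htail) hC.le]))
  have hBC : 0 ≤ B * C := by positivity
  have hBCe : 0 ≤ B * C * e := by positivity
  exact ⟨s, hs.mono (by positivity) (by linarith) (by linarith) le_rfl, hs₀, hsτ,
    fun x hx => (hus x hx).trans (by linarith), fun x hx => (hLs x hx).trans (by linarith)⟩

theorem AnalyticBound.exists_polynomial_interp {K : ℝ} (hK : 1 ≤ K) :
    ∃ α C₁ : ℝ, 0 < α ∧ 0 < C₁ ∧ ∀ p : ℕ, 1 ≤ p → ∀ C : ℝ, ∀ s : ℝ → ℝ, AnalyticBound C K s →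
      ∀ a c : ℝ, 0 ≤ a → a < c → c ≤ 1 → ∃ q : Polynomial ℝ, q.natDegree ≤ p ∧ q.eval a = s a ∧
      q.eval c = s c ∧ ∀ x ∈ Icc a c,
        |q.derivative.eval x - deriv s x| ≤ C₁ * C * Real.exp (-α * p) / (c - a) ∧
        |q.eval x - s x| ≤ C₁ * C * Real.exp (-α * p) := by
  obtain ⟨α, C₁, hα, -, hC₁, hinterp⟩ := exists_polynomial_interp_exponential hK
  refine ⟨α / 2, C₁, by positivity, hC₁, fun p hp C s hs a c ha hac hc => ?_⟩
  refine hinterp p hp s hs.1 a c hac C fun n hn x hx => ?_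
  calc |iteratedDeriv n s x| * (c - a) ^ n ≤ |iteratedDeriv n s x| * 1 := by
        gcongr; exact pow_le_one₀ (by linarith) (by linarith)
    _ ≤ C * (K * (α * p + 1)) ^ n := by
        rw [mul_one]
        exact hs.abs_iteratedDeriv_le_mul_pow (zero_le_one.trans hK) le_rfl hn
          ⟨ha.trans hx.1, hx.2.trans hc⟩

theorem exists_cellApprox_of_analyticBound {C K d : ℝ} (hC : 0 < C) (hK : 1 ≤ K) (hd : 0 < d)
    (hB : 0 ≤ B) (hG : 0 ≤ G) (hb : AnalyticBound B G b) (hr : AnalyticBound B G r)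
    (hbr : ∀ x ∈ Icc (0 : ℝ) 1, deriv b x / 2 ≤ r x) :
    ∃ C' d' : ℝ, 0 < C' ∧ 0 < d' ∧ ∀ ε : ℝ, 0 < ε → ε ≤ 1 → ∀ p : ℕ, 1 ≤ p → ∀ u s : ℝ → ℝ,
      ContDiff ℝ (⊤ : ℕ∞) u → ∀ τ : ℝ, 1 / 2 ≤ τ → τ ≤ 1 → AnalyticBound C K s → s 0 = u 0 →
      s τ = u τ → (∀ x ∈ Icc 0 τ, |u x - s x| ≤ C * Real.exp (-d * p)) →
      (∀ x ∈ Icc (0 : ℝ) 1, convDiffOp ε b r u x = f x) →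
      (∀ x ∈ Icc (0 : ℝ) 1, |convDiffOp ε b r s x - f x| ≤ C * Real.exp (-d * p)) →
      ∃ q, CellApprox ε b r f u 0 τ p (C' * Real.exp (-d' * p)) s q ∧
        ε * |deriv s τ - deriv u τ| ≤ C' * Real.exp (-d' * p) := by
  obtain ⟨α, C₁, hα, hC₁, hinterp⟩ := AnalyticBound.exists_polynomial_interp hK
  set D := (5 + 4 * B * (1 + G)) * C + C₁ * C
  have hBG : 0 ≤ B * (1 + G) * C := by positivity
  have hC₁C : 0 < C₁ * C := by positivity
  refine ⟨D, min d α, by positivity, by positivity,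
    fun ε hε hε₁ p hp u s hu τ hτ hτ₁ hs hs₀ hsτ hus hLu hLs => ?_⟩
  have hτ₀ : 0 < τ := by linarith
  have hsub : Icc 0 τ ⊆ Icc (0 : ℝ) 1 := Icc_subset_Icc le_rfl hτ₁
  have : (0 : ℝ) < p := by exact_mod_cast hp
  have hed : Real.exp (-d * p) ≤ Real.exp (-min d α * p) := by
    gcongr; exact min_le_left _ _
  have heα : Real.exp (-α * p) ≤ Real.exp (-min d α * p) := by
    gcongr; exact min_le_right _ _
  set e := Real.exp (-min d α * p)
  have : 0 < e := Real.exp_pos _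
  have hCD : C * e ≤ D * e := by gcongr; linarith
  have hC₁D : C₁ * C * Real.exp (-α * p) ≤ D * e := by gcongr; linarith
  have hu₂ := contDiff_infty.1 hu 2
  have hs₂ := contDiff_infty.1 hs.1 2
  have hus' : ∀ x ∈ Icc 0 τ, |u x - s x| ≤ C * e := fun x hx => (hus x hx).trans (by gcongr)
  have hLs' : ∀ x ∈ Icc 0 τ, |convDiffOp ε b r s x - f x| ≤ C * e := fun x hx =>
    (hLs x (hsub hx)).trans (by gcongr)
  obtain ⟨q, hq, hq₀, hqτ, hqerr⟩ := hinterp p hp C s hs 0 τ le_rfl hτ₀ hτ₁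
  refine ⟨q, .of_abs_sub_le hτ₀.le (by simpa using hτ₁) (contDiff_infty.1 hb.1 1) hu₂ hs.1
    (fun x hx => hbr x (hsub hx)) hs₀ hsτ (fun x hx => hLu x (hsub hx))
    (fun x hx => (hLs' x hx).trans hCD) (fun x hx => (hus' x hx).trans hCD) hq hq₀ hqτ
    (fun x hx => (hqerr x hx).2.trans hC₁D)
    fun x hx => (hqerr x hx).1.trans (by gcongr), ?_⟩
  have hflux := eps_mul_abs_deriv_le_of_half_le hε.le hε₁ hG hτ hτ₁ hb hr (hu₂.sub hs₂) hus'
    fun x hx => by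
      rw [convDiffOp_sub hu₂ hs₂, hLu x (hsub hx), abs_sub_comm]
      exact hLs' x hx
  rw [deriv_fun_sub (hu₂.differentiable (by simp) τ) (hs₂.differentiable (by simp) τ),
    abs_sub_comm] at hflux
  refine hflux.trans ?_
  rw [← mul_assoc, ← add_mul]
  gcongr
  linarith

theorem exists_cellApprox_boundaryLayerMesh (hG : 0 < G) (hβ : 0 < β) (hb : AnalyticBound B G b)
    (hr : AnalyticBound B G r) (hf : AnalyticBound B G f) (hbβ : ∀ x ∈ Icc (0 : ℝ) 1, β ≤ b x)
    (hr₀ : ∀ x ∈ Icc (0 : ℝ) 1, 0 ≤ r x) (hbr : ∀ x ∈ Icc (0 : ℝ) 1, deriv b x / 2 ≤ r x) :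
    ∃ κ C d : ℝ, 0 < κ ∧ κ ≤ 1 ∧ 0 < C ∧ 0 < d ∧ ∀ ε : ℝ, 0 < ε → ε ≤ 1 → ∀ p : ℕ, 1 ≤ p →
      ∀ u : ℝ → ℝ, ContDiff ℝ (⊤ : ℕ∞) u → u 0 = 0 → u 1 = 0 →
      (∀ x ∈ Icc (0 : ℝ) 1, convDiffOp ε b r u x = f x) →
      (1 / 2 ≤ κ * p * ε → ∃ q, CellApprox ε b r f u 0 1 p (C * Real.exp (-d * p)) u q) ∧
      (κ * p * ε ≤ 1 / 2 → ∃ s q₁ q₂,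
        CellApprox ε b r f u 0 (1 - κ * p * ε) p (C * Real.exp (-d * p)) s q₁ ∧
        CellApprox ε b r f u (1 - κ * p * ε) 1 p (C * Real.exp (-d * p)) u q₂ ∧
        ε * |deriv s (1 - κ * p * ε) - deriv u (1 - κ * p * ε)| ≤ C * Real.exp (-d * p)) := by
  have hB : 0 ≤ B := (abs_nonneg _).trans (hb.abs_le ⟨le_rfl, zero_le_one⟩)
  obtain ⟨κ, C₂, hκ, hκ₁, hC₂, hcell⟩ := exists_cellApprox_solution hG hβ hb hr hf hbβ hr₀
  obtain ⟨C₀, K, d₀, hC₀, hK, hd₀, hsmooth⟩ :=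
    exists_analyticBound_approx_solution hκ hG hβ hb hr hf hbβ hr₀
  obtain ⟨C₁, d₁, hC₁, hd₁, hinterp⟩ :=
    exists_cellApprox_of_analyticBound (f := f) hC₀ hK hd₀ hB hG.le hb hr hbr
  refine ⟨κ, C₁ + C₂, min d₁ κ, hκ, hκ₁, by positivity, by positivity,
    fun ε hε hε₁ p hp u hu hu₀ hu₁ hLu => ?_⟩
  have : (0 : ℝ) < p := by exact_mod_cast hp
  have hpε : 0 < κ * p * ε := by positivity
  have hle₁ : C₁ * Real.exp (-d₁ * p) ≤ (C₁ + C₂) * Real.exp (-min d₁ κ * p) := by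
    gcongr
    · linarith
    · exact min_le_left _ _
  have hle₂ : C₂ * Real.exp (-κ * p) ≤ (C₁ + C₂) * Real.exp (-min d₁ κ * p) := by
    gcongr
    · linarith
    · exact min_le_right _ _
  refine ⟨fun h => ?_, fun h => ?_⟩
  · obtain ⟨q, hq⟩ := hcell ε hε hε₁ p hp u hu hu₀ hu₁ hLu 0 1 le_rfl one_pos le_rfl (by linarith)
    exact ⟨q, hq.mono zero_le_one (by positivity) hle₂⟩
  · obtain ⟨s, hs, hs₀, hsτ, hus, hLs⟩ := hsmooth ε hε hε₁ p h u hu hu₀ hu₁ hLu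
    obtain ⟨q₁, hq₁, hflux⟩ := hinterp ε hε hε₁ p hp u s hu _ (by linarith) (by linarith) hs
      (hs₀.trans hu₀.symm) hsτ hus hLu hLs
    obtain ⟨q₂, hq₂⟩ := hcell ε hε hε₁ p hp u hu hu₀ hu₁ hLu (1 - κ * p * ε) 1 (by linarith)
      (by linarith) le_rfl (by linarith)
    exact ⟨s, q₁, q₂, hq₁.mono (by linarith) (by positivity) hle₁,
      hq₂.mono (by linarith) (by positivity) hle₂, hflux.trans hle₁⟩

end CellApproximation

/-! ### Weak functions on a cell -/

theorem integral_deriv_mul_add_mul_deriv {f g : ℝ → ℝ} (hf : ContDiff ℝ 1 f)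
    (hg : ContDiff ℝ 1 g) (a c : ℝ) :
    (∫ t in a..c, (deriv f t * g t + f t * deriv g t)) = f c * g c - f a * g a :=
  intervalIntegral.integral_deriv_mul_eq_sub
    (fun t _ => (hf.differentiable one_ne_zero t).hasDerivAt)
    (fun t _ => (hg.differentiable one_ne_zero t).hasDerivAt)
    ((hf.continuous_deriv le_rfl).intervalIntegrable _ _)
    ((hg.continuous_deriv le_rfl).intervalIntegrable _ _)

theorem IsWeakDerivOn.sub {a c : ℝ} {n : ℕ} {v w D F : ℝ → ℝ} {vl vr wl wr : ℝ}
    (hv : IsWeakDerivOn a c n v vl vr D) (hw : IsWeakDerivOn a c n w wl wr F)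
    (hvc : Continuous v) (hwc : Continuous w) :
    IsWeakDerivOn a c n (fun t => v t - w t) (vl - wl) (vr - wr) (fun t => D t - F t) := by
  obtain ⟨⟨P, hP, hPD⟩, hDv⟩ := hv
  obtain ⟨⟨Q, hQ, hQF⟩, hFw⟩ := hw
  obtain rfl : D = fun t => P.eval t := funext hPD
  obtain rfl : F = fun t => Q.eval t := funext hQF
  refine ⟨⟨P - Q, (Polynomial.natDegree_sub_le_of_le hP hQ).trans (max_self n).le, by simp⟩,
    fun q hq => ?_⟩
  have hint {g : ℝ → ℝ} (hg : Continuous g) : IntervalIntegrable g volume a c :=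
    hg.intervalIntegrable a c
  simp only [sub_mul]
  rw [intervalIntegral.integral_sub (hint (by fun_prop)) (hint (by fun_prop)),
    intervalIntegral.integral_sub (hint (by fun_prop)) (hint (by fun_prop)), hDv q hq, hFw q hq]
  ring

theorem isWeakDerivOn_eval {n : ℕ} {q : Polynomial ℝ} (hq : q.derivative.natDegree ≤ n)
    (a c : ℝ) : IsWeakDerivOn a c n (fun t => q.eval t) (q.eval a) (q.eval c)
      (fun t => q.derivative.eval t) := by
  refine ⟨⟨_, hq, fun _ => rfl⟩, fun w _ => ?_⟩
  rw [integral_eval_derivative_mul]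
  ring

/-- The weak derivative of a conforming function is the `L²` projection of its derivative. -/
theorem IsWeakDerivOn.integral_sq_le {a c : ℝ} (hac : a ≤ c) {n : ℕ} {v D : ℝ → ℝ}
    (hv : ContDiff ℝ 1 v) (h : IsWeakDerivOn a c n v (v a) (v c) D) :
    (∫ t in a..c, D t ^ 2) ≤ ∫ t in a..c, deriv v t ^ 2 := by
  obtain ⟨⟨P, hP, hPD⟩, hD⟩ := h
  obtain rfl : D = fun t => P.eval t := funext hPD
  have : Continuous (deriv v) := hv.continuous_deriv le_rfl
  have : Continuous v := hv.continuous
  have hparts := integral_deriv_mul_add_mul_deriv hv (P.contDiff_aeval 1) a c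
  simp only [Polynomial.coe_aeval_eq_eval, Polynomial.deriv] at hparts
  rw [intervalIntegral.integral_add (Continuous.intervalIntegrable (by fun_prop) _ _)
    (Continuous.intervalIntegrable (by fun_prop) _ _)] at hparts
  have hproj : (∫ t in a..c, P.eval t ^ 2) = ∫ t in a..c, deriv v t * P.eval t := by
    simp only [sq, hD P hP]
    linarith
  have hCS := sq_integral_mul_le (f := deriv v) hac (by fun_prop) P.continuous.continuousOn
  rw [← hproj, sq] at hCS
  have hP₀ : 0 ≤ ∫ t in a..c, P.eval t ^ 2 :=
    intervalIntegral.integral_nonneg hac fun t _ => sq_nonneg _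
  have hv₀ : 0 ≤ ∫ t in a..c, deriv v t ^ 2 :=
    intervalIntegral.integral_nonneg hac fun t _ => sq_nonneg _
  rcases hP₀.eq_or_lt with h₀ | h₀
  · exact h₀ ▸ hv₀
  · exact le_of_mul_le_mul_right hCS h₀

/-- A discrete weak function of degree `p` on the cell `[a, c]`: a polynomial in the interior,
independent values at the two endpoints, and its weak derivative `D_{p-1}`. -/
structure CellFun (a c : ℝ) (p : ℕ) where
  interior : Polynomial ℝ
  left : ℝ
  right : ℝ
  weakDeriv : Polynomial ℝ
  natDegree_le : interior.natDegree ≤ p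
  isWeakDerivOn : IsWeakDerivOn a c (p - 1) (fun t => interior.eval t) left right
    (fun t => weakDeriv.eval t)

namespace CellFun

variable {a c : ℝ} {p : ℕ}

/-- The jump between the interior and the boundary value at the left endpoint. -/
def jumpLeft (V : CellFun a c p) : ℝ := V.interior.eval a - V.left

/-- The jump between the interior and the boundary value at the right endpoint. -/
def jumpRight (V : CellFun a c p) : ℝ := V.interior.eval c - V.right

/-- The weak function of a polynomial, with its own values at the endpoints. -/
def conforming (a c : ℝ) {q : Polynomial ℝ} (hq : q.natDegree ≤ p) : CellFun a c p where
  interior := q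
  left := q.eval a
  right := q.eval c
  weakDeriv := q.derivative
  natDegree_le := hq
  isWeakDerivOn := isWeakDerivOn_eval
    ((Polynomial.natDegree_derivative_le q).trans (Nat.sub_le_sub_right hq 1)) a c

instance : Sub (CellFun a c p) where
  sub V W :=
    { interior := V.interior - W.interior
      left := V.left - W.left
      right := V.right - W.right
      weakDeriv := V.weakDeriv - W.weakDeriv
      natDegree_le :=
        (Polynomial.natDegree_sub_le_of_le V.natDegree_le W.natDegree_le).trans (max_self p).le
      isWeakDerivOn := by
        simpa only [Polynomial.eval_sub] using V.isWeakDerivOn.sub W.isWeakDerivOn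
          V.interior.continuous W.interior.continuous }

@[simp] theorem interior_sub (V W : CellFun a c p) :
    (V - W).interior = V.interior - W.interior := rfl

@[simp] theorem left_sub (V W : CellFun a c p) : (V - W).left = V.left - W.left := rfl

@[simp] theorem right_sub (V W : CellFun a c p) : (V - W).right = V.right - W.right := rfl

@[simp] theorem weakDeriv_sub (V W : CellFun a c p) :
    (V - W).weakDeriv = V.weakDeriv - W.weakDeriv := rfl

theorem integral_weakDeriv_mul (V : CellFun a c p) {w : Polynomial ℝ}
    (hw : w.natDegree ≤ p - 1) :
    (∫ t in a..c, V.weakDeriv.eval t * w.eval t)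
      = (∫ t in a..c, V.interior.derivative.eval t * w.eval t)
        - V.jumpRight * w.eval c + V.jumpLeft * w.eval a := by
  rw [V.isWeakDerivOn.2 w hw, integral_eval_derivative_mul, jumpRight, jumpLeft]
  ring

end CellFun

/-! ### The cell energy -/

/-- The contribution of the cell `[a, c]` to the squared energy norm of the weak function
`(v, vl, vr)` with weak derivative `D`, the seminorm `|v|_J` left out. -/
def cellNormSq (ε : ℝ) (b : ℝ → ℝ) (a c : ℝ) (p : ℕ) (v : ℝ → ℝ) (vl vr : ℝ) (D : ℝ → ℝ) : ℝ :=
  ε * (∫ t in a..c, D t ^ 2) + (∫ t in a..c, v t ^ 2)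
    + ε * p ^ 2 / (c - a) * ((v c - vr) ^ 2 + (v a - vl) ^ 2) + b c * (v c - vr) ^ 2

theorem intL2_nonneg (a c : ℝ) (f : ℝ → ℝ) : 0 ≤ intL2 a c f := Real.sqrt_nonneg _

namespace CellFun

variable {a c ε : ℝ} {p : ℕ} {b : ℝ → ℝ}

/-- The squared energy norm of a discrete weak function on its cell. -/
def energy (ε : ℝ) (b : ℝ → ℝ) (V : CellFun a c p) : ℝ :=
  cellNormSq ε b a c p (fun t => V.interior.eval t) V.left V.right fun t => V.weakDeriv.eval t

theorem energy_eq (V : CellFun a c p) : V.energy ε b =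
    ε * (∫ t in a..c, V.weakDeriv.eval t ^ 2) + (∫ t in a..c, V.interior.eval t ^ 2)
      + ε * p ^ 2 / (c - a) * (V.jumpRight ^ 2 + V.jumpLeft ^ 2) + b c * V.jumpRight ^ 2 :=
  rfl

section Bounds

variable (hε : 0 ≤ ε) (hac : a < c) (V : CellFun a c p)
include hε hac

theorem convection_jump_le_energy : b c * V.jumpRight ^ 2 ≤ V.energy ε b := by
  have hD : 0 ≤ ∫ t in a..c, V.weakDeriv.eval t ^ 2 :=
    intervalIntegral.integral_nonneg hac.le fun t _ => sq_nonneg _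
  have hV : 0 ≤ ∫ t in a..c, V.interior.eval t ^ 2 :=
    intervalIntegral.integral_nonneg hac.le fun t _ => sq_nonneg _
  have : 0 < c - a := sub_pos.2 hac
  rw [energy_eq]
  exact le_add_of_nonneg_left (by positivity)

variable (hb : 0 ≤ b c)
include hb

theorem integral_sq_le_energy : (∫ t in a..c, V.interior.eval t ^ 2) ≤ V.energy ε b := by
  have hD : 0 ≤ ∫ t in a..c, V.weakDeriv.eval t ^ 2 :=
    intervalIntegral.integral_nonneg hac.le fun t _ => sq_nonneg _
  have : 0 < c - a := sub_pos.2 hac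
  rw [energy_eq, add_assoc, add_right_comm]
  exact le_add_of_nonneg_left (by positivity)

theorem energy_nonneg : 0 ≤ V.energy ε b :=
  (intervalIntegral.integral_nonneg hac.le fun _ _ => sq_nonneg _).trans
    (V.integral_sq_le_energy hε hac hb)

theorem intL2_interior_le : intL2 a c (fun t => V.interior.eval t) ≤ √(V.energy ε b) :=
  Real.sqrt_le_sqrt (V.integral_sq_le_energy hε hac hb)

theorem penalty_le_energy :
    ε * p ^ 2 / (c - a) * (V.jumpRight ^ 2 + V.jumpLeft ^ 2) ≤ V.energy ε b := by
  have hD : 0 ≤ ∫ t in a..c, V.weakDeriv.eval t ^ 2 :=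
    intervalIntegral.integral_nonneg hac.le fun t _ => sq_nonneg _
  have hV : 0 ≤ ∫ t in a..c, V.interior.eval t ^ 2 :=
    intervalIntegral.integral_nonneg hac.le fun t _ => sq_nonneg _
  rw [energy_eq, add_right_comm]
  exact le_add_of_nonneg_left (by positivity)

theorem sqrt_mul_abs_le_of_sq_le {x : ℝ} (hx : x ^ 2 ≤ V.jumpRight ^ 2 + V.jumpLeft ^ 2) :
    √ε * (p * |x|) ≤ √(c - a) * √(V.energy ε b) := by
  have hh : 0 < c - a := sub_pos.2 hac
  rw [← Real.sqrt_mul hh.le]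
  refine Real.le_sqrt_of_sq_le ?_
  calc (√ε * (p * |x|)) ^ 2 = (c - a) * (ε * p ^ 2 / (c - a) * x ^ 2) := by
        rw [mul_pow, mul_pow, Real.sq_sqrt hε, sq_abs]
        field_simp
    _ ≤ (c - a) * (ε * p ^ 2 / (c - a) * (V.jumpRight ^ 2 + V.jumpLeft ^ 2)) := by gcongr
    _ ≤ (c - a) * V.energy ε b := by
      gcongr
      exact V.penalty_le_energy hε hac hb

theorem sqrt_mul_abs_jumpRight_le :
    √ε * (p * |V.jumpRight|) ≤ √(c - a) * √(V.energy ε b) :=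
  V.sqrt_mul_abs_le_of_sq_le hε hac hb (le_add_of_nonneg_right (sq_nonneg _))

theorem sqrt_mul_abs_jumpLeft_le :
    √ε * (p * |V.jumpLeft|) ≤ √(c - a) * √(V.energy ε b) :=
  V.sqrt_mul_abs_le_of_sq_le hε hac hb (le_add_of_nonneg_left (sq_nonneg _))

end Bounds

theorem integral_derivative_sq_le (hac : a < c) (hp : 1 ≤ p) (V : CellFun a c p) :
    (∫ t in a..c, V.interior.derivative.eval t ^ 2) ≤
      3 * ((∫ t in a..c, V.weakDeriv.eval t ^ 2)
        + p ^ 2 / (c - a) * (V.jumpRight ^ 2 + V.jumpLeft ^ 2)) := by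
  set q := V.interior.derivative
  set I := ∫ t in a..c, q.eval t ^ 2
  have hq : q.natDegree ≤ p - 1 :=
    (Polynomial.natDegree_derivative_le _).trans (Nat.sub_le_sub_right V.natDegree_le 1)
  have hcast : ((p - 1 : ℕ) : ℝ) + 1 = p := by exact_mod_cast Nat.sub_add_cancel hp
  have hright : q.eval c ^ 2 ≤ p ^ 2 / (c - a) * I := hcast ▸ sq_eval_le_integral_sq hq hac.ne
  have hleft : q.eval a ^ 2 ≤ p ^ 2 / (c - a) * I := by
    have := sq_eval_le_integral_sq hq hac.ne'
    rwa [hcast, intervalIntegral.integral_symm, ← neg_sub c a, div_neg, neg_mul_neg] at this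
  have hCS : (∫ t in a..c, V.weakDeriv.eval t * q.eval t) ^ 2 ≤
      (∫ t in a..c, V.weakDeriv.eval t ^ 2) * I :=
    sq_integral_mul_le hac.le V.weakDeriv.continuous.continuousOn q.continuous.continuousOn
  have hI : I = (∫ t in a..c, V.weakDeriv.eval t * q.eval t) + V.jumpRight * q.eval c
      - V.jumpLeft * q.eval a := by
    rw [V.integral_weakDeriv_mul hq]
    simp only [I, sq, q]
    ring
  have hI₀ : 0 ≤ I := intervalIntegral.integral_nonneg hac.le fun t _ => sq_nonneg _
  have hJ₀ : 0 ≤ ∫ t in a..c, V.weakDeriv.eval t ^ 2 :=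
    intervalIntegral.integral_nonneg hac.le fun t _ => sq_nonneg _
  have : 0 < c - a := sub_pos.2 hac
  rcases hI₀.eq_or_lt with h₀ | h₀
  · rw [← h₀]
    positivity
  refine le_of_mul_le_mul_right ?_ h₀
  calc I * I = ((∫ t in a..c, V.weakDeriv.eval t * q.eval t) + V.jumpRight * q.eval c
        - V.jumpLeft * q.eval a) ^ 2 := by rw [← hI, sq]
    _ ≤ 3 * ((∫ t in a..c, V.weakDeriv.eval t * q.eval t) ^ 2 + V.jumpRight ^ 2 * q.eval c ^ 2
        + V.jumpLeft ^ 2 * q.eval a ^ 2) := by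
      generalize (∫ t in a..c, V.weakDeriv.eval t * q.eval t) = x
      generalize hy : V.jumpRight * q.eval c = y
      generalize hz : V.jumpLeft * q.eval a = z
      rw [← mul_pow, ← mul_pow, hy, hz]
      nlinarith [sq_nonneg (x - y), sq_nonneg (x + z), sq_nonneg (y + z)]
    _ ≤ 3 * ((∫ t in a..c, V.weakDeriv.eval t ^ 2) * I
        + V.jumpRight ^ 2 * (p ^ 2 / (c - a) * I) + V.jumpLeft ^ 2 * (p ^ 2 / (c - a) * I)) := by
      gcongr
    _ = _ := by ring

theorem sqrt_mul_intL2_derivative_le (hε : 0 ≤ ε) (hac : a < c) (hb : 0 ≤ b c) (hp : 1 ≤ p)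
    (V : CellFun a c p) :
    √ε * intL2 a c (fun t => V.interior.derivative.eval t) ≤ 2 * √(V.energy ε b) := by
  have hV : 0 ≤ ∫ t in a..c, V.interior.eval t ^ 2 :=
    intervalIntegral.integral_nonneg hac.le fun t _ => sq_nonneg _
  have hderiv := mul_le_mul_of_nonneg_left (V.integral_derivative_sq_le hac hp) hε
  have hE := V.energy_eq (ε := ε) (b := b)
  have hnonneg := V.energy_nonneg hε hac hb
  have hjump : 0 ≤ b c * V.jumpRight ^ 2 := by positivity
  rw [intL2, ← Real.sqrt_mul hε]
  refine Real.sqrt_le_iff.2 ⟨by positivity, ?_⟩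
  rw [mul_pow, Real.sq_sqrt hnonneg]
  calc _ ≤ _ := hderiv
    _ = 3 * (ε * (∫ t in a..c, V.weakDeriv.eval t ^ 2)
      + ε * p ^ 2 / (c - a) * (V.jumpRight ^ 2 + V.jumpLeft ^ 2)) := by ring
    _ ≤ 2 ^ 2 * V.energy ε b := by linarith

theorem right_sq_le (hε : 0 ≤ ε) (hac : a < c) {β : ℝ} (hβ : 0 < β) (hb : β ≤ b c)
    (V : CellFun a c p) :
    V.right ^ 2 ≤ 2 * ((p + 1) ^ 2 / (c - a) + 1 / β) * V.energy ε b := by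
  have hbc : 0 ≤ b c := hβ.le.trans hb
  have : 0 < c - a := sub_pos.2 hac
  have htrace : V.interior.eval c ^ 2 ≤ (p + 1) ^ 2 / (c - a) * V.energy ε b :=
    (sq_eval_le_integral_sq V.natDegree_le hac.ne).trans <| by
      gcongr
      exact V.integral_sq_le_energy hε hac hbc
  have hjump : V.jumpRight ^ 2 ≤ 1 / β * V.energy ε b := by
    rw [one_div_mul_eq_div, le_div_iff₀' hβ]
    exact (mul_le_mul_of_nonneg_right hb (sq_nonneg _)).trans
      (V.convection_jump_le_energy hε hac)
  have hright : V.right = V.interior.eval c - V.jumpRight := by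
    rw [jumpRight]
    ring
  rw [hright]
  linarith [sq_nonneg (V.interior.eval c + V.jumpRight)]

end CellFun

/-! ### The cell bilinear form -/

namespace CellFun

variable {a c ε : ℝ} {p : ℕ} {b r : ℝ → ℝ}

/-- The weak convection term `(D_p^c U, V)` on a cell. It is written out through the defining
identity of `D_p^c`, which is legitimate because `V` is itself a test polynomial. -/
def convection (b : ℝ → ℝ) (U V : CellFun a c p) : ℝ :=
  -(∫ t in a..c, U.interior.eval t * deriv (fun s => b s * V.interior.eval s) t)
    + U.right * (b c * V.interior.eval c) - U.left * (b a * V.interior.eval a)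

/-- The contribution of a cell to the bilinear form `A_p`. -/
def form (ε : ℝ) (b r : ℝ → ℝ) (U V : CellFun a c p) : ℝ :=
  ε * (∫ t in a..c, U.weakDeriv.eval t * V.weakDeriv.eval t) + convection b U V
    + (∫ t in a..c, r t * U.interior.eval t * V.interior.eval t)
    + ε * p ^ 2 / (c - a) * (U.jumpRight * V.jumpRight + U.jumpLeft * V.jumpLeft)
    + b c * (U.jumpRight * V.jumpRight)

theorem contDiff_mul_interior (hb : ContDiff ℝ 1 b) (V : CellFun a c p) :
    ContDiff ℝ 1 fun s => b s * V.interior.eval s :=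
  hb.mul (V.interior.contDiff_aeval 1)

theorem convection_eq (hb : ContDiff ℝ 1 b) (U V : CellFun a c p) :
    U.convection b V =
      (∫ t in a..c, b t * U.interior.derivative.eval t * V.interior.eval t)
        - b c * (U.jumpRight * V.interior.eval c) + b a * (U.jumpLeft * V.interior.eval a) := by
  have hbV := contDiff_mul_interior hb V
  have : Continuous (deriv fun s => b s * V.interior.eval s) := hbV.continuous_deriv le_rfl
  have : Continuous b := hb.continuous
  have hparts := integral_deriv_mul_add_mul_deriv (U.interior.contDiff_aeval 1) hbV a c
  simp only [Polynomial.coe_aeval_eq_eval, Polynomial.deriv] at hparts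
  rw [intervalIntegral.integral_add (Continuous.intervalIntegrable (by fun_prop) _ _)
    (Continuous.intervalIntegrable (by fun_prop) _ _)] at hparts
  have hcomm : (∫ t in a..c, b t * U.interior.derivative.eval t * V.interior.eval t)
      = ∫ t in a..c, U.interior.derivative.eval t * (b t * V.interior.eval t) := by
    congr 1 with t
    ring
  rw [convection, hcomm, jumpRight, jumpLeft]
  linarith

theorem convection_self (hb : ContDiff ℝ 1 b) (V : CellFun a c p) :
    V.convection b V = -(∫ t in a..c, deriv b t / 2 * V.interior.eval t ^ 2)
      + b c / 2 * (V.right ^ 2 - V.jumpRight ^ 2) - b a / 2 * (V.left ^ 2 - V.jumpLeft ^ 2) := by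
  have : Continuous (deriv b) := hb.continuous_deriv le_rfl
  have : Continuous b := hb.continuous
  have hsq : (∫ t in a..c, b t * V.interior.derivative.eval t * V.interior.eval t)
      + (∫ t in a..c, deriv b t / 2 * V.interior.eval t ^ 2)
      = (b c * V.interior.eval c ^ 2 - b a * V.interior.eval a ^ 2) / 2 := by
    have hparts := integral_deriv_mul_add_mul_deriv hb ((V.interior.contDiff_aeval 1).pow 2) a c
    simp only [Polynomial.coe_aeval_eq_eval] at hparts
    rw [← hparts, ← intervalIntegral.integral_div,
      ← intervalIntegral.integral_add (Continuous.intervalIntegrable (by fun_prop) _ _)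
        (Continuous.intervalIntegrable (by fun_prop) _ _)]
    congr 1 with t
    simp only [deriv_fun_pow V.interior.differentiableAt,
      Polynomial.deriv]
    ring
  rw [convection_eq hb, jumpRight, jumpLeft]
  linarith

theorem form_self_ge (hε : 0 ≤ ε) (hac : a < c) (hb : ContDiff ℝ 1 b) (hr : Continuous r)
    (hba : 0 ≤ b a) (hbc : 0 ≤ b c) {γ : ℝ}
    (hγ : ∀ t ∈ Icc a c, γ ≤ r t - deriv b t / 2) (V : CellFun a c p) :
    min γ (1 / 2) * V.energy ε b + (b c * V.right ^ 2 - b a * V.left ^ 2) / 2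
      ≤ V.form ε b r V := by
  have : Continuous (deriv b) := hb.continuous_deriv le_rfl
  have hreact : min γ (1 / 2) * (∫ t in a..c, V.interior.eval t ^ 2) ≤
      (∫ t in a..c, r t * V.interior.eval t * V.interior.eval t)
        - ∫ t in a..c, deriv b t / 2 * V.interior.eval t ^ 2 := by
    rw [← intervalIntegral.integral_const_mul,
      ← intervalIntegral.integral_sub (Continuous.intervalIntegrable (by fun_prop) _ _)
        (Continuous.intervalIntegrable (by fun_prop) _ _)]
    refine intervalIntegral.integral_mono_on hac.le
      (Continuous.intervalIntegrable (by fun_prop) _ _)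
      (Continuous.intervalIntegrable (by fun_prop) _ _) fun t ht => ?_
    rw [mul_assoc, ← sq, ← sub_mul]
    exact mul_le_mul_of_nonneg_right ((min_le_left _ _).trans (hγ t ht)) (sq_nonneg _)
  have hhalf : min γ (1 / 2) ≤ 1 / 2 := min_le_right _ _
  have : 0 < c - a := sub_pos.2 hac
  have hdiff : 0 ≤ ε * ∫ t in a..c, V.weakDeriv.eval t ^ 2 :=
    mul_nonneg hε (intervalIntegral.integral_nonneg hac.le fun _ _ => sq_nonneg _)
  have hpen : 0 ≤ ε * p ^ 2 / (c - a) * (V.jumpRight ^ 2 + V.jumpLeft ^ 2) := by positivity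
  have hjump : 0 ≤ b c * V.jumpRight ^ 2 := by positivity
  have hjump' : 0 ≤ b a * V.jumpLeft ^ 2 := by positivity
  rw [form, convection_self hb, energy_eq]
  simp only [← sq]
  nlinarith [mul_nonneg (sub_nonneg.2 hhalf) hdiff, mul_nonneg (sub_nonneg.2 hhalf) hpen,
    mul_nonneg (sub_nonneg.2 hhalf) hjump]

theorem form_sub_left (hr : Continuous r) (hb : ContDiff ℝ 1 b) (U V W : CellFun a c p) :
    (U - V).form ε b r W = U.form ε b r W - V.form ε b r W := by
  have : Continuous b := hb.continuous
  have hint {g : ℝ → ℝ} (hg : Continuous g) : IntervalIntegrable g volume a c :=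
    hg.intervalIntegrable a c
  simp only [form, convection_eq hb, interior_sub, weakDeriv_sub, jumpRight, jumpLeft, left_sub,
    right_sub, Polynomial.derivative_sub, Polynomial.eval_sub, mul_sub, sub_mul]
  rw [intervalIntegral.integral_sub (hint (by fun_prop)) (hint (by fun_prop)),
    intervalIntegral.integral_sub (hint (by fun_prop)) (hint (by fun_prop)),
    intervalIntegral.integral_sub (hint (by fun_prop)) (hint (by fun_prop))]
  ring

theorem form_conforming (hb : ContDiff ℝ 1 b) {q : Polynomial ℝ} (hq : q.natDegree ≤ p)
    (V : CellFun a c p) :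
    (conforming a c hq).form ε b r V =
      ε * ((∫ t in a..c, q.derivative.eval t * V.interior.derivative.eval t)
        - V.jumpRight * q.derivative.eval c + V.jumpLeft * q.derivative.eval a)
      + (∫ t in a..c, b t * q.derivative.eval t * V.interior.eval t)
      + ∫ t in a..c, r t * q.eval t * V.interior.eval t := by
  have hq' : q.derivative.natDegree ≤ p - 1 :=
    (Polynomial.natDegree_derivative_le q).trans (Nat.sub_le_sub_right hq 1)
  have hD := V.integral_weakDeriv_mul hq'
  simp only [mul_comm (V.weakDeriv.eval _), mul_comm (V.interior.derivative.eval _)] at hD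
  rw [form, convection_eq hb]
  simp only [conforming, jumpRight, jumpLeft, sub_self, zero_mul, mul_zero, add_zero, sub_zero,
    hD]

end CellFun

/-! ### Consistency and error on a cell -/

/-- The hypotheses on the coefficients `b`, `r` that the stability analysis needs: bounds by `B` on
`[0, 1]`, the lower bound `β` of the convection and the coercivity constant `γ`. -/
structure StableCoefficients (B β γ : ℝ) (b r : ℝ → ℝ) : Prop where
  contDiff : ContDiff ℝ 1 b
  continuous : Continuous r
  abs_le : ∀ x ∈ Icc (0 : ℝ) 1, |b x| ≤ B
  abs_deriv_le : ∀ x ∈ Icc (0 : ℝ) 1, |deriv b x| ≤ B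
  abs_reaction_le : ∀ x ∈ Icc (0 : ℝ) 1, |r x| ≤ B
  pos : 0 < β
  le : ∀ x ∈ Icc (0 : ℝ) 1, β ≤ b x
  coercive : ∀ x ∈ Icc (0 : ℝ) 1, γ ≤ r x - deriv b x / 2

/-- A cell `[a, c] ⊆ [0, 1]` of a layer-adapted mesh: its width dominates the width `ε` of the
layer, and it is either long or short enough for polynomials of degree `p` to resolve the layer. -/
structure AdaptedCell (ε M : ℝ) (p : ℕ) (a c : ℝ) : Prop where
  lt : a < c
  subset : Icc a c ⊆ Icc 0 1
  diffusion_le : ε ≤ M * (c - a)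
  long_or_short : 1 / 2 ≤ c - a ∨ c - a ≤ p * ε

namespace AdaptedCell

variable {ε M a c : ℝ} {p : ℕ} (h : AdaptedCell ε M p a c)
include h

theorem left_mem : a ∈ Icc (0 : ℝ) 1 := h.subset (left_mem_Icc.2 h.lt.le)

theorem right_mem : c ∈ Icc (0 : ℝ) 1 := h.subset (right_mem_Icc.2 h.lt.le)

theorem width_le_one : c - a ≤ 1 := by
  linarith [h.left_mem.1, h.right_mem.2]

theorem sqrt_diffusion_le (hM : 1 ≤ M) : √ε ≤ M * √(c - a) := by
  calc √ε ≤ √(M ^ 2 * (c - a)) := Real.sqrt_le_sqrt <| h.diffusion_le.trans <|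
        mul_le_mul_of_nonneg_right (le_self_pow₀ hM two_ne_zero) (sub_nonneg.2 h.lt.le)
    _ = M * √(c - a) := by rw [Real.sqrt_mul (sq_nonneg M), Real.sqrt_sq (by linarith)]

end AdaptedCell

theorem continuous_convDiffOp {ε : ℝ} {b r y : ℝ → ℝ} (hb : Continuous b) (hr : Continuous r)
    (hy : ContDiff ℝ 2 y) : Continuous (convDiffOp ε b r y) := by
  have hy' : ContDiff ℝ 1 (deriv y) := hy.deriv'
  have : Continuous (deriv (deriv y)) := hy'.continuous_deriv le_rfl
  have : Continuous y := hy.continuous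
  have : Continuous (deriv y) := hy'.continuous
  unfold convDiffOp
  fun_prop

namespace CellFun

variable {a c ε B M β γ δ : ℝ} {p : ℕ} {b r f s u : ℝ → ℝ} {q : Polynomial ℝ}

theorem integral_residual_mul_interior (hb : Continuous b) (hr : Continuous r)
    (hf : Continuous f) (hs : ContDiff ℝ 2 s) (V : CellFun a c p) :
    (∫ t in a..c, (convDiffOp ε b r s t - f t) * V.interior.eval t) =
      ε * ((∫ t in a..c, deriv s t * V.interior.derivative.eval t)
        - (deriv s c * V.interior.eval c - deriv s a * V.interior.eval a))
      + (∫ t in a..c, b t * deriv s t * V.interior.eval t)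
      + (∫ t in a..c, r t * s t * V.interior.eval t)
      - ∫ t in a..c, f t * V.interior.eval t := by
  have hs' : ContDiff ℝ 1 (deriv s) := hs.deriv'
  have : Continuous (deriv s) := hs'.continuous
  have : Continuous (deriv (deriv s)) := hs'.continuous_deriv le_rfl
  have : Continuous s := hs.continuous
  have hint {g : ℝ → ℝ} (hg : Continuous g) : IntervalIntegrable g volume a c :=
    hg.intervalIntegrable a c
  have hparts := integral_deriv_mul_add_mul_deriv hs' (V.interior.contDiff_aeval 1) a c
  simp only [Polynomial.coe_aeval_eq_eval, Polynomial.deriv] at hparts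
  rw [intervalIntegral.integral_add (hint (by fun_prop)) (hint (by fun_prop))] at hparts
  have hsplit : (∫ t in a..c, (convDiffOp ε b r s t - f t) * V.interior.eval t)
      = -ε * (∫ t in a..c, deriv (deriv s) t * V.interior.eval t)
        + (∫ t in a..c, b t * deriv s t * V.interior.eval t)
        + (∫ t in a..c, r t * s t * V.interior.eval t)
        - ∫ t in a..c, f t * V.interior.eval t := by
    rw [← intervalIntegral.integral_const_mul,
      ← intervalIntegral.integral_add (hint (by fun_prop)) (hint (by fun_prop)),
      ← intervalIntegral.integral_add (hint (by fun_prop)) (hint (by fun_prop)),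
      ← intervalIntegral.integral_sub (hint (by fun_prop)) (hint (by fun_prop))]
    congr 1 with t
    rw [convDiffOp]
    ring
  rw [hsplit]
  linear_combination -ε * hparts

theorem form_conforming_sub_load (hb : ContDiff ℝ 1 b) (hr : Continuous r) (hf : Continuous f)
    (hs : ContDiff ℝ 2 s) (hq : q.natDegree ≤ p) (V : CellFun a c p) :
    (conforming a c hq).form ε b r V - (∫ t in a..c, f t * V.interior.eval t) =
      ε * (deriv s c * V.right - deriv s a * V.left)
      + ε * ((∫ t in a..c, (q.derivative.eval t - deriv s t) * V.interior.derivative.eval t)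
        - V.jumpRight * (q.derivative.eval c - deriv s c)
        + V.jumpLeft * (q.derivative.eval a - deriv s a))
      + (∫ t in a..c, b t * (q.derivative.eval t - deriv s t) * V.interior.eval t)
      + (∫ t in a..c, r t * (q.eval t - s t) * V.interior.eval t)
      + ∫ t in a..c, (convDiffOp ε b r s t - f t) * V.interior.eval t := by
  have : Continuous (deriv s) := hs.continuous_deriv one_le_two
  have : Continuous b := hb.continuous
  have : Continuous s := hs.continuous
  have hint {g : ℝ → ℝ} (hg : Continuous g) : IntervalIntegrable g volume a c :=
    hg.intervalIntegrable a c
  have hdiff : (∫ t in a..c, (q.derivative.eval t - deriv s t) * V.interior.derivative.eval t)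
      = (∫ t in a..c, q.derivative.eval t * V.interior.derivative.eval t)
        - ∫ t in a..c, deriv s t * V.interior.derivative.eval t := by
    simp only [sub_mul]
    exact intervalIntegral.integral_sub (hint (by fun_prop)) (hint (by fun_prop))
  have hconv : (∫ t in a..c, b t * (q.derivative.eval t - deriv s t) * V.interior.eval t)
      = (∫ t in a..c, b t * q.derivative.eval t * V.interior.eval t)
        - ∫ t in a..c, b t * deriv s t * V.interior.eval t := by
    simp only [mul_sub, sub_mul]
    exact intervalIntegral.integral_sub (hint (by fun_prop)) (hint (by fun_prop))
  have hreact : (∫ t in a..c, r t * (q.eval t - s t) * V.interior.eval t)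
      = (∫ t in a..c, r t * q.eval t * V.interior.eval t)
        - ∫ t in a..c, r t * s t * V.interior.eval t := by
    simp only [mul_sub, sub_mul]
    exact intervalIntegral.integral_sub (hint (by fun_prop)) (hint (by fun_prop))
  rw [form_conforming hb, hdiff, hconv, hreact,
    integral_residual_mul_interior hb.continuous hr hf hs V]
  simp only [jumpRight, jumpLeft]
  ring

theorem integral_mul_deriv_mul_interior (hb : ContDiff ℝ 1 b) {e : ℝ → ℝ} (he : ContDiff ℝ 1 e)
    (hea : e a = 0) (hec : e c = 0) (V : CellFun a c p) :
    (∫ t in a..c, b t * deriv e t * V.interior.eval t) =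
      -((∫ t in a..c, e t * deriv b t * V.interior.eval t)
        + ∫ t in a..c, e t * b t * V.interior.derivative.eval t) := by
  have : Continuous (deriv e) := he.continuous_deriv le_rfl
  have : Continuous e := he.continuous
  have : Continuous (deriv b) := hb.continuous_deriv le_rfl
  have : Continuous b := hb.continuous
  have hzero := integral_deriv_mul_add_mul_deriv he (contDiff_mul_interior hb V) a c
  rw [hea, hec, zero_mul, zero_mul, sub_zero] at hzero
  rw [eq_neg_iff_add_eq_zero, ← hzero,
    ← intervalIntegral.integral_add (Continuous.intervalIntegrable (by fun_prop) _ _)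
      (Continuous.intervalIntegrable (by fun_prop) _ _),
    ← intervalIntegral.integral_add (Continuous.intervalIntegrable (by fun_prop) _ _)
      (Continuous.intervalIntegrable (by fun_prop) _ _)]
  congr 1 with t
  rw [deriv_fun_mul (hb.differentiable one_ne_zero t) V.interior.differentiableAt,
    Polynomial.deriv]
  ring

section Bounds

variable (hC : StableCoefficients B β γ b r) (hcell : AdaptedCell ε M p a c) (V : CellFun a c p)
include hC hcell

theorem abs_integral_mul_interior_le (hε : 0 ≤ ε) {g : ℝ → ℝ} (hg : Continuous g) {K : ℝ}
    (hK : ∀ t ∈ Icc a c, |g t| ≤ K) :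
    |∫ t in a..c, g t * V.interior.eval t| ≤ K * √(V.energy ε b) := by
  have hac := hcell.lt
  have hbc : 0 ≤ b c := hC.pos.le.trans (hC.le c hcell.right_mem)
  have hK₀ : 0 ≤ K := (abs_nonneg _).trans (hK a (left_mem_Icc.2 hac.le))
  calc _ ≤ K * √(c - a) * intL2 a c (fun t => V.interior.eval t) :=
        abs_integral_mul_le_of_abs_le hac.le (by fun_prop) (by fun_prop) hK
    _ ≤ K * 1 * √(V.energy ε b) := by
        gcongr
        · exact intL2_nonneg _ _ _
        · exact Real.sqrt_le_one.2 hcell.width_le_one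
        · exact V.intL2_interior_le hε hac hbc
    _ = K * √(V.energy ε b) := by rw [mul_one]

variable {e : ℝ → ℝ} (he : ContDiff ℝ 1 e)
include he

theorem sqrt_mul_abs_integral_deriv_error_le (hε : 0 ≤ ε) (hp : 1 ≤ p)
    (he' : ∀ t ∈ Icc a c, |deriv e t| ≤ δ / (c - a)) :
    √ε * |∫ t in a..c, deriv e t * V.interior.derivative.eval t|
      ≤ δ / √(c - a) * (2 * √(V.energy ε b)) := by
  have hac := hcell.lt
  have hbc : 0 ≤ b c := hC.pos.le.trans (hC.le c hcell.right_mem)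
  have : Continuous (deriv e) := he.continuous_deriv le_rfl
  have hδ : 0 ≤ δ / (c - a) := (abs_nonneg _).trans (he' a (left_mem_Icc.2 hac.le))
  calc _ ≤ √ε * (δ / (c - a) * √(c - a) * intL2 a c fun t => V.interior.derivative.eval t) := by
        gcongr
        exact abs_integral_mul_le_of_abs_le hac.le (by fun_prop) (by fun_prop) he'
    _ = δ / (c - a) * √(c - a) * (√ε * intL2 a c fun t => V.interior.derivative.eval t) := by ring
    _ ≤ δ / (c - a) * √(c - a) * (2 * √(V.energy ε b)) :=
        mul_le_mul_of_nonneg_left (V.sqrt_mul_intL2_derivative_le hε hac hbc hp) (by positivity)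
    _ = δ / √(c - a) * (2 * √(V.energy ε b)) := by
        rw [div_mul_eq_mul_div, mul_div_assoc, Real.sqrt_div_self, ← div_eq_mul_inv]

theorem abs_diffusion_error_le (hM : 1 ≤ M) (hε : 0 ≤ ε) (hp : 1 ≤ p)
    (he' : ∀ t ∈ Icc a c, |deriv e t| ≤ δ / (c - a)) :
    |ε * ((∫ t in a..c, deriv e t * V.interior.derivative.eval t)
        - V.jumpRight * deriv e c + V.jumpLeft * deriv e a)|
      ≤ 4 * M * δ * √(V.energy ε b) := by
  have hac := hcell.lt
  have hbc : 0 ≤ b c := hC.pos.le.trans (hC.le c hcell.right_mem)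
  have hp' : (1 : ℝ) ≤ p := by exact_mod_cast hp
  set k := √(c - a)
  set Q := √(V.energy ε b)
  have hk : 0 < k := Real.sqrt_pos.2 (sub_pos.2 hac)
  have hk₂ : k ^ 2 = c - a := Real.sq_sqrt (sub_pos.2 hac).le
  have hδ : 0 ≤ δ / (c - a) := (abs_nonneg _).trans (he' a (left_mem_Icc.2 hac.le))
  have hpoint {j x : ℝ} (hj : √ε * (p * |j|) ≤ k * Q) (hx : x ∈ Icc a c) :
      √ε * |j * deriv e x| ≤ δ / k * Q := by
    calc √ε * |j * deriv e x| = √ε * (1 * |j|) * |deriv e x| := by rw [abs_mul]; ring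
      _ ≤ √ε * (p * |j|) * (δ / (c - a)) := by
          gcongr
          exact he' x hx
      _ ≤ k * Q * (δ / (c - a)) := by gcongr
      _ = δ / k * Q := by
          rw [← hk₂]
          field_simp
  have hint := V.sqrt_mul_abs_integral_deriv_error_le hC hcell he hε hp he'
  have hright := hpoint (V.sqrt_mul_abs_jumpRight_le hε hac hbc) (right_mem_Icc.2 hac.le)
  have hleft := hpoint (V.sqrt_mul_abs_jumpLeft_le hε hac hbc) (left_mem_Icc.2 hac.le)
  rw [abs_mul, abs_of_nonneg hε]
  calc _ ≤ ε * (|∫ t in a..c, deriv e t * V.interior.derivative.eval t|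
          + |V.jumpRight * deriv e c| + |V.jumpLeft * deriv e a|) := by
        gcongr
        exact (abs_add_le _ _).trans (add_le_add_left (abs_sub _ _) _)
    _ = √ε * (√ε * |∫ t in a..c, deriv e t * V.interior.derivative.eval t|
          + √ε * |V.jumpRight * deriv e c| + √ε * |V.jumpLeft * deriv e a|) := by
        nth_rw 1 [← Real.mul_self_sqrt hε]
        ring
    _ ≤ (M * k) * (δ / k * (2 * Q) + δ / k * Q + δ / k * Q) := by
        gcongr
        exact hcell.sqrt_diffusion_le hM
    _ = 4 * M * δ * Q := by
        field_simp
        ring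

theorem abs_convection_error_le_of_long (hε : 0 ≤ ε)
    (he' : ∀ t ∈ Icc a c, |deriv e t| ≤ δ / (c - a)) (hlong : 1 / 2 ≤ c - a) :
    |∫ t in a..c, b t * deriv e t * V.interior.eval t| ≤ 2 * B * δ * √(V.energy ε b) := by
  have hB : 0 ≤ B := (abs_nonneg _).trans (hC.abs_le c hcell.right_mem)
  have : Continuous (deriv e) := he.continuous_deriv le_rfl
  have : Continuous b := hC.contDiff.continuous
  have hw : 0 < c - a := sub_pos.2 hcell.lt
  have hδ : 0 ≤ δ := by
    simpa only [zero_mul] using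
      (le_div_iff₀ hw).1 ((abs_nonneg _).trans (he' a (left_mem_Icc.2 hcell.lt.le)))
  refine V.abs_integral_mul_interior_le hC hcell hε (by fun_prop) fun t ht => ?_
  calc |b t * deriv e t| ≤ B * (δ / (c - a)) := by
        rw [abs_mul]
        exact mul_le_mul (hC.abs_le t (hcell.subset ht)) (he' t ht) (abs_nonneg _) hB
    _ ≤ B * (δ / (1 / 2)) := by gcongr
    _ = 2 * B * δ := by ring

/-- On a short cell the derivative of the error is too large, and is moved onto `b V`. -/
theorem abs_convection_error_le_of_short (hε : 0 ≤ ε) (hp : 1 ≤ p) (hea : e a = 0) (hec : e c = 0)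
    (hδ : ∀ t ∈ Icc a c, |e t| ≤ δ) (hshort : c - a ≤ p * ε) :
    |∫ t in a..c, b t * deriv e t * V.interior.eval t| ≤ 3 * B * p * δ * √(V.energy ε b) := by
  have hac := hcell.lt
  have hbc : 0 ≤ b c := hC.pos.le.trans (hC.le c hcell.right_mem)
  have hB : 0 ≤ B := (abs_nonneg _).trans (hC.abs_le c hcell.right_mem)
  have hδ₀ : 0 ≤ δ := (abs_nonneg _).trans (hδ a (left_mem_Icc.2 hac.le))
  have hp' : (1 : ℝ) ≤ p := by exact_mod_cast hp
  have hb := hC.contDiff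
  have : Continuous e := he.continuous
  have : Continuous (deriv b) := hb.continuous_deriv le_rfl
  have : Continuous b := hb.continuous
  have hbound {g v : ℝ → ℝ} (hg : Continuous g) (hv : Continuous v)
      (hgB : ∀ x ∈ Icc (0 : ℝ) 1, |g x| ≤ B) :
      |∫ t in a..c, e t * g t * v t| ≤ δ * B * √(c - a) * intL2 a c v := by
    refine abs_integral_mul_le_of_abs_le hac.le (by fun_prop) (by fun_prop) fun t ht => ?_
    rw [abs_mul]
    exact mul_le_mul (hδ t ht) (hgB t (hcell.subset ht)) (abs_nonneg _) hδ₀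
  have hk₁ : √(c - a) ≤ 1 := Real.sqrt_le_one.2 hcell.width_le_one
  have hk : √(c - a) ≤ p * √ε := by
    refine Real.sqrt_le_iff.2 ⟨by positivity, hshort.trans ?_⟩
    rw [mul_pow, Real.sq_sqrt hε]
    gcongr
    exact le_self_pow₀ hp' two_ne_zero
  rw [V.integral_mul_deriv_mul_interior hb he hea hec, abs_neg]
  calc _ ≤ δ * B * √(c - a) * intL2 a c (fun t => V.interior.eval t)
          + δ * B * √(c - a) * intL2 a c (fun t => V.interior.derivative.eval t) :=
        (abs_add_le _ _).trans (add_le_add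
          (hbound (by fun_prop) (by fun_prop) hC.abs_deriv_le)
          (hbound (by fun_prop) (by fun_prop) hC.abs_le))
    _ ≤ δ * B * 1 * √(V.energy ε b)
          + δ * B * (p * √ε) * intL2 a c (fun t => V.interior.derivative.eval t) := by
        gcongr
        · exact intL2_nonneg _ _ _
        · exact V.intL2_interior_le hε hac hbc
        · exact intL2_nonneg _ _ _
    _ = δ * B * 1 * √(V.energy ε b)
          + δ * B * p * (√ε * intL2 a c (fun t => V.interior.derivative.eval t)) := by ring
    _ ≤ δ * B * p * √(V.energy ε b) + δ * B * p * (2 * √(V.energy ε b)) := by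
        refine add_le_add (by gcongr) ?_
        exact mul_le_mul_of_nonneg_left (V.sqrt_mul_intL2_derivative_le hε hac hbc hp)
          (by positivity)
    _ = 3 * B * p * δ * √(V.energy ε b) := by ring

theorem abs_convection_error_le (hε : 0 ≤ ε) (hp : 1 ≤ p) (hea : e a = 0) (hec : e c = 0)
    (hδ : ∀ t ∈ Icc a c, |e t| ≤ δ) (he' : ∀ t ∈ Icc a c, |deriv e t| ≤ δ / (c - a)) :
    |∫ t in a..c, b t * deriv e t * V.interior.eval t| ≤ 3 * B * p * δ * √(V.energy ε b) := by
  rcases hcell.long_or_short with hlong | hshort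
  · have hB : 0 ≤ B := (abs_nonneg _).trans (hC.abs_le c hcell.right_mem)
    have hδ₀ : 0 ≤ δ := (abs_nonneg _).trans (hδ a (left_mem_Icc.2 hcell.lt.le))
    have hp' : (1 : ℝ) ≤ p := by exact_mod_cast hp
    refine (V.abs_convection_error_le_of_long hC hcell he hε he' hlong).trans ?_
    have : 2 * B * δ ≤ 3 * B * p * δ := by nlinarith [mul_nonneg hB hδ₀]
    gcongr
  · exact V.abs_convection_error_le_of_short hC hcell he hε hp hea hec hδ hshort

end Bounds

theorem form_conforming_sub_load_le (hC : StableCoefficients B β γ b r)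
    (hcell : AdaptedCell ε M p a c) (hM : 1 ≤ M) (hε : 0 ≤ ε) (hp : 1 ≤ p) (hf : Continuous f)
    (h : CellApprox ε b r f u a c p δ s q) (V : CellFun a c p) :
    (conforming a c h.degree).form ε b r V - (∫ t in a..c, f t * V.interior.eval t) ≤
      ε * (deriv s c * V.right - deriv s a * V.left)
        + (4 * M + 4 * B + 1) * (p * δ) * √(V.energy ε b) := by
  have hs : ContDiff ℝ 2 s := contDiff_infty.1 h.smooth 2
  have hB : 0 ≤ B := (abs_nonneg _).trans (hC.abs_le c hcell.right_mem)
  have hδ : 0 ≤ δ := (abs_nonneg _).trans (h.err a (left_mem_Icc.2 hcell.lt.le))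
  have hp' : (1 : ℝ) ≤ p := by exact_mod_cast hp
  set e : ℝ → ℝ := fun t => q.eval t - s t with he_def
  have he : ContDiff ℝ 1 e := (q.contDiff_aeval 1).sub (hs.of_le one_le_two)
  have he' : deriv e = fun t => q.derivative.eval t - deriv s t := by
    ext t
    rw [he_def, deriv_fun_sub q.differentiableAt (hs.differentiable two_ne_zero t),
      Polynomial.deriv]
  have hderiv : ∀ t ∈ Icc a c, |deriv e t| ≤ δ / (c - a) := by
    simpa only [he'] using h.err_deriv
  have hdiff := V.abs_diffusion_error_le hC hcell he hM hε hp hderiv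
  have hconv := V.abs_convection_error_le hC hcell he hε hp (sub_eq_zero.2 h.interp_left)
    (sub_eq_zero.2 h.interp_right) h.err hderiv
  have hreact : |∫ t in a..c, r t * e t * V.interior.eval t| ≤ B * δ * √(V.energy ε b) := by
    have := hC.continuous
    refine V.abs_integral_mul_interior_le hC hcell hε (by fun_prop) fun t ht => ?_
    rw [abs_mul]
    exact mul_le_mul (hC.abs_reaction_le t (hcell.subset ht)) (h.err t ht) (abs_nonneg _) hB
  have hres : |∫ t in a..c, (convDiffOp ε b r s t - f t) * V.interior.eval t| ≤
      δ * √(V.energy ε b) :=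
    V.abs_integral_mul_interior_le hC hcell hε
      ((continuous_convDiffOp hC.contDiff.continuous hC.continuous hs).sub hf) h.residual
  rw [form_conforming_sub_load hC.contDiff hC.continuous hf hs]
  simp only [he'] at hdiff hconv
  have hpδ : δ * √(V.energy ε b) ≤ p * δ * √(V.energy ε b) := by
    gcongr
    exact le_mul_of_one_le_left hδ hp'
  nlinarith [le_of_abs_le hdiff, le_of_abs_le hconv, le_of_abs_le hreact, le_of_abs_le hres,
    mul_le_mul_of_nonneg_left hpδ (by positivity : 0 ≤ 4 * M + B + 1)]

end CellFun

section CellError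

variable {a c ε M δ : ℝ} {p : ℕ} {b r f s u : ℝ → ℝ} {q : Polynomial ℝ}

theorem cellNormSq_add_le (hε : 0 ≤ ε) (hac : a < c) (hb : 0 ≤ b c) {v w D F : ℝ → ℝ}
    (hv : Continuous v) (hw : Continuous w) (hD : Continuous D) (hF : Continuous F)
    (vl vr wl wr : ℝ) :
    cellNormSq ε b a c p (fun t => v t + w t) (vl + wl) (vr + wr) (fun t => D t + F t) ≤
      2 * cellNormSq ε b a c p v vl vr D + 2 * cellNormSq ε b a c p w wl wr F := by
  have hint {g h : ℝ → ℝ} (hg : Continuous g) (hh : Continuous h) :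
      (∫ t in a..c, (g t + h t) ^ 2) ≤ 2 * (∫ t in a..c, g t ^ 2) + 2 * ∫ t in a..c, h t ^ 2 := by
    rw [← intervalIntegral.integral_const_mul, ← intervalIntegral.integral_const_mul,
      ← intervalIntegral.integral_add (Continuous.intervalIntegrable (by fun_prop) _ _)
        (Continuous.intervalIntegrable (by fun_prop) _ _)]
    refine intervalIntegral.integral_mono_on hac.le
      (Continuous.intervalIntegrable (by fun_prop) _ _)
      (Continuous.intervalIntegrable (by fun_prop) _ _) fun t _ => ?_
    rw [← mul_add]
    exact add_sq_le
  have hsq (x y x' y' : ℝ) : (x + y - (x' + y')) ^ 2 ≤ 2 * (x - x') ^ 2 + 2 * (y - y') ^ 2 := by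
    rw [add_sub_add_comm, ← mul_add]
    exact add_sq_le
  have : 0 < c - a := sub_pos.2 hac
  calc _ ≤ ε * (2 * (∫ t in a..c, D t ^ 2) + 2 * ∫ t in a..c, F t ^ 2)
        + (2 * (∫ t in a..c, v t ^ 2) + 2 * ∫ t in a..c, w t ^ 2)
        + ε * p ^ 2 / (c - a) * ((2 * (v c - vr) ^ 2 + 2 * (w c - wr) ^ 2)
          + (2 * (v a - vl) ^ 2 + 2 * (w a - wl) ^ 2))
        + b c * (2 * (v c - vr) ^ 2 + 2 * (w c - wr) ^ 2) := by
        rw [cellNormSq]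
        gcongr
        · exact hint hD hF
        · exact hint hv hw
        all_goals exact hsq _ _ _ _
    _ = _ := by
        rw [cellNormSq, cellNormSq]
        ring

theorem CellApprox.diffusion_error_le (h : CellApprox ε b r f u a c p δ s q) (hε : 0 ≤ ε)
    (hac : a < c) (hM : ε ≤ M * (c - a)) (hu : ContDiff ℝ 1 u) :
    ε * (∫ t in a..c, deriv (fun t => u t - q.eval t) t ^ 2) ≤ (2 + 2 * M) * δ ^ 2 := by
  have hs : ContDiff ℝ 1 s := contDiff_infty.1 h.smooth 1
  have : Continuous (deriv u) := hu.continuous_deriv le_rfl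
  have : Continuous (deriv s) := hs.continuous_deriv le_rfl
  have hw : 0 < c - a := sub_pos.2 hac
  have hpoly : (∫ t in a..c, (q.derivative.eval t - deriv s t) ^ 2) ≤
      (c - a) * (δ / (c - a)) ^ 2 :=
    integral_sq_le_of_abs_le hac.le (by fun_prop) h.err_deriv
  have hsplit : (∫ t in a..c, deriv (fun t => u t - q.eval t) t ^ 2) ≤
      2 * (∫ t in a..c, (deriv u t - deriv s t) ^ 2)
        + 2 * ∫ t in a..c, (q.derivative.eval t - deriv s t) ^ 2 := by
    rw [← intervalIntegral.integral_const_mul, ← intervalIntegral.integral_const_mul,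
      ← intervalIntegral.integral_add (Continuous.intervalIntegrable (by fun_prop) _ _)
        (Continuous.intervalIntegrable (by fun_prop) _ _)]
    have hderiv : deriv (fun t => u t - q.eval t) = fun t => deriv u t - q.derivative.eval t := by
      ext t
      rw [deriv_fun_sub (hu.differentiable one_ne_zero t) q.differentiableAt, Polynomial.deriv]
    rw [hderiv]
    refine intervalIntegral.integral_mono_on hac.le
      (Continuous.intervalIntegrable (by fun_prop) _ _)
      (Continuous.intervalIntegrable (by fun_prop) _ _) fun t _ => ?_
    nlinarith [sq_nonneg ((deriv u t - deriv s t) + (q.derivative.eval t - deriv s t))]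
  calc _ ≤ ε * (2 * (∫ t in a..c, (deriv u t - deriv s t) ^ 2)
        + 2 * ((c - a) * (δ / (c - a)) ^ 2)) := by gcongr; exact hsplit.trans (by gcongr)
    _ = 2 * (ε * ∫ t in a..c, (deriv u t - deriv s t) ^ 2) + 2 * (ε / (c - a)) * δ ^ 2 := by
      field_simp
    _ ≤ 2 * δ ^ 2 + 2 * M * δ ^ 2 := by
      gcongr
      · exact h.near_deriv
      · exact (div_le_iff₀ hw).2 hM
    _ = _ := by ring

theorem CellApprox.cellNormSq_sub_le (h : CellApprox ε b r f u a c p δ s q)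
    (hcell : AdaptedCell ε M p a c) (hε : 0 ≤ ε) (hM : 1 ≤ M) (hu : ContDiff ℝ 1 u)
    {D : ℝ → ℝ}
    (hD : IsWeakDerivOn a c (p - 1) (fun t => u t - q.eval t) (u a - q.eval a) (u c - q.eval c) D) :
    cellNormSq ε b a c p (fun t => u t - q.eval t) (u a - q.eval a) (u c - q.eval c) D
      ≤ 8 * M * δ ^ 2 := by
  have hac := hcell.lt
  have hderiv : ε * (∫ t in a..c, D t ^ 2) ≤ (2 + 2 * M) * δ ^ 2 :=
    (mul_le_mul_of_nonneg_left (hD.integral_sq_le hac.le (hu.sub (q.contDiff_aeval 1))) hε).trans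
      (h.diffusion_error_le hε hac hcell.diffusion_le hu)
  have hvalue : (∫ t in a..c, (u t - q.eval t) ^ 2) ≤ (c - a) * (2 * δ) ^ 2 := by
    have := hu.continuous
    refine integral_sq_le_of_abs_le hac.le (by fun_prop) fun t ht => ?_
    calc |u t - q.eval t| = |(u t - s t) - (q.eval t - s t)| := by rw [sub_sub_sub_cancel_right]
      _ ≤ δ + δ := (abs_sub _ _).trans (add_le_add (h.near t ht) (h.err t ht))
      _ = 2 * δ := by ring
  rw [cellNormSq, sub_self, sub_self]
  nlinarith [mul_nonneg (sub_nonneg.2 hM) (sq_nonneg δ),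
    mul_nonneg (sub_nonneg.2 hcell.width_le_one) (sq_nonneg δ)]

theorem CellApprox.cellNormSq_error_le (h : CellApprox ε b r f u a c p δ s q)
    (hcell : AdaptedCell ε M p a c) (hε : 0 ≤ ε) (hM : 1 ≤ M) (hb : 0 ≤ b c)
    (hu : ContDiff ℝ 1 u) (U : CellFun a c p) {D : ℝ → ℝ}
    (hD : IsWeakDerivOn a c (p - 1) (fun t => u t - U.interior.eval t) (u a - U.left)
      (u c - U.right) D) :
    cellNormSq ε b a c p (fun t => u t - U.interior.eval t) (u a - U.left) (u c - U.right) D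
      ≤ 2 * (CellFun.conforming a c h.degree - U).energy ε b + 16 * M * δ ^ 2 := by
  set E := CellFun.conforming a c h.degree - U with hE
  have := hu.continuous
  have hDc : Continuous D := by
    obtain ⟨⟨P, -, hP⟩, -⟩ := hD
    rw [funext hP]
    exact P.continuous
  have hrest : IsWeakDerivOn a c (p - 1) (fun t => u t - q.eval t) (u a - q.eval a)
      (u c - q.eval c) (fun t => D t - E.weakDeriv.eval t) := by
    have hsub := hD.sub E.isWeakDerivOn (by fun_prop) (by fun_prop)
    simpa [hE, CellFun.conforming] using hsub
  have hsum := cellNormSq_add_le (p := p) hε hcell.lt hb E.interior.continuous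
    (w := fun t => u t - q.eval t) (by fun_prop) E.weakDeriv.continuous
    (F := fun t => D t - E.weakDeriv.eval t) (by fun_prop) E.left E.right (u a - q.eval a)
    (u c - q.eval c)
  have hrest_le := h.cellNormSq_sub_le hcell hε hM hu hrest
  have hsplit : 2 * E.energy ε b + 2 * (8 * M * δ ^ 2)
      = 2 * E.energy ε b + 16 * M * δ ^ 2 := by ring
  rw [← hsplit]
  refine le_of_eq_of_le ?_ (hsum.trans (add_le_add le_rfl
    (mul_le_mul_of_nonneg_left hrest_le zero_le_two)))
  simp only [hE, CellFun.conforming, CellFun.interior_sub, CellFun.left_sub, CellFun.right_sub,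
    Polynomial.eval_sub, add_sub_cancel, sub_add_sub_cancel']

end CellError

/-! ### The error on the mesh -/

section MeshError

variable {N p : ℕ} {m : Mesh N} {ε : ℝ} {b r f : ℝ → ℝ}

theorem normP2_le_two_mul_sum_cellNormSq (hε : 0 ≤ ε) (hb : ∀ j, 0 ≤ b (m.xr j))
    (v : Fin N → ℝ → ℝ) (vb : Fin (N + 1) → ℝ) (D : Fin N → ℝ → ℝ) :
    normP2 m ε 1 b (stdPen m ε p) v vb D ≤
      2 * ∑ j, cellNormSq ε b (m.xl j) (m.xr j) p (v j) (vb j.castSucc) (vb j.succ) (D j) := by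
  have hlt (j : Fin N) : m.xl j < m.xr j := m.mono Fin.castSucc_lt_succ
  simp only [normP2, Sform, Scform, Jsemi2, Finset.mul_sum, ← Finset.sum_add_distrib]
  refine Finset.sum_le_sum fun j _ => ?_
  have hD : 0 ≤ ε * ∫ t in (m.xl j)..(m.xr j), D j t ^ 2 :=
    mul_nonneg hε (intervalIntegral.integral_nonneg (hlt j).le fun _ _ => sq_nonneg _)
  have hv : 0 ≤ ∫ t in (m.xl j)..(m.xr j), v j t ^ 2 :=
    intervalIntegral.integral_nonneg (hlt j).le fun _ _ => sq_nonneg _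
  have : 0 < m.xr j - m.xl j := sub_pos.2 (hlt j)
  have hpen : 0 ≤ ε * p ^ 2 / (m.xr j - m.xl j) *
      ((v j (m.xr j) - vb j.succ) ^ 2 + (v j (m.xl j) - vb j.castSucc) ^ 2) := by positivity
  have hjump : 0 ≤ b (m.xr j) * (v j (m.xr j) - vb j.succ) ^ 2 :=
    mul_nonneg (hb j) (sq_nonneg _)
  simp only [cellNormSq, stdPen, Mesh.width]
  split_ifs <;> linarith

/-- A family of cell functions is single-valued at the nodes, where it takes the values `vb`; this
is what makes it an element of the weak Galerkin space. -/
def HasNodeValues (V : ∀ j, CellFun (m.xl j) (m.xr j) p) (vb : Fin (N + 1) → ℝ) : Prop :=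
  ∀ j, (V j).left = vb j.castSucc ∧ (V j).right = vb j.succ

theorem IsWGsol.exists_cellFun {up : Fin N → ℝ → ℝ} {upb : Fin (N + 1) → ℝ}
    {Du Dcu : Fin N → ℝ → ℝ} (h : IsWGsol m ε 1 b r f p up upb Du Dcu) :
    ∃ U : ∀ j, CellFun (m.xl j) (m.xr j) p, HasNodeValues U upb ∧
      (∀ j t, up j t = (U j).interior.eval t) ∧
      ∀ (V : ∀ j, CellFun (m.xl j) (m.xr j) p) (vb : Fin (N + 1) → ℝ), HasNodeValues V vb →
        vb 0 = 0 → vb (Fin.last N) = 0 →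
        ∑ j, (U j).form ε b r (V j) =
          ∑ j, ∫ t in (m.xl j)..(m.xr j), f t * (V j).interior.eval t := by
  obtain ⟨hup, -, -, hD, hDc, hgal⟩ := h
  choose P hPdeg hP using hup
  choose Q hQ using fun j => (hD j).1
  let U (j : Fin N) : CellFun (m.xl j) (m.xr j) p :=
    { interior := P j
      left := upb j.castSucc
      right := upb j.succ
      weakDeriv := Q j
      natDegree_le := hPdeg j
      isWeakDerivOn := funext (hP j) ▸ funext (hQ j).2 ▸ hD j }
  refine ⟨U, fun _ => ⟨rfl, rfl⟩, hP, fun V vb hV h0 h1 => ?_⟩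
  have hDV : IsWeakDeriv m (p - 1) (fun j t => (V j).interior.eval t) vb
      (fun j t => (V j).weakDeriv.eval t) := fun j => by
    rw [← (hV j).1, ← (hV j).2]
    exact (V j).isWeakDerivOn
  have hconv (j : Fin N) : (∫ t in (m.xl j)..(m.xr j), Dcu j t * (V j).interior.eval t)
      = (U j).convection b (V j) := by
    rw [(hDc j).2 _ (V j).natDegree_le, CellFun.convection]
    simp only [U, hP]
  have hgalV := hgal _ vb (fun j => ⟨_, (V j).natDegree_le, fun _ => rfl⟩) h0 h1 _ hDV
  rw [← hgalV]
  simp only [Aform, Sform, Scform, Finset.mul_sum, ← Finset.sum_add_distrib]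
  refine Finset.sum_congr rfl fun j _ => ?_
  rw [hconv, CellFun.form]
  simp only [U, hP, (hQ _).2, CellFun.jumpRight, CellFun.jumpLeft, (hV _).1, (hV _).2, stdPen,
    Mesh.width, one_mul, mul_assoc]

theorem min_mul_sum_energy_le {B β γ : ℝ} (hC : StableCoefficients B β γ b r) (hε : 0 ≤ ε)
    (hsub : ∀ j, Icc (m.xl j) (m.xr j) ⊆ Icc 0 1) {V : ∀ j, CellFun (m.xl j) (m.xr j) p}
    {vb : Fin (N + 1) → ℝ} (hV : HasNodeValues V vb) (h0 : vb 0 = 0)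
    (h1 : vb (Fin.last N) = 0) :
    min γ (1 / 2) * ∑ j, (V j).energy ε b ≤ ∑ j, (V j).form ε b r (V j) := by
  have hlt (j : Fin N) : m.xl j < m.xr j := m.mono Fin.castSucc_lt_succ
  have hb {x : ℝ} (hx : x ∈ Icc (0 : ℝ) 1) : 0 ≤ b x := hC.pos.le.trans (hC.le x hx)
  have hcell (j : Fin N) := CellFun.form_self_ge hε (hlt j) hC.contDiff hC.continuous
    (hb (hsub j (left_mem_Icc.2 (hlt j).le))) (hb (hsub j (right_mem_Icc.2 (hlt j).le)))
    (fun t ht => hC.coercive t (hsub j ht)) (V j)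
  have hsum := Finset.sum_le_sum fun j (_ : j ∈ Finset.univ) => hcell j
  have htelescope : ∑ j, (b (m.xr j) * (V j).right ^ 2 - b (m.xl j) * (V j).left ^ 2) = 0 := by
    let F (i : Fin (N + 1)) : ℝ := b (m.pt i) * vb i ^ 2
    have hsucc := Fin.sum_univ_succ F
    have hcast := Fin.sum_univ_castSucc F
    have hF0 : F 0 = 0 := by simp [F, h0]
    have hF1 : F (Fin.last N) = 0 := by simp [F, h1]
    simp only [(hV _).1, (hV _).2, Finset.sum_sub_distrib]
    change ∑ j : Fin N, F j.succ - ∑ j : Fin N, F j.castSucc = 0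
    linarith
  rw [Finset.sum_add_distrib, ← Finset.sum_div, htelescope, ← Finset.mul_sum] at hsum
  simpa only [zero_div, add_zero] using hsum

theorem sum_le_of_mul_sum_le_mul_sum_sqrt {Q : Fin N → ℝ} (hQ : ∀ j, 0 ≤ Q j) {μ L : ℝ}
    (hμ : 0 < μ) (h : μ * ∑ j, Q j ≤ L * ∑ j, √(Q j)) : ∑ j, Q j ≤ N * (L / μ) ^ 2 := by
  have hCS : (∑ j, √(Q j)) ^ 2 ≤ N * ∑ j, Q j := by
    simpa [Real.sq_sqrt, hQ] using
      sq_sum_le_card_mul_sum_sq (s := Finset.univ) (f := fun j => √(Q j))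
  have hdiv : ∑ j, Q j ≤ L / μ * ∑ j, √(Q j) := by
    rw [div_mul_eq_mul_div, le_div_iff₀' hμ]
    exact h
  have hQ₀ : 0 ≤ ∑ j, Q j := Finset.sum_nonneg fun j _ => hQ j
  rcases hQ₀.eq_or_lt with h₀ | hpos
  · rw [← h₀]
    positivity
  refine le_of_mul_le_mul_right ?_ hpos
  calc (∑ j, Q j) * ∑ j, Q j ≤ (L / μ * ∑ j, √(Q j)) ^ 2 := by
        rw [← sq]
        gcongr
    _ = (L / μ) ^ 2 * (∑ j, √(Q j)) ^ 2 := mul_pow _ _ _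
    _ ≤ (L / μ) ^ 2 * (N * ∑ j, Q j) := by gcongr
    _ = N * (L / μ) ^ 2 * ∑ j, Q j := by ring

variable {B M β γ δ k : ℝ} {u : ℝ → ℝ} {s : Fin N → ℝ → ℝ} {q : Fin N → Polynomial ℝ}

theorem form_discrete_error_le {a c : ℝ} {s : ℝ → ℝ} {q : Polynomial ℝ}
    (hC : StableCoefficients B β γ b r) (hcell : AdaptedCell ε M p a c) (hM : 1 ≤ M)
    (hε : 0 ≤ ε) (hp : 1 ≤ p) (hf : Continuous f) (h : CellApprox ε b r f u a c p δ s q)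
    (U : CellFun a c p) {E : CellFun a c p} (hE : E = CellFun.conforming a c h.degree - U) :
    E.form ε b r E ≤ ε * (deriv s c * E.right - deriv s a * E.left)
      + (4 * M + 4 * B + 1) * (p * δ) * √(E.energy ε b)
      + ((∫ t in a..c, f t * E.interior.eval t) - U.form ε b r E) := by
  have hcons := CellFun.form_conforming_sub_load_le hC hcell hM hε hp hf h E
  have hsplit := CellFun.form_sub_left (ε := ε) hC.continuous hC.contDiff
    (CellFun.conforming a c h.degree) U E
  rw [← hE] at hsplit
  linarith

theorem sum_energy_discrete_error_le (hC : StableCoefficients B β γ b r) (hγ : 0 < γ) (hM : 1 ≤ M)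
    (hε : 0 ≤ ε) (hp : 1 ≤ p) (hf : Continuous f)
    (hcell : ∀ j, AdaptedCell ε M p (m.xl j) (m.xr j))
    (happrox : ∀ j, CellApprox ε b r f u (m.xl j) (m.xr j) p δ (s j) (q j))
    {U E : ∀ j, CellFun (m.xl j) (m.xr j) p}
    (hE : ∀ j, E j = CellFun.conforming (m.xl j) (m.xr j) (happrox j).degree - U j)
    {vb : Fin (N + 1) → ℝ} (hEv : HasNodeValues E vb) (h0 : vb 0 = 0) (h1 : vb (Fin.last N) = 0)
    (hgal : ∑ j, (U j).form ε b r (E j) =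
      ∑ j, ∫ t in (m.xl j)..(m.xr j), f t * (E j).interior.eval t)
    (hkink : ε * ∑ j, (deriv (s j) (m.xr j) * (E j).right - deriv (s j) (m.xl j) * (E j).left)
      ≤ k * (p * δ) * ∑ j, √((E j).energy ε b)) :
    ∑ j, (E j).energy ε b ≤ N * ((4 * M + 4 * B + 1 + k) * (p * δ) / min γ (1 / 2)) ^ 2 := by
  have hb (j : Fin N) : 0 ≤ b (m.xr j) := hC.pos.le.trans (hC.le _ (hcell j).right_mem)
  have hform := Finset.sum_le_sum fun j (_ : j ∈ Finset.univ) =>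
    form_discrete_error_le hC (hcell j) hM hε hp hf (happrox j) (U j) (hE j)
  rw [Finset.sum_add_distrib, Finset.sum_add_distrib, Finset.sum_sub_distrib, ← Finset.mul_sum,
    ← Finset.mul_sum, hgal, sub_self, add_zero] at hform
  have hcoercive := min_mul_sum_energy_le hC hε (fun j => (hcell j).subset) hEv h0 h1
  refine sum_le_of_mul_sum_le_mul_sum_sqrt
    (fun j => (E j).energy_nonneg hε (hcell j).lt (hb j)) (by positivity) ?_
  linarith

/-- The constant of the squared error bound, per cell. `B`, `M` and `γ` refer to the coefficients
and the mesh, `k` measures the kinks of the cellwise approximations at the nodes. -/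
def errorConst (B M γ k : ℝ) : ℝ := 4 * ((4 * M + 4 * B + 1 + k) / min γ (1 / 2)) ^ 2 + 32 * M

theorem errorConst_pos {M : ℝ} (hM : 0 < M) (B γ k : ℝ) : 0 < errorConst B M γ k := by
  rw [errorConst]
  positivity

theorem IsWGsol.normP2_error_le (hC : StableCoefficients B β γ b r) (hγ : 0 < γ) (hM : 1 ≤ M)
    (hε : 0 ≤ ε) (hp : 1 ≤ p) (hf : Continuous f) (hu : ContDiff ℝ 1 u) (hu0 : u 0 = 0)
    (hu1 : u 1 = 0) (hcell : ∀ j, AdaptedCell ε M p (m.xl j) (m.xr j))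
    (happrox : ∀ j, CellApprox ε b r f u (m.xl j) (m.xr j) p δ (s j) (q j))
    (hkink : ∀ (V : ∀ j, CellFun (m.xl j) (m.xr j) p) (vb : Fin (N + 1) → ℝ),
      HasNodeValues V vb → vb 0 = 0 → vb (Fin.last N) = 0 →
      ε * ∑ j, (deriv (s j) (m.xr j) * (V j).right - deriv (s j) (m.xl j) * (V j).left)
        ≤ k * (p * δ) * ∑ j, √((V j).energy ε b))
    {up : Fin N → ℝ → ℝ} {upb : Fin (N + 1) → ℝ} {Du Dcu D : Fin N → ℝ → ℝ}
    (hsol : IsWGsol m ε 1 b r f p up upb Du Dcu)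
    (hD : IsWeakDeriv m (p - 1) (fun j t => u t - up j t) (fun i => u (m.pt i) - upb i) D) :
    normP2 m ε 1 b (stdPen m ε p) (fun j t => u t - up j t) (fun i => u (m.pt i) - upb i) D ≤
      N * errorConst B M γ k * (p * δ) ^ 2 := by
  obtain ⟨U, hU, hup, hgal⟩ := hsol.exists_cellFun
  have hb (j : Fin N) : 0 ≤ b (m.xr j) := hC.pos.le.trans (hC.le _ (hcell j).right_mem)
  let E (j : Fin N) := CellFun.conforming _ _ (happrox j).degree - U j
  have hEv : HasNodeValues E fun i => u (m.pt i) - upb i := fun j =>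
    ⟨congrArg₂ (· - ·) ((happrox j).interp_left.trans (happrox j).eq_left) (hU j).1,
      congrArg₂ (· - ·) ((happrox j).interp_right.trans (happrox j).eq_right) (hU j).2⟩
  have hE0 : u (m.pt 0) - upb 0 = 0 := by rw [m.left, hu0, hsol.2.1, sub_zero]
  have hE1 : u (m.pt (Fin.last N)) - upb (Fin.last N) = 0 := by
    rw [m.right, hu1, hsol.2.2.1, sub_zero]
  have henergy := sum_energy_discrete_error_le hC hγ hM hε hp hf hcell happrox (fun _ => rfl) hEv
    hE0 hE1 (hgal E _ hEv hE0 hE1) (hkink E _ hEv hE0 hE1)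
  have hcellNorm (j : Fin N) : cellNormSq ε b (m.xl j) (m.xr j) p (fun t => u t - up j t)
      (u (m.xl j) - upb j.castSucc) (u (m.xr j) - upb j.succ) (D j)
      ≤ 2 * (E j).energy ε b + 16 * M * (p * δ) ^ 2 := by
    have hδ : 0 ≤ δ := (abs_nonneg _).trans ((happrox j).err _ (left_mem_Icc.2 (hcell j).lt.le))
    have hp' : (1 : ℝ) ≤ p := by exact_mod_cast hp
    have hδp : δ ≤ p * δ := le_mul_of_one_le_left hδ hp'
    have hDj := hD j
    simp only [hup j, ← (hU j).1, ← (hU j).2] at hDj ⊢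
    exact ((happrox j).cellNormSq_error_le (hcell j) hε hM (hb j) hu (U j) hDj).trans (by gcongr)
  calc normP2 m ε 1 b (stdPen m ε p) (fun j t => u t - up j t) (fun i => u (m.pt i) - upb i) D
      ≤ 2 * ∑ j, (2 * (E j).energy ε b + 16 * M * (p * δ) ^ 2) :=
        (normP2_le_two_mul_sum_cellNormSq hε hb _ _ _).trans <|
          mul_le_mul_of_nonneg_left (Finset.sum_le_sum fun j _ => hcellNorm j) zero_le_two
    _ = 4 * (∑ j, (E j).energy ε b) + N * (32 * M) * (p * δ) ^ 2 := by
        rw [Finset.sum_add_distrib, ← Finset.mul_sum, Finset.sum_const, Finset.card_univ,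
          Fintype.card_fin, nsmul_eq_mul]
        ring
    _ ≤ 4 * (N * ((4 * M + 4 * B + 1 + k) * (p * δ) / min γ (1 / 2)) ^ 2)
        + N * (32 * M) * (p * δ) ^ 2 := by gcongr
    _ = N * errorConst B M γ k * (p * δ) ^ 2 := by
        rw [errorConst]
        ring

end MeshError

/-! ### Boundary layer meshes -/

section BoundaryLayerMesh

variable {p : ℕ} {ε B G κ β γ M δ : ℝ} {b r f s u : ℝ → ℝ}

theorem AnalyticBound.stableCoefficients (hG : 0 ≤ G) (hb : AnalyticBound B G b)
    (hr : AnalyticBound B G r) (hβ : 0 < β) (hbβ : ∀ x ∈ Icc (0 : ℝ) 1, β ≤ b x)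
    (hγ : ∀ x ∈ Icc (0 : ℝ) 1, γ ≤ r x - deriv b x / 2) :
    StableCoefficients (B + B * G) β γ b r := by
  have hB : 0 ≤ B := (abs_nonneg _).trans (hb.abs_le (left_mem_Icc.2 zero_le_one))
  have hBG : 0 ≤ B * G := mul_nonneg hB hG
  exact
    { contDiff := contDiff_infty.1 hb.1 1
      continuous := hr.1.continuous
      abs_le := fun x hx => (hb.abs_le hx).trans (le_add_of_nonneg_right hBG)
      abs_deriv_le := fun x hx => (hb.abs_deriv_le hx).trans (le_add_of_nonneg_left hB)
      abs_reaction_le := fun x hx => (hr.abs_le hx).trans (le_add_of_nonneg_right hBG)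
      pos := hβ
      le := hbβ
      coercive := hγ }

theorem AdaptedCell.unit (hε : ε ≤ 1) (hM : 1 ≤ M) : AdaptedCell ε M p 0 1 where
  lt := zero_lt_one
  subset := Subset.rfl
  diffusion_le := by linarith
  long_or_short := Or.inl (by norm_num)

theorem AdaptedCell.outer (hε : ε ≤ 1) (hκ : 0 ≤ κ * p * ε) (hM : 2 ≤ M)
    (h : κ * p * ε ≤ 1 / 2) : AdaptedCell ε M p 0 (1 - κ * p * ε) where
  lt := by linarith
  subset := Icc_subset_Icc le_rfl (sub_le_self _ hκ)
  diffusion_le := by nlinarith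
  long_or_short := Or.inl (by linarith)

theorem AdaptedCell.layer (hε : 0 < ε) (hκ : 0 < κ) (hκ1 : κ ≤ 1) (hp : 1 ≤ p)
    (hM : 1 / κ ≤ M) (h : κ * p * ε ≤ 1 / 2) : AdaptedCell ε M p (1 - κ * p * ε) 1 := by
  have hp' : (1 : ℝ) ≤ p := by exact_mod_cast hp
  have hwidth : 0 < κ * p * ε := by positivity
  refine ⟨by linarith, Icc_subset_Icc (by linarith) le_rfl, ?_, Or.inr ?_⟩
  · calc ε ≤ p * ε := le_mul_of_one_le_left hε.le hp'
      _ = 1 / κ * (κ * p * ε) := by field_simp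
      _ ≤ M * (κ * p * ε) := by gcongr
      _ = M * (1 - (1 - κ * p * ε)) := by ring
  · calc 1 - (1 - κ * p * ε) = κ * (p * ε) := by ring
      _ ≤ p * ε := mul_le_of_le_one_left (by positivity) hκ1

theorem CellFun.abs_right_le {a c : ℝ} (hε : 0 ≤ ε) (hac : 1 / 2 ≤ c - a) (hp : 1 ≤ p)
    (hβ : 0 < β) (hb : β ≤ b c) (V : CellFun a c p) :
    |V.right| ≤ (16 + 2 / β) * (p * √(V.energy ε b)) := by
  have hlt : a < c := by linarith
  have hE : 0 ≤ V.energy ε b := V.energy_nonneg hε hlt (hβ.le.trans hb)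
  have hp' : (1 : ℝ) ≤ p := by exact_mod_cast hp
  have hone : 1 ≤ 16 + 2 / β := by
    have : 0 < 2 / β := by positivity
    linarith
  refine abs_le_of_sq_le_sq ?_ (by positivity)
  rw [mul_pow, mul_pow, Real.sq_sqrt hE]
  calc V.right ^ 2 ≤ 2 * ((p + 1) ^ 2 / (c - a) + 1 / β) * V.energy ε b :=
        V.right_sq_le hε hlt hβ hb
    _ ≤ 2 * ((p + p) ^ 2 / (1 / 2) + 1 / β * p ^ 2) * V.energy ε b := by
        gcongr
        exact le_mul_of_one_le_right (by positivity) (one_le_pow₀ hp')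
    _ = (16 + 2 / β) * (p ^ 2 * V.energy ε b) := by ring
    _ ≤ (16 + 2 / β) ^ 2 * (p ^ 2 * V.energy ε b) := by
        gcongr
        exact le_self_pow₀ hone two_ne_zero

section Error

variable (hC : StableCoefficients B β γ b r) (hγ : 0 < γ) (hM : 1 ≤ M) (hε : 0 ≤ ε)
  (hp : 1 ≤ p) (hf : Continuous f) (hu : ContDiff ℝ 1 u) (hu0 : u 0 = 0) (hu1 : u 1 = 0)
include hC hγ hM hε hp hf hu hu0 hu1

theorem IsWGsol.normP2_error_le_of_one_cell {m : Mesh 1} {k : ℝ} (hk : 0 ≤ k)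
    (hcell : AdaptedCell ε M p 0 1) {q : Polynomial ℝ} (h : CellApprox ε b r f u 0 1 p δ u q)
    {up : Fin 1 → ℝ → ℝ} {upb : Fin 2 → ℝ} {Du Dcu D : Fin 1 → ℝ → ℝ}
    (hsol : IsWGsol m ε 1 b r f p up upb Du Dcu)
    (hD : IsWeakDeriv m (p - 1) (fun j t => u t - up j t) (fun i => u (m.pt i) - upb i) D) :
    normP2 m ε 1 b (stdPen m ε p) (fun j t => u t - up j t) (fun i => u (m.pt i) - upb i) D ≤
      (1 : ℕ) * errorConst B M γ k * (p * δ) ^ 2 := by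
  have hleft (j : Fin 1) : m.xl j = 0 := Subsingleton.elim j 0 ▸ m.left
  have hright (j : Fin 1) : m.xr j = 1 := Subsingleton.elim j 0 ▸ m.right
  have hδ : 0 ≤ δ := (abs_nonneg _).trans (h.err 0 (left_mem_Icc.2 zero_le_one))
  refine hsol.normP2_error_le (s := fun _ => u) (q := fun _ => q) hC hγ hM hε hp hf hu hu0 hu1
    (fun j => by rwa [hleft, hright]) (fun j => by rwa [hleft, hright])
    (fun V vb hV h0 h1 => ?_) hD
  have hV₀ : (V 0).left = 0 := (hV 0).1.trans h0
  have hV₁ : (V 0).right = 0 := (hV 0).2.trans h1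
  rw [Fin.sum_univ_one, Fin.sum_univ_one, hV₀, hV₁, mul_zero, mul_zero, sub_zero, mul_zero]
  positivity

theorem IsWGsol.normP2_error_le_of_two_cells {m : Mesh 2} {τ : ℝ} {q₁ q₂ : Polynomial ℝ}
    (hτ : m.pt 1 = τ) (hhalf : 1 / 2 ≤ τ) (hcell₁ : AdaptedCell ε M p 0 τ)
    (hcell₂ : AdaptedCell ε M p τ 1) (h₁ : CellApprox ε b r f u 0 τ p δ s q₁)
    (h₂ : CellApprox ε b r f u τ 1 p δ u q₂) (hkink : ε * |deriv s τ - deriv u τ| ≤ δ)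
    {up : Fin 2 → ℝ → ℝ} {upb : Fin 3 → ℝ} {Du Dcu D : Fin 2 → ℝ → ℝ}
    (hsol : IsWGsol m ε 1 b r f p up upb Du Dcu)
    (hD : IsWeakDeriv m (p - 1) (fun j t => u t - up j t) (fun i => u (m.pt i) - upb i) D) :
    normP2 m ε 1 b (stdPen m ε p) (fun j t => u t - up j t) (fun i => u (m.pt i) - upb i) D ≤
      (2 : ℕ) * errorConst B M γ (16 + 2 / β) * (p * δ) ^ 2 := by
  have hβ := hC.pos
  have hδ : 0 ≤ δ := (abs_nonneg _).trans (h₁.err 0 (left_mem_Icc.2 hcell₁.lt.le))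
  have hl₀ : m.xl 0 = 0 := m.left
  have hr₀ : m.xr 0 = τ := hτ
  have hl₁ : m.xl 1 = τ := hτ
  have hr₁ : m.xr 1 = 1 := m.right
  refine hsol.normP2_error_le (s := ![s, u]) (q := ![q₁, q₂]) hC hγ hM hε hp hf hu hu0 hu1
    (Fin.forall_fin_two.2 ⟨by rwa [hl₀, hr₀], by rwa [hl₁, hr₁]⟩)
    (Fin.forall_fin_two.2 ⟨by rwa [hl₀, hr₀], by rwa [hl₁, hr₁]⟩) (fun V vb hV h0 h1 => ?_) hD
  have hV₀ : (V 0).left = 0 := (hV 0).1.trans h0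
  have hV₁ : (V 1).right = 0 := (hV 1).2.trans h1
  have hnode : (V 1).left = (V 0).right := (hV 1).1.trans (hV 0).2.symm
  have htrace : |(V 0).right| ≤ (16 + 2 / β) * (p * √((V 0).energy ε b)) := by
    refine (V 0).abs_right_le hε (by rwa [hl₀, hr₀, sub_zero]) hp hβ ?_
    rw [hr₀]
    exact hC.le τ hcell₁.right_mem
  have hs : deriv (![s, u] 0) (m.xr 0) = deriv s τ := congrArg _ hτ
  have hu : deriv (![s, u] 1) (m.xl 1) = deriv u τ := congrArg _ hτ
  rw [Fin.sum_univ_two, Fin.sum_univ_two, hV₀, hV₁, hnode, hs, hu]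
  calc ε * (deriv s τ * (V 0).right - deriv s (m.xl 0) * 0
        + (deriv u (m.xr 1) * 0 - deriv u τ * (V 0).right))
      = ε * ((deriv s τ - deriv u τ) * (V 0).right) := by ring
    _ ≤ ε * |deriv s τ - deriv u τ| * |(V 0).right| := by
        rw [mul_assoc, ← abs_mul]
        exact mul_le_mul_of_nonneg_left (le_abs_self _) hε
    _ ≤ δ * ((16 + 2 / β) * (p * √((V 0).energy ε b))) := by gcongr
    _ = (16 + 2 / β) * (p * δ) * √((V 0).energy ε b) := by ring
    _ ≤ (16 + 2 / β) * (p * δ) * (√((V 0).energy ε b) + √((V 1).energy ε b)) := by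
        gcongr
        exact le_add_of_nonneg_right (Real.sqrt_nonneg _)

end Error

theorem exists_common_analyticBound (hb : AnalyticData b) (hr : AnalyticData r)
    (hf : AnalyticData f) :
    ∃ B G, 0 < G ∧ AnalyticBound B G b ∧ AnalyticBound B G r ∧ AnalyticBound B G f := by
  obtain ⟨hb, C₁, G₁, hC₁, hG₁, h₁⟩ := hb
  obtain ⟨hr, C₂, G₂, hC₂, hG₂, h₂⟩ := hr
  obtain ⟨hf, C₃, G₃, hC₃, hG₃, h₃⟩ := hf
  refine ⟨C₁ + C₂ + C₃, G₁ + G₂ + G₃, by positivity, ?_, ?_, ?_⟩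
  · exact AnalyticBound.mono ⟨hb, h₁⟩ hC₁.le hG₁.le (by linarith) (by linarith)
  · exact AnalyticBound.mono ⟨hr, h₂⟩ hC₂.le hG₂.le (by linarith) (by linarith)
  · exact AnalyticBound.mono ⟨hf, h₃⟩ hC₃.le hG₃.le (by linarith) (by linarith)

theorem exists_normP2_error_le (hb : AnalyticData b) (hr : AnalyticData r) (hf : AnalyticData f)
    (hb₀ : ∀ x ∈ Icc (0 : ℝ) 1, 0 < b x) (hr₀ : ∀ x ∈ Icc (0 : ℝ) 1, 0 ≤ r x) (hγ : 0 < γ)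
    (hbr : ∀ x ∈ Icc (0 : ℝ) 1, γ ≤ r x - deriv b x / 2) :
    ∃ κ C d K : ℝ, 0 < κ ∧ 0 < C ∧ 0 < d ∧ 0 < K ∧ ∀ ε : ℝ, 0 < ε → ε ≤ 1 → ∀ p : ℕ, 1 ≤ p →
      ∀ (N : ℕ) (m : Mesh N), IsSBLmeshCD κ p ε m → ∀ u : ℝ → ℝ, ContDiff ℝ (⊤ : ℕ∞) u →
      SolvesBVP ε 1 b r f u → ∀ (up : Fin N → ℝ → ℝ) (upb : Fin (N + 1) → ℝ)
        (Du Dcu : Fin N → ℝ → ℝ), IsWGsol m ε 1 b r f p up upb Du Dcu → ∀ D : Fin N → ℝ → ℝ,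
        IsWeakDeriv m (p - 1) (fun j t => u t - up j t) (fun i => u (m.pt i) - upb i) D →
        normP2 m ε 1 b (stdPen m ε p) (fun j t => u t - up j t) (fun i => u (m.pt i) - upb i) D
          ≤ K * (p * (C * Real.exp (-d * p))) ^ 2 := by
  obtain ⟨B, G, hG, hb, hr, hf⟩ := exists_common_analyticBound hb hr hf
  obtain ⟨x₀, hx₀, hmin⟩ := isCompact_Icc.exists_isMinOn (nonempty_Icc.2 zero_le_one)
    hb.1.continuous.continuousOn
  have hbβ : ∀ x ∈ Icc (0 : ℝ) 1, b x₀ ≤ b x := fun x hx => hmin hx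
  have hβ := hb₀ x₀ hx₀
  have hcoef := hb.stableCoefficients hG.le hr hβ hbβ hbr
  obtain ⟨κ, C, d, hκ, hκ1, hC, hd, happrox⟩ :=
    exists_cellApprox_boundaryLayerMesh hG hβ hb hr hf hbβ hr₀ fun x hx => by
      linarith [hbr x hx]
  have hM : 0 < 1 / κ := by positivity
  let K := errorConst (B + B * G) (2 + 1 / κ) γ (16 + 2 / b x₀)
  have hK : 0 < K := errorConst_pos (by positivity) _ _ _
  refine ⟨κ, C, d, 2 * K, hκ, hC, hd, mul_pos two_pos hK, ?_⟩
  intro ε hε hε1 p hp N m hmesh u hu ⟨hu0, hu1, hode⟩ up upb Du Dcu hsol D hD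
  have hκpε : 0 ≤ κ * p * ε := by positivity
  have hu₁ : ContDiff ℝ 1 u := contDiff_infty.1 hu 1
  suffices herror : ∃ n : ℕ, n ≤ 2 ∧
      normP2 m ε 1 b (stdPen m ε p) (fun j t => u t - up j t) (fun i => u (m.pt i) - upb i) D
        ≤ n * K * (p * (C * Real.exp (-d * p))) ^ 2 by
    obtain ⟨n, hn, hle⟩ := herror
    have : (n : ℝ) ≤ 2 := by exact_mod_cast hn
    exact hle.trans (by gcongr)
  obtain ⟨hone, htwo⟩ := happrox ε hε hε1 p hp u hu hu0 hu1 fun x hx => by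
    simpa only [convDiffOp, one_mul] using hode x hx
  rcases hmesh with ⟨h, rfl⟩ | ⟨h, rfl, hpt⟩
  · obtain ⟨q, hq⟩ := hone h
    exact ⟨1, one_le_two, hsol.normP2_error_le_of_one_cell hcoef hγ (by linarith) hε.le hp
      hf.1.continuous hu₁ hu0 hu1 (by positivity) (.unit hε1 (by linarith)) hq hD⟩
  · obtain ⟨s, q₁, q₂, hq₁, hq₂, hkink⟩ := htwo h
    exact ⟨2, le_rfl, hsol.normP2_error_le_of_two_cells hcoef hγ (by linarith) hε.le hp
      hf.1.continuous hu₁ hu0 hu1 hpt (by linarith) (.outer hε1 hκpε (by linarith) h)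
      (.layer hε hκ hκ1 hp (by linarith) h) hq₁ hq₂ hkink hD⟩

/-- Half of the exponential rate pays for the polynomial factor `n`. -/
theorem sqrt_le_exp_of_le_mul_sq {K C d x n : ℝ} (hK : 0 ≤ K) (hC : 0 ≤ C) (hd : 0 < d)
    (hn : 0 ≤ n) (h : x ≤ K * (n * (C * Real.exp (-d * n))) ^ 2) :
    √x ≤ √K * C * (2 / d) * Real.exp (-(d / 2) * n) := by
  have hexp : n * Real.exp (-d * n) ≤ 2 / d * Real.exp (-(d / 2) * n) := by
    have hlin : d / 2 * n ≤ Real.exp (d / 2 * n) := by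
      linarith [Real.add_one_le_exp (d / 2 * n)]
    calc n * Real.exp (-d * n) = 2 / d * ((d / 2 * n) * Real.exp (-d * n)) := by
          field_simp
      _ ≤ 2 / d * (Real.exp (d / 2 * n) * Real.exp (-d * n)) := by gcongr
      _ = 2 / d * Real.exp (-(d / 2) * n) := by
          rw [← Real.exp_add]
          ring_nf
  calc √x ≤ √(K * (n * (C * Real.exp (-d * n))) ^ 2) := Real.sqrt_le_sqrt h
    _ = √K * C * (n * Real.exp (-d * n)) := by
        rw [Real.sqrt_mul hK, Real.sqrt_sq (by positivity)]
        ring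
    _ ≤ √K * C * (2 / d * Real.exp (-(d / 2) * n)) := by gcongr
    _ = _ := by ring

end BoundaryLayerMesh

/-- Robust exponential convergence in the convection-diffusion regime
`ε₂ = 1`: on the Spectral Boundary Layer mesh `ω_BL(κ,p)` there holds
`|||u − u_p|||_p ≤ C e^{−σ p}`, uniformly in `ε₁` and `p`. -/
theorem statement11 (bb rr ff : ℝ → ℝ)
    (hb : AnalyticData bb) (hr : AnalyticData rr) (hf : AnalyticData ff)
    (hbpos : ∀ x ∈ Set.Icc (0 : ℝ) 1, 0 < bb x)
    (hrpos : ∀ x ∈ Set.Icc (0 : ℝ) 1, 0 ≤ rr x)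
    (γ : ℝ) (hγ : 0 < γ)
    (hγ' : ∀ x ∈ Set.Icc (0 : ℝ) 1, γ ≤ rr x - deriv bb x / 2) :
    ∃ κ σ C : ℝ, 0 < κ ∧ 0 < σ ∧ 0 < C ∧
      ∀ ε₁ : ℝ, 0 < ε₁ → ε₁ ≤ 1 →
      ∀ p : ℕ, 1 ≤ p →
      ∀ (N : ℕ) (m : Mesh N), IsSBLmeshCD κ p ε₁ m →
      ∀ u : ℝ → ℝ, ContDiff ℝ (⊤ : ℕ∞) u → SolvesBVP ε₁ 1 bb rr ff u →
      ∀ (up0 : Fin N → ℝ → ℝ) (upb : Fin (N + 1) → ℝ) (Dup Dcup : Fin N → ℝ → ℝ),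
        IsWGsol m ε₁ 1 bb rr ff p up0 upb Dup Dcup →
      ∀ D : Fin N → ℝ → ℝ,
        IsWeakDeriv m (p - 1) (fun j t => u t - up0 j t)
          (fun i => u (m.pt i) - upb i) D →
        Real.sqrt (normP2 m ε₁ 1 bb (stdPen m ε₁ p)
            (fun j t => u t - up0 j t) (fun i => u (m.pt i) - upb i) D)
          ≤ C * Real.exp (-σ * p) := by
  obtain ⟨κ, C, d, K, hκ, hC, hd, hK, herror⟩ :=
    exists_normP2_error_le hb hr hf hbpos hrpos hγ hγ'
  refine ⟨κ, d / 2, √K * C * (2 / d), hκ, half_pos hd, by positivity, ?_⟩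
  intro ε₁ hε hε1 p hp N m hmesh u hu hode up0 upb Dup Dcup hsol D hD
  exact sqrt_le_exp_of_le_mul_sq hK.le hC.le hd p.cast_nonneg
    (herror ε₁ hε hε1 p hp N m hmesh u hu hode up0 upb Dup Dcup hsol D hD)
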